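/- Let ξ ∈ (0,1/2) and let E = E_ξ be the perfect symmetric set of constant ratio ξ (the generalized Cantor set with ζ_n = ξ for all n), whose Hausdorff dimension is dim(E_ξ) = log 2 / log(1/ξ). Let ω : (0,π] → (0,∞) be continuous and increasing, with t ↦ ω(t^γ) concave for some γ > 2, t ↦ tω'(t)/ω(t) increasing, and log ω(dist(·,E)) ∈ L¹(𝕋). Then the following are equivalent: (1) f_{ω,E} ∈ 𝒟; (2) f_{ω,E} is a multiplier of 𝒟; (3) ∫_0^1 ω'(t)² t^{1−dim(E_ξ)} dt < ∞. In particular, for ω(t) = t^α with α ∈ (0,1), f_{α,E_ξ} ∈ 𝒟 ⟺ f_{α,E_ξ} is a multiplier of 𝒟 ⟺ α > dim(E_ξ)/2. -/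

import Mathlib

open MeasureTheory Real Set

noncomputable section

/-- The unit circle in `ℂ`. -/
def circleT : Set ℂ := Metric.sphere (0 : ℂ) 1

/-- Arc-length parametrization of the unit circle. -/
def cpt (θ : ℝ) : ℂ := Complex.exp (θ * Complex.I)

/-- Distance from a point to a set. -/
def dE (E : Set ℂ) (ζ : ℂ) : ℝ := Metric.infDist ζ E

/-- Arc-length integral over the whole circle. -/
def circInt (f : ℂ → ℝ) : ℝ := ∫ θ in Set.Ioc 0 (2 * π), f (cpt θ)

/-- Arc-length integral over a subset `Λ` of the circle. -/
def circIntOn (Λ : Set ℂ) (f : ℂ → ℝ) : ℝ :=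
  ∫ θ in {θ ∈ Set.Ioc 0 (2 * π) | cpt θ ∈ Λ}, f (cpt θ)

/-- `E` has arc-length (Lebesgue) measure zero. -/
def MeasureZeroOnCircle (E : Set ℂ) : Prop :=
  volume {θ ∈ Set.Ioc 0 (2 * π) | cpt θ ∈ E} = 0

/-- `E` is a Carleson set: `∫_𝕋 log dist(ζ,E) |dζ| > -∞`. -/
def CarlesonSet (E : Set ℂ) : Prop :=
  IntegrableOn (fun θ => Real.log (dE E (cpt θ))) (Set.Ioc 0 (2 * π)) volume

/-- `I(ζ,E)`: the connected component of `𝕋 \ E` containing `ζ`. -/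
def compArc (E : Set ℂ) (ζ : ℂ) : Set ℂ := connectedComponentIn (circleT \ E) ζ

/-- `Γ(ζ,E)`. -/
def GammaSet (E : Set ℂ) (ζ : ℂ) : Set ℂ :=
  {ζ' ∈ circleT \ compArc E ζ | dE E ζ' ≤ dE E ζ}

/-- `Σ(ζ,E)`. -/
def SigmaSet (E : Set ℂ) (ζ : ℂ) : Set ℂ :=
  {ζ' ∈ circleT \ compArc E ζ | dE E ζ ≤ dE E ζ'}

/-- The Richter–Sundberg integrand for the outer function with boundary modulus
`ω(dist(·,E))`. -/
def RSker (ω : ℝ → ℝ) (E : Set ℂ) (ζ ζ' : ℂ) : ℝ :=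
  ((ω (dE E ζ')) ^ 2 - (ω (dE E ζ)) ^ 2
    - 2 * (ω (dE E ζ)) ^ 2 * Real.log (ω (dE E ζ') / ω (dE E ζ))) / ‖ζ - ζ'‖ ^ 2

/-- Local Dirichlet integral `D_ζ(f_{ω,E})` (Richter–Sundberg formula). -/
def locDir (ω : ℝ → ℝ) (E : Set ℂ) (ζ : ℂ) : ℝ :=
  (1 / (2 * π)) * circInt (fun ζ' => RSker ω E ζ ζ')

/-- Local Dirichlet integral restricted to `Λ`. -/
def locDirOn (ω : ℝ → ℝ) (E : Set ℂ) (Λ : Set ℂ) (ζ : ℂ) : ℝ :=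
  (1 / (2 * π)) * circIntOn Λ (fun ζ' => RSker ω E ζ ζ')

/-- `E` is an `𝓛₁`-set. -/
def L1Set (E : Set ℂ) : Prop :=
  ∃ C > 0, ∀ ζ ∈ circleT \ E,
    circIntOn (GammaSet E ζ)
      (fun ζ' => Real.log (dE E ζ / dE E ζ') / ‖ζ - ζ'‖ ^ 2) ≤ C / dE E ζ

/-- The `𝓛₂` inequality with constant `C`. -/
def L2With (E : Set ℂ) (C : ℝ) : Prop :=
  ∀ ζ ∈ circleT \ E,
    circIntOn (GammaSet E ζ)
      (fun ζ' => (Real.log (dE E ζ / dE E ζ')) ^ 2 / ‖ζ - ζ'‖ ^ 2) ≤ C / dE E ζ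

/-- `E` is an `𝓛₂`-set. -/
def L2Set (E : Set ℂ) : Prop := ∃ C > 0, L2With E C

/-- Supremum of `dist(·,E)` over the arc `cpt '' (a,b]`. -/
def arcSup (E : Set ℂ) (a b : ℝ) : ℝ := sSup ((fun θ => dE E (cpt θ)) '' Set.Ioc a b)

/-- `E` is a `𝒦`-set (Kotochigov). -/
def KSet (E : Set ℂ) : Prop :=
  ∃ c > 0, ∀ a b : ℝ, a < b → b ≤ a + 2 * π → c * (b - a) ≤ arcSup E a b

/-- Integral of a weight over the arc `cpt '' (a,b]` (with respect to arc length). -/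
def arcInt (w : ℂ → ℝ) (a b : ℝ) : ℝ := ∫ θ in Set.Ioc a b, w (cpt θ)

/-- Double logarithmic integral of a weight over an arc. -/
def arcDouble (w : ℂ → ℝ) (a b : ℝ) : ℝ :=
  ∫ θ in Set.Ioc a b, (∫ θ' in Set.Ioc a b,
    Real.log (1 / ‖cpt θ - cpt θ'‖) * w (cpt θ) * w (cpt θ'))

/-- Arc-length measure of `{ζ ∈ I : dist(ζ,E) ≤ t}` for the arc `cpt '' (a,b]`. -/
def sublevelMeas (E : Set ℂ) (a b t : ℝ) : ℝ :=
  (volume {θ ∈ Set.Ioc a b | dE E (cpt θ) ≤ t}).toReal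

/-- Arc-length measure of `E_t = {ζ ∈ 𝕋 : dist(ζ,E) ≤ t}`. -/
def EtMeas (E : Set ℂ) (t : ℝ) : ℝ := sublevelMeas E 0 (2 * π) t

/-- The open unit disc. -/
def unitDisc : Set ℂ := Metric.ball (0 : ℂ) 1

/-- Membership in the (holomorphic) Dirichlet space `𝒟`. -/
def MemDirichlet (f : ℂ → ℂ) : Prop :=
  DifferentiableOn ℂ f unitDisc ∧
  (∃ M : ℝ, ∀ r ∈ Set.Ioo (0 : ℝ) 1,
    (∫ θ in Set.Ioc 0 (2 * π), ‖f ((r : ℂ) * cpt θ)‖ ^ 2) ≤ M) ∧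
  IntegrableOn (fun z => ‖deriv f z‖ ^ 2) unitDisc volume

/-- `f` is a multiplier of the Dirichlet space `𝒟`. -/
def IsMultiplierD (f : ℂ → ℂ) : Prop :=
  ∀ g : ℂ → ℂ, MemDirichlet g → MemDirichlet (fun z => f z * g z)

/-- The outer function `f_{ω,E}` with boundary modulus `ω(dist(·,E))`. -/
def outerFun (ω : ℝ → ℝ) (E : Set ℂ) (z : ℂ) : ℂ :=
  Complex.exp ((((2 * π)⁻¹ : ℝ) : ℂ) * ∫ θ in Set.Ioc 0 (2 * π),
    ((cpt θ + z) / (cpt θ - z)) * ((Real.log (ω (dE E (cpt θ))) : ℝ) : ℂ))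

/-- `log ω(dist(·,E)) ∈ L¹(𝕋)`. -/
def LogOmegaInt (ω : ℝ → ℝ) (E : Set ℂ) : Prop :=
  IntegrableOn (fun θ => Real.log (ω (dE E (cpt θ)))) (Set.Ioc 0 (2 * π)) volume

/-- Standing hypotheses on `ω` (with derivative `ω'`): continuous, positive, increasing on
`(0,π]`, differentiable with derivative `ω'`, `t ↦ ω(t^γ)` concave, and `t ↦ tω'(t)/ω(t)`
increasing. -/
def OmegaHyp (ω ω' : ℝ → ℝ) (γ : ℝ) : Prop :=
  ContinuousOn ω (Set.Ioc 0 π) ∧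
  (∀ t ∈ Set.Ioc (0 : ℝ) π, 0 < ω t) ∧
  MonotoneOn ω (Set.Ioc 0 π) ∧
  (∀ t ∈ Set.Ioo (0 : ℝ) π, HasDerivAt ω (ω' t) t) ∧
  ConcaveOn ℝ (Set.Ioc 0 (π ^ γ⁻¹)) (fun t => ω (t ^ γ)) ∧
  MonotoneOn (fun t => t * ω' t / ω t) (Set.Ioo 0 π)

/-- The generalized Cantor set `E_{(ζ_n)}` (with `ξ k` playing the role of `ζ_{k+1}`). -/
def gCantorSet (ξ : ℕ → ℝ) : Set ℂ :=
  {z | ∃ ε : ℕ → Bool, z = Complex.exp (((2 * π : ℝ) : ℂ) * Complex.I *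
    ((∑' n : ℕ, (if ε n then (1 : ℝ) else 0) * (∏ k ∈ Finset.range n, ξ k) * (1 - ξ n) : ℝ) : ℂ))}

end

namespace CantorDirichlet

/-- The open `s`-neighbourhood of a set of reals. -/
def nhd (C : Set ℝ) (s : ℝ) : Set ℝ := {x | ∃ c ∈ C, |x - c| < s}

/-- The defining properties of the Cantor set of ratio `ξ` that are used below. -/
structure SelfSimilar (ξ : ℝ) (C : Set ℝ) : Prop where
  zero_mem : (0 : ℝ) ∈ C
  one_mem : (1 : ℝ) ∈ C
  subset_Icc : C ⊆ Icc 0 1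
  left_mem : ∀ x ∈ C, ξ * x ∈ C
  right_mem : ∀ x ∈ C, ξ * x + (1 - ξ) ∈ C
  split : ∀ x ∈ C, ∃ y ∈ C, x = ξ * y ∨ x = ξ * y + (1 - ξ)

lemma volume_affine_preimage {ξ : ℝ} (hξ : 0 < ξ) (e : ℝ) (S : Set ℝ) :
    volume {x : ℝ | (x - e) / ξ ∈ S} = ENNReal.ofReal ξ * volume S := by
  have h1 : {x : ℝ | (x - e) / ξ ∈ S} = (fun x => x + (-e)) ⁻¹' ((fun x => ξ⁻¹ * x) ⁻¹' S) := by
    ext x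
    simp only [mem_ofPred_eq, mem_preimage]
    rw [div_eq_inv_mul, sub_eq_add_neg]
  rw [h1, measure_preimage_add_right, Real.volume_preimage_mul_left (inv_ne_zero hξ.ne'), inv_inv,
    abs_of_pos hξ]

lemma nhd_le {C : Set ℝ} (hC : C ⊆ Icc 0 1) {s : ℝ} :
    volume (nhd C s) ≤ ENNReal.ofReal (1 + 2 * s) := by
  have : nhd C s ⊆ Ioo (-s) (1 + s) := by
    rintro x ⟨c, hc, hx⟩
    have := hC hc
    rw [abs_lt] at hx
    constructor <;> linarith [this.1, this.2]
  refine (measure_mono this).trans ?_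
  rw [Real.volume_Ioo]
  exact ENNReal.ofReal_le_ofReal (by linarith)

lemma scale_one {ξ d s : ℝ} (hξ : 0 < ξ) (hd : ξ ^ d = 1 / 2) (hs : 0 < s) :
    2 * ξ * (s / ξ) ^ (1 - d) = s ^ (1 - d) := by
  rw [Real.div_rpow hs.le hξ.le, Real.rpow_sub hξ, Real.rpow_one, hd]
  field_simp

lemma scale_two {ξ d R s : ℝ} (hξ : 0 < ξ) (hR : 0 < R) (hs : 0 < s) :
    ξ * ((R / ξ) ^ d * (s / ξ) ^ (1 - d)) = R ^ d * s ^ (1 - d) := by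
  rw [Real.div_rpow hs.le hξ.le, Real.div_rpow hR.le hξ.le, Real.rpow_sub hξ, Real.rpow_one]
  have : 0 < ξ ^ d := Real.rpow_pos_of_pos hξ _
  field_simp

lemma nhd_split {ξ : ℝ} (hξ : 0 < ξ) {C : Set ℝ} (hC : SelfSimilar ξ C) {s : ℝ} :
    volume (nhd C s) ≤ ENNReal.ofReal (2 * ξ) * volume (nhd C (s / ξ)) := by
  have hsub : nhd C s ⊆ {x : ℝ | (x - 0) / ξ ∈ nhd C (s / ξ)} ∪
      {x : ℝ | (x - (1 - ξ)) / ξ ∈ nhd C (s / ξ)} := by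
    rintro x ⟨c, hc, hx⟩
    obtain ⟨y, hy, h | h⟩ := hC.split c hc
    · left
      refine ⟨y, hy, ?_⟩
      have : (x - 0) / ξ - y = (x - c) / ξ := by rw [h]; field_simp; ring
      rw [this, abs_div, abs_of_pos hξ]
      gcongr
    · right
      refine ⟨y, hy, ?_⟩
      have : (x - (1 - ξ)) / ξ - y = (x - c) / ξ := by rw [h]; field_simp; ring
      rw [this, abs_div, abs_of_pos hξ]
      gcongr
  refine (measure_mono hsub).trans ((measure_union_le _ _).trans ?_)
  rw [volume_affine_preimage hξ, volume_affine_preimage hξ, ← two_mul, ← mul_assoc,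
    ENNReal.ofReal_mul (by norm_num)]
  simp

lemma volume_nhd_le {ξ d : ℝ} (hξ : ξ ∈ Ioo (0 : ℝ) (1 / 2)) (hd : ξ ^ d = 1 / 2)
    (hd1 : d ∈ Ioo (0 : ℝ) 1) {C : Set ℝ} (hC : SelfSimilar ξ C) (n : ℕ) :
    ∀ s : ℝ, ξ ^ n ≤ s → s ≤ 1 →
      volume (nhd C s) ≤ ENNReal.ofReal (3 / ξ * s ^ (1 - d)) := by
  have hξ0 := hξ.1
  have base : ∀ s : ℝ, ξ ≤ s → s ≤ 1 →
      volume (nhd C s) ≤ ENNReal.ofReal (3 / ξ * s ^ (1 - d)) := by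
    intro s h1 h2
    refine (nhd_le hC.subset_Icc).trans (ENNReal.ofReal_le_ofReal ?_)
    have h3 : ξ ≤ s ^ (1 - d) := by
      refine h1.trans ?_
      calc s = s ^ (1 : ℝ) := (Real.rpow_one s).symm
        _ ≤ s ^ (1 - d) :=
          Real.rpow_le_rpow_of_exponent_ge (hξ0.trans_le h1) h2 (by linarith [hd1.1])
    calc 1 + 2 * s ≤ 3 / ξ * ξ := by field_simp; linarith
      _ ≤ _ := by gcongr
  induction n with
  | zero =>
    intro s h1 h2
    exact base s (by simp at h1; linarith [hξ.2]) h2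
  | succ n ih =>
    intro s h1 h2
    rcases le_total ξ s with h | h
    · exact base s h h2
    · have hs : 0 < s := (pow_pos hξ0 _).trans_le h1
      refine (nhd_split hξ0 hC).trans ?_
      refine (mul_le_mul_right (ih (s / ξ) ?_ ?_) _).trans ?_
      · rw [le_div_iff₀ hξ0, ← pow_succ]; exact h1
      · rw [div_le_one hξ0]; exact h
      · rw [← ENNReal.ofReal_mul (by positivity)]
        refine ENNReal.ofReal_le_ofReal (le_of_eq ?_)
        rw [← scale_one hξ0 hd hs]; ring

lemma volume_nhd_le' {ξ d : ℝ} (hξ : ξ ∈ Ioo (0 : ℝ) (1 / 2)) (hd : ξ ^ d = 1 / 2)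
    (hd1 : d ∈ Ioo (0 : ℝ) 1) {C : Set ℝ} (hC : SelfSimilar ξ C) {s : ℝ} (hs : 0 < s)
    (hs1 : s ≤ 1) :
    volume (nhd C s) ≤ ENNReal.ofReal (3 / ξ * s ^ (1 - d)) := by
  obtain ⟨n, hn⟩ := exists_pow_lt_of_lt_one hs (show ξ < 1 by linarith [hξ.2])
  exact volume_nhd_le hξ hd hd1 hC n s hn.le hs1

lemma le_rpow_mul {s R d : ℝ} (hs : 0 < s) (h : s ≤ R) (hd : 0 ≤ d) :
    s ≤ R ^ d * s ^ (1 - d) := by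
  calc s = s ^ d * s ^ (1 - d) := by rw [← Real.rpow_add hs]; simp
    _ ≤ _ := by gcongr

lemma le_rpow_mul' {s R d : ℝ} (hR : 0 < R) (h : R ≤ s) (hd : d ≤ 1) :
    R ≤ R ^ d * s ^ (1 - d) := by
  calc R = R ^ d * R ^ (1 - d) := by rw [← Real.rpow_add hR]; simp
    _ ≤ _ := by gcongr

lemma volume_nhd_ball {ξ d : ℝ} (hξ : ξ ∈ Ioo (0 : ℝ) (1 / 2)) (hd : ξ ^ d = 1 / 2)
    (hd1 : d ∈ Ioo (0 : ℝ) 1) {C : Set ℝ} (hC : SelfSimilar ξ C) (n : ℕ) :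
    ∀ c ∈ C, ∀ R s : ℝ, ξ ^ n ≤ R → 0 < s →
      volume {x | |x - c| < R ∧ x ∈ nhd C s} ≤
        ENNReal.ofReal (6 / (ξ * (1 - 2 * ξ)) * (R ^ d * s ^ (1 - d))) := by
  have hξ0 := hξ.1
  have hg : 0 < 1 - 2 * ξ := by linarith [hξ.2]
  have hK : 6 ≤ 6 / (ξ * (1 - 2 * ξ)) := by
    rw [le_div_iff₀ (by positivity)]
    nlinarith [hξ.2]
  have base : ∀ c ∈ C, ∀ R s : ℝ, 0 < R → (1 - 2 * ξ) / 2 ≤ R ∨ R ≤ s → 0 < s →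
      volume {x | |x - c| < R ∧ x ∈ nhd C s} ≤
        ENNReal.ofReal (6 / (ξ * (1 - 2 * ξ)) * (R ^ d * s ^ (1 - d))) := by
    intro c hc R s hR h hs
    have hpos : 0 ≤ R ^ d * s ^ (1 - d) := by positivity
    rcases le_or_gt R s with h' | h'
    · have h1 : {x | |x - c| < R ∧ x ∈ nhd C s} ⊆ Ioo (c - R) (c + R) := by
        rintro x ⟨hx, -⟩
        rw [abs_lt] at hx
        constructor <;> linarith
      refine (measure_mono h1).trans ?_
      rw [Real.volume_Ioo]
      refine ENNReal.ofReal_le_ofReal ?_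
      have := le_rpow_mul' hR h' hd1.2.le
      nlinarith
    · replace h := h.resolve_right (not_le.2 h')
      refine (measure_mono (fun x hx => hx.2)).trans ?_
      rcases le_or_gt s 1 with h1 | h1
      · refine (volume_nhd_le' hξ hd hd1 hC hs h1).trans (ENNReal.ofReal_le_ofReal ?_)
        have h2 : (1 - 2 * ξ) / 2 ≤ R ^ d := by
          calc (1 - 2 * ξ) / 2 = ((1 - 2 * ξ) / 2) ^ (1 : ℝ) := (Real.rpow_one _).symm
            _ ≤ ((1 - 2 * ξ) / 2) ^ d :=
              Real.rpow_le_rpow_of_exponent_ge (by positivity) (by linarith) hd1.2.le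
            _ ≤ _ := Real.rpow_le_rpow (by positivity) h hd1.1.le
        calc 3 / ξ * s ^ (1 - d)
            = 6 / (ξ * (1 - 2 * ξ)) * ((1 - 2 * ξ) / 2 * s ^ (1 - d)) := by
              generalize 1 - 2 * ξ = g at hg
              field_simp; norm_num
          _ ≤ _ := by gcongr
      · refine (nhd_le hC.subset_Icc).trans (ENNReal.ofReal_le_ofReal ?_)
        have := le_rpow_mul hs h'.le hd1.1.le
        nlinarith
  induction n with
  | zero =>
    intro c hc R s h1 hs
    simp only [pow_zero] at h1
    exact base c hc R s (by linarith) (Or.inl (by linarith)) hs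
  | succ n ih =>
    intro c hc R s h1 hs
    have hR : 0 < R := (pow_pos hξ0 _).trans_le h1
    by_cases h : (1 - 2 * ξ) / 2 ≤ R ∨ R ≤ s
    · exact base c hc R s hR h hs
    push Not at h
    obtain ⟨hRg, hsR⟩ := h
    obtain ⟨y, hy, hcy⟩ := hC.split c hc
    have key : ∃ e : ℝ, c = ξ * y + e ∧ ∀ c₂ ∈ C, |c₂ - c| < 1 - 2 * ξ →
        ∃ y₂ ∈ C, c₂ = ξ * y₂ + e := by
      have hyI := hC.subset_Icc hy
      rcases hcy with h | h
      · refine ⟨0, by linarith, fun c₂ hc₂ hlt => ?_⟩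
        obtain ⟨y₂, hy₂, h₂ | h₂⟩ := hC.split c₂ hc₂
        · exact ⟨y₂, hy₂, by linarith⟩
        · exfalso
          have := hC.subset_Icc hy₂
          rw [abs_lt] at hlt
          nlinarith [this.1, hyI.2]
      · refine ⟨1 - ξ, h, fun c₂ hc₂ hlt => ?_⟩
        obtain ⟨y₂, hy₂, h₂ | h₂⟩ := hC.split c₂ hc₂
        · exfalso
          have := hC.subset_Icc hy₂
          rw [abs_lt] at hlt
          nlinarith [this.2, hyI.1]
        · exact ⟨y₂, hy₂, h₂⟩
    obtain ⟨e, he, hsame⟩ := key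
    have hsub : {x | |x - c| < R ∧ x ∈ nhd C s} ⊆
        {x | (x - e) / ξ ∈ {x | |x - y| < R / ξ ∧ x ∈ nhd C (s / ξ)}} := by
      rintro x ⟨hx, c₂, hc₂, hx₂⟩
      have hlt : |c₂ - c| < 1 - 2 * ξ := by
        calc |c₂ - c| ≤ |c₂ - x| + |x - c| := abs_sub_le _ _ _
          _ < _ := by rw [abs_sub_comm] at hx₂; linarith
      obtain ⟨y₂, hy₂, h₂⟩ := hsame c₂ hc₂ hlt
      refine ⟨?_, y₂, hy₂, ?_⟩
      · have : (x - e) / ξ - y = (x - c) / ξ := by rw [he]; field_simp; ring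
        rw [this, abs_div, abs_of_pos hξ0]
        gcongr
      · have : (x - e) / ξ - y₂ = (x - c₂) / ξ := by rw [h₂]; field_simp; ring
        rw [this, abs_div, abs_of_pos hξ0]
        gcongr
    refine (measure_mono hsub).trans ?_
    rw [volume_affine_preimage hξ0]
    refine (mul_le_mul_right (ih y hy (R / ξ) (s / ξ) ?_ (by positivity)) _).trans ?_
    · rw [le_div_iff₀ hξ0, ← pow_succ]; exact h1
    · rw [← ENNReal.ofReal_mul hξ0.le]
      refine ENNReal.ofReal_le_ofReal (le_of_eq ?_)
      rw [← scale_two (d := d) hξ0 hR hs]; ring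

/-- Local volume estimate for neighbourhoods of the Cantor set. -/
lemma volume_nhd_inter_le {ξ d : ℝ} (hξ : ξ ∈ Ioo (0 : ℝ) (1 / 2)) (hd : ξ ^ d = 1 / 2)
    (hd1 : d ∈ Ioo (0 : ℝ) 1) {C : Set ℝ} (hC : SelfSimilar ξ C) {p R s : ℝ} (hR : 0 < R)
    (hs : 0 < s) :
    volume {x | |x - p| < R ∧ x ∈ nhd C s} ≤
      ENNReal.ofReal (18 / (ξ * (1 - 2 * ξ)) * (R ^ d * s ^ (1 - d))) := by
  have hξ0 := hξ.1
  have hg : 0 < 1 - 2 * ξ := by linarith [hξ.2]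
  have hK : 6 ≤ 18 / (ξ * (1 - 2 * ξ)) := by
    rw [le_div_iff₀ (by positivity)]
    nlinarith [hξ.2]
  rcases le_or_gt R s with h' | h'
  · have h1 : {x | |x - p| < R ∧ x ∈ nhd C s} ⊆ Ioo (p - R) (p + R) := by
      rintro x ⟨hx, -⟩
      rw [abs_lt] at hx
      constructor <;> linarith
    refine (measure_mono h1).trans ?_
    rw [Real.volume_Ioo]
    refine ENNReal.ofReal_le_ofReal ?_
    have := le_rpow_mul' hR h' hd1.2.le
    have hpos : 0 ≤ R ^ d * s ^ (1 - d) := by positivity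
    nlinarith
  · rcases Set.eq_empty_or_nonempty {x | |x - p| < R ∧ x ∈ nhd C s} with h | ⟨x₀, hx₀, c, hc, hxc⟩
    · rw [h]; simp
    · have h1 : {x | |x - p| < R ∧ x ∈ nhd C s} ⊆ {x | |x - c| < 3 * R ∧ x ∈ nhd C s} := by
        rintro x ⟨hx, hx'⟩
        refine ⟨?_, hx'⟩
        rw [abs_lt] at *
        constructor <;> linarith
      obtain ⟨n, hn⟩ := exists_pow_lt_of_lt_one (show 0 < 3 * R by positivity)
        (show ξ < 1 by linarith [hξ.2])
      refine (measure_mono h1).trans ((volume_nhd_ball hξ hd hd1 hC n c hc _ _ hn.le hs).trans ?_)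
      refine ENNReal.ofReal_le_ofReal ?_
      rw [Real.mul_rpow (by norm_num) hR.le]
      have : (3 : ℝ) ^ d ≤ 3 := by
        calc (3 : ℝ) ^ d ≤ 3 ^ (1 : ℝ) :=
              Real.rpow_le_rpow_of_exponent_le (by norm_num) hd1.2.le
          _ = 3 := Real.rpow_one _
      calc 6 / (ξ * (1 - 2 * ξ)) * (3 ^ d * R ^ d * s ^ (1 - d))
          ≤ 6 / (ξ * (1 - 2 * ξ)) * (3 * R ^ d * s ^ (1 - d)) := by gcongr
        _ = _ := by ring

/-- `(a, a + L)` is a gap of `C`. -/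
def IsGap (C : Set ℝ) (a L : ℝ) : Prop :=
  a ∈ C ∧ a + L ∈ C ∧ ∀ x ∈ C, x ≤ a ∨ a + L ≤ x

lemma isGap_zero {ξ : ℝ} (hξ : ξ ∈ Ioo (0 : ℝ) (1 / 2)) {C : Set ℝ} (hC : SelfSimilar ξ C) :
    IsGap C ξ (1 - 2 * ξ) := by
  refine ⟨by simpa using hC.left_mem 1 hC.one_mem, ?_, fun x hx => ?_⟩
  · have := hC.right_mem 0 hC.zero_mem
    simp only [mul_zero, zero_add] at this
    convert this using 1; ring
  · obtain ⟨y, hy, h | h⟩ := hC.split x hx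
    · left; nlinarith [(hC.subset_Icc hy).2, hξ.1]
    · right; nlinarith [(hC.subset_Icc hy).1, hξ.1]

lemma IsGap.left {ξ : ℝ} (hξ : ξ ∈ Ioo (0 : ℝ) (1 / 2)) {C : Set ℝ} (hC : SelfSimilar ξ C)
    {a L : ℝ} (h : IsGap C a L) : IsGap C (ξ * a) (ξ * L) := by
  refine ⟨hC.left_mem _ h.1, by rw [← mul_add]; exact hC.left_mem _ h.2.1, fun x hx => ?_⟩
  obtain ⟨y, hy, h' | h'⟩ := hC.split x hx
  · rcases h.2.2 y hy with h2 | h2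
    · left; nlinarith [hξ.1]
    · right; nlinarith [hξ.1]
  · right; nlinarith [(hC.subset_Icc hy).1, hξ.1, hξ.2, (hC.subset_Icc h.2.1).2]

lemma IsGap.right {ξ : ℝ} (hξ : ξ ∈ Ioo (0 : ℝ) (1 / 2)) {C : Set ℝ} (hC : SelfSimilar ξ C)
    {a L : ℝ} (h : IsGap C a L) : IsGap C (ξ * a + (1 - ξ)) (ξ * L) := by
  refine ⟨hC.right_mem _ h.1, ?_, fun x hx => ?_⟩
  · have := hC.right_mem _ h.2.1
    convert this using 1; ring
  obtain ⟨y, hy, h' | h'⟩ := hC.split x hx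
  · left; nlinarith [(hC.subset_Icc hy).2, hξ.1, hξ.2, (hC.subset_Icc h.1).1]
  · rcases h.2.2 y hy with h2 | h2
    · left; nlinarith [hξ.1]
    · right; nlinarith [hξ.1]

lemma setLIntegral_affine {ξ : ℝ} (hξ : 0 < ξ) (e a b : ℝ) (h : ℝ → ENNReal) :
    ∫⁻ x in Ioo a b, ENNReal.ofReal ξ * h (ξ * x + e) =
      ∫⁻ x in Ioo (ξ * a + e) (ξ * b + e), h x := by
  have himg : (fun x => ξ * x + e) '' Ioo a b = Ioo (ξ * a + e) (ξ * b + e) := by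
    have := Set.image_affine_Ioo hξ e (c := a) (d := b)
    exact this
  rw [← himg, lintegral_image_eq_lintegral_abs_deriv_mul measurableSet_Ioo
    (f' := fun _ => ξ) (f := fun x => ξ * x + e)]
  · simp [abs_of_pos hξ]
  · intro x _
    simpa using ((hasDerivAt_id x).const_mul ξ |>.add_const e).hasDerivWithinAt
  · intro x _ y _ hxy
    simpa [hξ.ne'] using hxy

/-- Lower bound for an integral over `[0,1]` by the contributions of the gaps. -/
lemma sum_gaps_le {ξ : ℝ} (hξ : ξ ∈ Ioo (0 : ℝ) (1 / 2)) {C : Set ℝ} (hC : SelfSimilar ξ C)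
    (N : ℕ) : ∀ (h : ℝ → ENNReal) (m : ℕ → ENNReal),
      (∀ n < N, ∀ a, IsGap C a (ξ ^ n * (1 - 2 * ξ)) →
        m n ≤ ∫⁻ x in Ioo a (a + ξ ^ n * (1 - 2 * ξ)), h x) →
      ∑ n ∈ Finset.range N, 2 ^ n * m n ≤ ∫⁻ x in Ioo (0 : ℝ) 1, h x := by
  have hξ0 := hξ.1
  have hξ2 := hξ.2
  induction N with
  | zero => intro h m _; simp
  | succ N ih =>
    intro h m hm
    have h0 := hm 0 (Nat.succ_pos _) ξ (by simpa using isGap_zero hξ hC)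
    have hl := ih (fun x => ENNReal.ofReal ξ * h (ξ * x + 0)) (fun n => m (n + 1)) (by
      intro n hn a ha
      rw [setLIntegral_affine hξ0]
      have := hm (n + 1) (by omega) (ξ * a) (by
        have := ha.left hξ hC
        rwa [← mul_assoc, ← pow_succ'] at this)
      have e1 : ξ * (a + ξ ^ n * (1 - 2 * ξ)) + 0 = ξ * a + ξ ^ (n + 1) * (1 - 2 * ξ) := by ring
      rwa [e1, add_zero])
    have hr := ih (fun x => ENNReal.ofReal ξ * h (ξ * x + (1 - ξ))) (fun n => m (n + 1)) (by
      intro n hn a ha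
      rw [setLIntegral_affine hξ0]
      have := hm (n + 1) (by omega) (ξ * a + (1 - ξ)) (by
        have := ha.right hξ hC
        rwa [← mul_assoc, ← pow_succ'] at this)
      have e1 : ξ * (a + ξ ^ n * (1 - 2 * ξ)) + (1 - ξ) =
          ξ * a + (1 - ξ) + ξ ^ (n + 1) * (1 - 2 * ξ) := by ring
      rwa [e1])
    rw [setLIntegral_affine hξ0] at hl hr
    have hd1 : Disjoint (Ioo (ξ * 0 + 0) (ξ * 1 + 0)) (Ioo ξ (ξ + ξ ^ 0 * (1 - 2 * ξ))) := by
      rw [Set.disjoint_left]; intro x h1 h2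
      simp only [mem_Ioo] at *; linarith
    have hd2 : Disjoint (Ioo (ξ * 0 + 0) (ξ * 1 + 0) ∪ Ioo ξ (ξ + ξ ^ 0 * (1 - 2 * ξ)))
        (Ioo (ξ * 0 + (1 - ξ)) (ξ * 1 + (1 - ξ))) := by
      rw [Set.disjoint_left]; intro x h1 h2
      simp only [mem_union, mem_Ioo, pow_zero] at *
      rcases h1 with h1 | h1 <;> linarith
    have hsub : (Ioo (ξ * 0 + 0) (ξ * 1 + 0) ∪ Ioo ξ (ξ + ξ ^ 0 * (1 - 2 * ξ))) ∪
        (Ioo (ξ * 0 + (1 - ξ)) (ξ * 1 + (1 - ξ))) ⊆ Ioo (0 : ℝ) 1 := by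
      intro x h1
      simp only [mem_union, mem_Ioo, pow_zero] at *
      rcases h1 with (h1 | h1) | h1 <;> constructor <;> linarith
    refine le_trans ?_ (lintegral_mono_set hsub)
    rw [lintegral_union measurableSet_Ioo hd2, lintegral_union measurableSet_Ioo hd1,
      Finset.sum_range_succ']
    have : ∑ k ∈ Finset.range N, 2 ^ (k + 1) * m (k + 1) =
        (∑ k ∈ Finset.range N, 2 ^ k * m (k + 1)) + ∑ k ∈ Finset.range N, 2 ^ k * m (k + 1) := by
      rw [← two_mul, Finset.mul_sum]
      refine Finset.sum_congr rfl fun k _ => by rw [pow_succ]; ring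
    rw [this, pow_zero, one_mul]
    calc _ ≤ (∫⁻ x in Ioo (ξ * 0 + 0) (ξ * 1 + 0), h x) +
          (∫⁻ x in Ioo (ξ * 0 + (1 - ξ)) (ξ * 1 + (1 - ξ)), h x) +
            ∫⁻ x in Ioo ξ (ξ + ξ ^ 0 * (1 - 2 * ξ)), h x := by gcongr
      _ = _ := by ring

/-- The middle-interval Cantor set of ratio `ξ` in `[0,1]`. -/
def cantorR (ξ : ℝ) : Set ℝ :=
  {x | ∃ ε : ℕ → Bool, x = ∑' n : ℕ, (if ε n then (1 : ℝ) else 0) * ξ ^ n * (1 - ξ)}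

lemma gCantorSet_eq (ξ : ℝ) :
    gCantorSet (fun _ => ξ) = (fun x : ℝ => cpt (2 * π * x)) '' cantorR ξ := by
  ext z
  simp only [gCantorSet, cantorR, Finset.prod_const, Finset.card_range]
  constructor
  · rintro ⟨ε, h⟩
    refine ⟨_, ⟨ε, rfl⟩, ?_⟩
    rw [h]
    simp only [cpt]
    congr 1
    push_cast
    ring
  · rintro ⟨x, ⟨ε, rfl⟩, rfl⟩
    refine ⟨ε, ?_⟩
    simp only [cpt]
    congr 1
    push_cast
    ring

lemma summable_digits {ξ : ℝ} (hξ : ξ ∈ Ioo (0 : ℝ) (1 / 2)) (ε : ℕ → Bool) :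
    Summable fun n : ℕ => (if ε n then (1 : ℝ) else 0) * ξ ^ n * (1 - ξ) := by
  have hs : Summable fun n : ℕ => ξ ^ n * (1 - ξ) :=
    (summable_geometric_of_lt_one hξ.1.le (by linarith [hξ.2])).mul_right _
  refine Summable.of_nonneg_of_le (fun n => ?_) (fun n => ?_) hs
  · have : 0 ≤ 1 - ξ := by linarith [hξ.2]
    have := hξ.1
    split_ifs <;> positivity
  · have h1 : 0 ≤ 1 - ξ := by linarith [hξ.2]
    have := hξ.1
    split_ifs
    · simp
    · simp only [zero_mul]; positivity

lemma tsum_geom {ξ : ℝ} (hξ : ξ ∈ Ioo (0 : ℝ) (1 / 2)) : ∑' n : ℕ, ξ ^ n * (1 - ξ) = 1 := by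
  rw [tsum_mul_right, tsum_geometric_of_lt_one hξ.1.le (by linarith [hξ.2])]
  have : 1 - ξ ≠ 0 := by linarith [hξ.2]
  field_simp

lemma tsum_digits {ξ : ℝ} (hξ : ξ ∈ Ioo (0 : ℝ) (1 / 2)) (ε : ℕ → Bool) :
    ∑' n : ℕ, (if ε n then (1 : ℝ) else 0) * ξ ^ n * (1 - ξ) =
      ξ * (∑' n : ℕ, (if ε (n + 1) then (1 : ℝ) else 0) * ξ ^ n * (1 - ξ)) +
        (if ε 0 then (1 : ℝ) else 0) * (1 - ξ) := by
  rw [(summable_digits hξ ε).tsum_eq_zero_add, ← tsum_mul_left, add_comm]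
  congr 1
  · refine tsum_congr fun n => ?_
    rw [pow_succ]; ring
  · simp

lemma cantorR_selfSimilar {ξ : ℝ} (hξ : ξ ∈ Ioo (0 : ℝ) (1 / 2)) :
    SelfSimilar ξ (cantorR ξ) where
  zero_mem := ⟨fun _ => false, by simp⟩
  one_mem := ⟨fun _ => true, by simpa using (tsum_geom hξ).symm⟩
  subset_Icc := by
    rintro x ⟨ε, rfl⟩
    have h1 : 0 ≤ 1 - ξ := by linarith [hξ.2]
    have h0 := hξ.1
    constructor
    · refine tsum_nonneg fun n => ?_
      split_ifs <;> positivity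
    · refine le_trans ?_ (tsum_geom hξ).le
      refine (summable_digits hξ ε).tsum_le_tsum (fun n => ?_)
        ((summable_geometric_of_lt_one hξ.1.le (by linarith [hξ.2])).mul_right _)
      split_ifs
      · simp
      · simp only [zero_mul]; positivity
  left_mem := by
    rintro x ⟨ε, rfl⟩
    refine ⟨fun n => Nat.casesOn n false ε, ?_⟩
    rw [tsum_digits hξ (fun n => Nat.casesOn n false ε)]
    simp
  right_mem := by
    rintro x ⟨ε, rfl⟩
    refine ⟨fun n => Nat.casesOn n true ε, ?_⟩
    rw [tsum_digits hξ (fun n => Nat.casesOn n true ε)]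
    simp
  split := by
    rintro x ⟨ε, rfl⟩
    refine ⟨_, ⟨fun n => ε (n + 1), rfl⟩, ?_⟩
    rw [tsum_digits hξ]
    cases ε 0 <;> simp

lemma norm_cpt (θ : ℝ) : ‖cpt θ‖ = 1 := by
  rw [cpt, Complex.norm_exp_ofReal_mul_I]

lemma continuous_cpt : Continuous cpt := by
  unfold cpt; fun_prop

lemma cpt_periodic (θ : ℝ) : cpt (θ + 2 * π) = cpt θ := by
  unfold cpt
  push_cast
  rw [add_mul, Complex.exp_periodic]

lemma norm_cpt_sub (θ θ' : ℝ) : ‖cpt θ - cpt θ'‖ = 2 * |Real.sin ((θ - θ') / 2)| := by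
  have h : cpt θ - cpt θ' = cpt θ' * (Complex.exp (Complex.I * ((θ - θ' : ℝ) : ℂ)) - 1) := by
    unfold cpt
    rw [mul_sub, mul_one, ← Complex.exp_add]
    congr 2
    push_cast; ring
  rw [h, norm_mul, norm_cpt, one_mul, Complex.norm_exp_I_mul_ofReal_sub_one]
  simp

lemma norm_cpt_sub_le (θ θ' : ℝ) : ‖cpt θ - cpt θ'‖ ≤ |θ - θ'| := by
  rw [norm_cpt_sub]
  have := Real.abs_sin_le_abs (x := (θ - θ') / 2)
  rw [abs_div, abs_two] at this
  linarith

lemma le_norm_cpt_sub {θ θ' : ℝ} (h : |θ - θ'| ≤ π) : 2 / π * |θ - θ'| ≤ ‖cpt θ - cpt θ'‖ := by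
  rw [norm_cpt_sub]
  have := Real.mul_abs_le_abs_sin (x := (θ - θ') / 2) (by rw [abs_div, abs_two]; linarith)
  rw [abs_div, abs_two] at this
  linarith

lemma exists_int_norm_cpt_sub (θ θ' : ℝ) :
    ∃ k : ℤ, 2 / π * |θ - θ' - 2 * π * k| ≤ ‖cpt θ - cpt θ'‖ := by
  refine ⟨round ((θ - θ') / (2 * π)), ?_⟩
  set k := round ((θ - θ') / (2 * π)) with hk
  have h1 := abs_sub_round ((θ - θ') / (2 * π))
  rw [← hk] at h1
  have h2 : |θ - θ' - 2 * π * k| ≤ π := by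
    have : θ - θ' - 2 * π * k = 2 * π * ((θ - θ') / (2 * π) - k) := by
      field_simp
    rw [this, abs_mul, abs_of_pos (by positivity : 0 < 2 * π)]
    nlinarith [Real.pi_pos]
  have h3 : cpt θ = cpt (θ - 2 * π * k) := by
    unfold cpt
    rw [Complex.exp_eq_exp_iff_exists_int]
    exact ⟨k, by push_cast; ring⟩
  have h4 : θ - θ' - 2 * π * k = (θ - 2 * π * k) - θ' := by ring
  rw [h3, h4]
  exact le_norm_cpt_sub (by rw [← h4]; exact h2)

/-- The properties of the boundary distance function `θ ↦ dist(e^{iθ}, E)` used for upper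
bounds. -/
structure DistReg (δ : ℝ → ℝ) (d K : ℝ) : Prop where
  d_pos : 0 < d
  d_lt : d < 1
  K_pos : 0 < K
  nonneg : ∀ θ, 0 ≤ δ θ
  le_two : ∀ θ, δ θ ≤ 2
  lip : ∀ θ θ', δ θ ≤ δ θ' + |θ - θ'|
  periodic : ∀ θ, δ (θ + 2 * π) = δ θ
  vol : ∀ p R s, 0 < R → R ≤ 2 * π → 0 < s →
    volume {θ | |θ - p| < R ∧ δ θ < s} ≤ ENNReal.ofReal (K * (R ^ d * s ^ (1 - d)))

lemma DistReg.continuous {δ : ℝ → ℝ} {d K : ℝ} (h : DistReg δ d K) : Continuous δ := by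
  have : LipschitzWith 1 δ := LipschitzWith.of_le_add fun x y => by
    rw [Real.dist_eq]; exact h.lip x y
  exact this.continuous

/-- The dimension of the Cantor set. -/
lemma dim_facts {ξ : ℝ} (hξ : ξ ∈ Ioo (0 : ℝ) (1 / 2)) :
    ξ ^ (Real.log 2 / Real.log ξ⁻¹) = 1 / 2 ∧ Real.log 2 / Real.log ξ⁻¹ ∈ Ioo (0 : ℝ) 1 := by
  have h0 := hξ.1
  have hlog : Real.log 2 < Real.log ξ⁻¹ := by
    apply Real.log_lt_log (by norm_num)
    rw [lt_inv_comm₀ (by norm_num) h0]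
    linarith [hξ.2]
  have h2 : 0 < Real.log 2 := Real.log_pos (by norm_num)
  refine ⟨?_, div_pos h2 (h2.trans hlog), (div_lt_one (h2.trans hlog)).2 hlog⟩
  rw [Real.rpow_def_of_pos h0]
  have : Real.log ξ * (Real.log 2 / Real.log ξ⁻¹) = Real.log (1 / 2) := by
    have h3 : Real.log ξ ≠ 0 := by
      rw [Real.log_inv] at hlog; linarith
    rw [Real.log_inv, one_div, Real.log_inv]
    field_simp
  rw [this, Real.exp_log (by norm_num)]

lemma distReg_cantor {ξ d : ℝ} (hξ : ξ ∈ Ioo (0 : ℝ) (1 / 2)) (hd : ξ ^ d = 1 / 2)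
    (hd1 : d ∈ Ioo (0 : ℝ) 1) :
    DistReg (fun θ => dE (gCantorSet fun _ => ξ) (cpt θ)) d
      (324 * π / (ξ * (1 - 2 * ξ))) := by
  have hC := cantorR_selfSimilar hξ
  have hξ0 := hξ.1
  have hg : 0 < 1 - 2 * ξ := by linarith [hξ.2]
  have hpi := Real.pi_pos
  set E := gCantorSet fun _ => ξ with hE
  have hmem : ∀ x ∈ cantorR ξ, cpt (2 * π * x) ∈ E := fun x hx => by
    rw [hE, gCantorSet_eq]; exact ⟨x, hx, rfl⟩
  have hne : E.Nonempty := ⟨_, hmem 0 hC.zero_mem⟩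
  have hK : 2 ≤ 324 * π / (ξ * (1 - 2 * ξ)) := by
    rw [le_div_iff₀ (by positivity)]
    nlinarith [hξ.2, Real.pi_gt_three]
  refine ⟨hd1.1, hd1.2, by positivity, fun θ => Metric.infDist_nonneg, fun θ => ?_,
    fun θ θ' => ?_, fun θ => by simp only [cpt_periodic], ?_⟩
  · refine (Metric.infDist_le_dist_of_mem (hmem 0 hC.zero_mem)).trans ?_
    rw [dist_eq_norm]
    refine (norm_sub_le _ _).trans ?_
    rw [norm_cpt, norm_cpt]; norm_num
  · refine (Metric.infDist_le_infDist_add_dist (y := cpt θ')).trans ?_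
    gcongr
    · exact le_rfl
    · rw [dist_eq_norm]; exact norm_cpt_sub_le _ _
  · intro p R s hR hR2 hs
    rcases le_or_gt R s with h' | h'
    · have h1 : {θ | |θ - p| < R ∧ dE E (cpt θ) < s} ⊆ Ioo (p - R) (p + R) := by
        rintro x ⟨hx, -⟩
        rw [abs_lt] at hx
        constructor <;> linarith
      refine (measure_mono h1).trans ?_
      rw [Real.volume_Ioo]
      refine ENNReal.ofReal_le_ofReal ?_
      have := le_rpow_mul' hR h' hd1.2.le
      have hpos : 0 ≤ R ^ d * s ^ (1 - d) := by positivity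
      nlinarith
    set q := p / (2 * π) with hq
    have hsub : {θ | |θ - p| < R ∧ dE E (cpt θ) < s} ⊆
        ⋃ k ∈ Finset.Icc (⌊q⌋ - 4) (⌊q⌋ + 4), {θ : ℝ | (θ - 2 * π * (k : ℤ)) / (2 * π) ∈
          {x | |x - (q - k)| < R / (2 * π) ∧ x ∈ nhd (cantorR ξ) (s / 4)}} := by
      rintro θ ⟨hθ, hlt⟩
      rw [dE, Metric.infDist_lt_iff hne] at hlt
      obtain ⟨z, hz, hlt⟩ := hlt
      rw [hE, gCantorSet_eq] at hz
      obtain ⟨c, hc, rfl⟩ := hz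
      obtain ⟨k, hk⟩ := exists_int_norm_cpt_sub θ (2 * π * c)
      rw [dist_eq_norm] at hlt
      have h1 : |(θ - 2 * π * k) / (2 * π) - c| < s / 4 := by
        have e : (θ - 2 * π * k) / (2 * π) - c = (θ - 2 * π * c - 2 * π * k) / (2 * π) := by
          field_simp; ring
        rw [e, abs_div, abs_of_pos (by positivity : 0 < 2 * π)]
        have := hk.trans_lt hlt
        rw [div_mul_eq_mul_div, div_lt_iff₀ hpi] at this
        rw [div_lt_iff₀ (by positivity)]
        linarith
      have h2 : |(θ - 2 * π * k) / (2 * π) - (q - k)| < R / (2 * π) := by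
        have e : (θ - 2 * π * k) / (2 * π) - (q - k) = (θ - p) / (2 * π) := by
          rw [hq]; field_simp; ring
        rw [e, abs_div, abs_of_pos (by positivity : 0 < 2 * π)]
        gcongr
      have h3 : R / (2 * π) ≤ 1 := by rw [div_le_one (by positivity)]; exact hR2
      have h4 : s / 4 < 2 := by linarith [Real.pi_lt_d2]
      have hcI := hC.subset_Icc hc
      rw [mem_iUnion₂]
      refine ⟨k, ?_, h2, c, hc, h1⟩
      have hfl := Int.floor_le q
      have hfl' := Int.lt_floor_add_one q
      rw [abs_lt] at h1 h2
      rw [Finset.mem_Icc]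
      constructor
      · have : ((⌊q⌋ : ℤ) : ℝ) - 4 ≤ k := by linarith [hcI.2]
        exact_mod_cast this
      · have : (k : ℝ) < (⌊q⌋ : ℤ) + 5 := by linarith [hcI.1]
        have : k < ⌊q⌋ + 5 := by exact_mod_cast this
        omega
    refine (measure_mono hsub).trans ((measure_biUnion_finset_le _ _).trans ?_)
    have hb : ∀ k ∈ Finset.Icc (⌊q⌋ - 4) (⌊q⌋ + 4),
        volume {θ : ℝ | (θ - 2 * π * (k : ℤ)) / (2 * π) ∈
          {x | |x - (q - k)| < R / (2 * π) ∧ x ∈ nhd (cantorR ξ) (s / 4)}} ≤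
        ENNReal.ofReal (2 * π * (18 / (ξ * (1 - 2 * ξ)) * (R ^ d * s ^ (1 - d)))) := by
      intro k _
      rw [volume_affine_preimage (by positivity)]
      refine (mul_le_mul_right (volume_nhd_inter_le hξ hd hd1 hC (by positivity)
        (by positivity)) _).trans ?_
      rw [← ENNReal.ofReal_mul (by positivity)]
      refine ENNReal.ofReal_le_ofReal ?_
      have h1 : R / (2 * π) ≤ R := div_le_self hR.le (by linarith [Real.pi_gt_three])
      have h2 : s / 4 ≤ s := by linarith
      have h3 := hd1.1.le
      have h4 : 0 ≤ 1 - d := by linarith [hd1.2]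
      gcongr
    refine (Finset.sum_le_card_nsmul _ _ _ hb).trans (le_of_eq ?_)
    rw [Int.card_Icc, nsmul_eq_mul]
    have : (⌊q⌋ + 4 + 1 - (⌊q⌋ - 4)).toNat = 9 := by
      have : ⌊q⌋ + 4 + 1 - (⌊q⌋ - 4) = 9 := by ring
      rw [this]; rfl
    rw [this, ← ENNReal.ofReal_natCast, ← ENNReal.ofReal_mul (by positivity)]
    congr 1
    push_cast
    ring

/-- The distance to `E` inside a gap. -/
lemma dE_gap {ξ a L u : ℝ} (hξ : ξ ∈ Ioo (0 : ℝ) (1 / 2)) (h : IsGap (cantorR ξ) a L)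
    (hu : 0 ≤ u) (huL : u ≤ π * L) :
    dE (gCantorSet fun _ => ξ) (cpt (2 * π * a + u)) = 2 * Real.sin (u / 2) := by
  have hC := cantorR_selfSimilar hξ
  have hpi := Real.pi_pos
  have ha := hC.subset_Icc h.1
  have hL := hC.subset_Icc h.2.1
  have hL1 : L ≤ 1 := by linarith [hL.2, ha.1]
  have huπ : u ≤ π := huL.trans (by nlinarith)
  have haL : π * a + π * L ≤ π := by nlinarith [hL.2]
  have ha0 : 0 ≤ π * a := mul_nonneg hpi.le ha.1
  have key : ∀ w, u / 2 ≤ w → w ≤ π - u / 2 → Real.sin (u / 2) ≤ Real.sin w := by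
    intro w h1 h2
    rcases le_total w (π / 2) with h3 | h3
    · exact Real.sin_le_sin_of_le_of_le_pi_div_two (by linarith) h3 h1
    · rw [← Real.sin_pi_sub w]
      exact Real.sin_le_sin_of_le_of_le_pi_div_two (by linarith) (by linarith) (by linarith)
  have hmem : cpt (2 * π * a) ∈ gCantorSet fun _ => ξ := by
    rw [gCantorSet_eq]; exact ⟨a, h.1, rfl⟩
  have hsin : 0 ≤ Real.sin (u / 2) :=
    Real.sin_nonneg_of_nonneg_of_le_pi (by linarith) (by linarith)
  apply le_antisymm
  · refine (Metric.infDist_le_dist_of_mem hmem).trans ?_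
    rw [dist_eq_norm, norm_cpt_sub, add_sub_cancel_left, abs_of_nonneg hsin]
  · refine (Metric.le_infDist ⟨_, hmem⟩).2 ?_
    intro z hz
    rw [gCantorSet_eq] at hz
    obtain ⟨c, hc, rfl⟩ := hz
    rw [dist_eq_norm, norm_cpt_sub]
    have hcI := hC.subset_Icc hc
    have hc0 : 0 ≤ π * c := mul_nonneg hpi.le hcI.1
    have hc1 : π * c ≤ π := by nlinarith [hcI.2]
    have e : (2 * π * a + u - 2 * π * c) / 2 = π * a + u / 2 - π * c := by ring
    rw [e]
    rcases h.2.2 c hc with h1 | h1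
    · have : π * c ≤ π * a := by gcongr
      have := key (π * a + u / 2 - π * c) (by linarith) (by linarith)
      linarith [le_abs_self (Real.sin (π * a + u / 2 - π * c))]
    · have : π * a + π * L ≤ π * c := by rw [← mul_add]; gcongr
      have := key (-(π * a + u / 2 - π * c)) (by linarith) (by linarith)
      rw [Real.sin_neg] at this
      linarith [neg_abs_le (Real.sin (π * a + u / 2 - π * c))]

/-- The properties of a weight used in the proof: positivity, monotonicity, concavity and
monotone logarithmic slope. -/
structure RegW (ω : ℝ → ℝ) : Prop where
  pos : ∀ t ∈ Ioo 0 π, 0 < ω t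
  diff : ∀ t ∈ Ioo 0 π, HasDerivAt ω (deriv ω t) t
  nonneg : ∀ t ∈ Ioo 0 π, 0 ≤ deriv ω t
  anti : AntitoneOn (deriv ω) (Ioo 0 π)
  slope : MonotoneOn (fun t => t * deriv ω t / ω t) (Ioo 0 π)

lemma deriv_eq_of_omegaHyp {ω ω' : ℝ → ℝ} {γ : ℝ} (h : OmegaHyp ω ω' γ) {t : ℝ}
    (ht : t ∈ Ioo 0 π) : deriv ω t = ω' t :=
  (h.2.2.2.1 t ht).deriv

lemma regW_of_omegaHyp {ω ω' : ℝ → ℝ} {γ : ℝ} (hγ : 2 < γ) (h : OmegaHyp ω ω' γ) : RegW ω := by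
  have hd : ∀ t ∈ Ioo 0 π, HasDerivAt ω (deriv ω t) t := fun t ht => by
    rw [deriv_eq_of_omegaHyp h ht]; exact h.2.2.2.1 t ht
  have hn : ∀ t ∈ Ioo 0 π, 0 ≤ deriv ω t := by
    intro t ht
    have hmono : MonotoneOn ω (Ioo 0 π) := h.2.2.1.mono Ioo_subset_Ioc_self
    rw [← derivWithin_of_isOpen isOpen_Ioo ht]
    exact hmono.derivWithin_nonneg
  refine ⟨fun t ht => h.2.1 t (Ioo_subset_Ioc_self ht), hd, hn, ?_, ?_⟩
  · intro s hs t ht hst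
    rcases hst.eq_or_lt with rfl | hst
    · exact le_rfl
    have hγ0 : 0 < γ := by linarith
    have hc := h.2.2.2.2.1
    set p := s ^ γ⁻¹ with hp
    set q := t ^ γ⁻¹ with hq
    have hp0 : 0 < p := rpow_pos_of_pos hs.1 _
    have hq0 : 0 < q := rpow_pos_of_pos ht.1 _
    have hpγ : p ^ γ = s := by rw [hp, rpow_inv_rpow hs.1.le hγ0.ne']
    have hqγ : q ^ γ = t := by rw [hq, rpow_inv_rpow ht.1.le hγ0.ne']
    have hpq : p < q := rpow_lt_rpow hs.1.le hst (by positivity)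
    have hpm : p ∈ Ioc 0 (π ^ γ⁻¹) := ⟨hp0, rpow_le_rpow hs.1.le hs.2.le (by positivity)⟩
    have hqm : q ∈ Ioc 0 (π ^ γ⁻¹) := ⟨hq0, rpow_le_rpow ht.1.le ht.2.le (by positivity)⟩
    have key : ∀ r, 0 < r → r ^ γ ∈ Ioo 0 π →
        HasDerivAt (fun t => ω (t ^ γ)) (deriv ω (r ^ γ) * (γ * r ^ (γ - 1))) r := by
      intro r hr hrm
      exact (hd _ hrm).comp r (Real.hasDerivAt_rpow_const (Or.inl hr.ne'))
    have h1 := hc.le_slope_of_hasDerivAt hpm hqm hpq (key q hq0 (by rwa [hqγ]))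
    have h2 := hc.slope_le_of_hasDerivAt hpm hqm hpq (key p hp0 (by rwa [hpγ]))
    have h3 := h1.trans h2
    rw [hpγ, hqγ] at h3
    have h4 : p ^ (γ - 1) ≤ q ^ (γ - 1) := rpow_le_rpow hp0.le hpq.le (by linarith)
    have h5 : deriv ω s * (γ * p ^ (γ - 1)) ≤ deriv ω s * (γ * q ^ (γ - 1)) := by
      have := hn s hs
      gcongr
    exact le_of_mul_le_mul_right (h3.trans h5) (mul_pos hγ0 (rpow_pos_of_pos hq0 _))
  · intro s hs t ht hst
    have := h.2.2.2.2.2 hs ht hst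
    simp only at this ⊢
    rwa [deriv_eq_of_omegaHyp h hs, deriv_eq_of_omegaHyp h ht]

lemma regW_rpow {α : ℝ} (hα : α ∈ Ioo (0 : ℝ) 1) : RegW (fun t => t ^ α) := by
  have hd : ∀ t : ℝ, 0 < t → HasDerivAt (fun t : ℝ => t ^ α) (α * t ^ (α - 1)) t := fun t ht =>
    Real.hasDerivAt_rpow_const (Or.inl ht.ne')
  have hd' : ∀ t : ℝ, 0 < t → deriv (fun t : ℝ => t ^ α) t = α * t ^ (α - 1) := fun t ht =>
    (hd t ht).deriv
  have h0 := hα.1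
  refine ⟨fun t ht => rpow_pos_of_pos ht.1 _, fun t ht => ?_, fun t ht => ?_, ?_, ?_⟩
  · rw [hd' t ht.1]; exact hd t ht.1
  · rw [hd' t ht.1]; have := rpow_pos_of_pos ht.1 (α - 1); positivity
  · intro s hs t ht hst
    rw [hd' s hs.1, hd' t ht.1]
    have := rpow_le_rpow_of_nonpos hs.1 hst (by linarith [hα.2] : α - 1 ≤ 0)
    gcongr
  · have : ∀ t ∈ Ioo 0 π, t * deriv (fun t : ℝ => t ^ α) t / t ^ α = α := by
      intro t ht
      rw [hd' t ht.1, rpow_sub_one ht.1.ne']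
      have := (rpow_pos_of_pos ht.1 α).ne'
      have := ht.1.ne'
      field_simp
    intro s hs t ht hst
    simp only
    rw [this s hs, this t ht]

namespace RegW
variable {ω : ℝ → ℝ}

lemma exists_slope (h : RegW ω) {s t : ℝ} (hs : 0 < s) (hst : s < t) (ht : t < π) :
    ∃ c ∈ Ioo s t, ω t - ω s = deriv ω c * (t - s) := by
  have hsub : Icc s t ⊆ Ioo 0 π := fun x hx => ⟨hs.trans_le hx.1, hx.2.trans_lt ht⟩
  obtain ⟨c, hc, h1⟩ := exists_hasDerivAt_eq_slope ω (deriv ω) hst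
    (fun x hx => (h.diff x (hsub hx)).continuousAt.continuousWithinAt)
    (fun x hx => h.diff x (hsub (Ioo_subset_Icc_self hx)))
  refine ⟨c, hc, ?_⟩
  have : t - s ≠ 0 := by linarith
  rw [h1]; field_simp

lemma sub_le (h : RegW ω) {s t : ℝ} (hs : 0 < s) (hst : s ≤ t) (ht : t < π) :
    ω t - ω s ≤ deriv ω s * (t - s) := by
  rcases hst.eq_or_lt with rfl | hst
  · simp
  obtain ⟨c, hc, h1⟩ := h.exists_slope hs hst ht
  rw [h1]
  have := h.anti ⟨hs, hst.trans ht⟩ ⟨hs.trans hc.1, hc.2.trans ht⟩ hc.1.le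
  have : 0 < t - s := by linarith
  gcongr

lemma le_sub (h : RegW ω) {s t : ℝ} (hs : 0 < s) (hst : s ≤ t) (ht : t < π) :
    deriv ω t * (t - s) ≤ ω t - ω s := by
  rcases hst.eq_or_lt with rfl | hst
  · simp
  obtain ⟨c, hc, h1⟩ := h.exists_slope hs hst ht
  rw [h1]
  have := h.anti ⟨hs.trans hc.1, hc.2.trans ht⟩ ⟨hs.trans hst, ht⟩ hc.2.le
  have : 0 < t - s := by linarith
  gcongr

lemma mono (h : RegW ω) {s t : ℝ} (hs : 0 < s) (hst : s ≤ t) (ht : t < π) : ω s ≤ ω t := by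
  have h1 := h.le_sub hs hst ht
  have h2 := h.nonneg t ⟨hs.trans_le hst, ht⟩
  nlinarith

lemma mul_deriv_le (h : RegW ω) {t : ℝ} (ht : t ∈ Ioo 0 π) : t * deriv ω t ≤ ω t := by
  refine le_of_forall_pos_le_add fun ε hε => ?_
  have hn := h.nonneg t ht
  set s := min t (ε / (deriv ω t + 1)) with hs
  have hs0 : 0 < s := lt_min ht.1 (by positivity)
  have h1 := h.le_sub hs0 (min_le_left _ _) ht.2
  have h2 := h.pos s ⟨hs0, (min_le_left _ _).trans_lt ht.2⟩
  have h3 : s * deriv ω t ≤ ε := by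
    have : s ≤ ε / (deriv ω t + 1) := min_le_right _ _
    rw [le_div_iff₀ (by positivity)] at this
    nlinarith
  nlinarith

lemma le_mul_div (h : RegW ω) {s t : ℝ} (hs : 0 < s) (hst : s ≤ t) (ht : t < π) :
    ω t ≤ ω s * (t / s) := by
  have h1 := h.sub_le hs hst ht
  have h2 := h.mul_deriv_le ⟨hs, hst.trans_lt ht⟩
  have h3 : deriv ω s * (t - s) ≤ ω s / s * (t - s) := by
    have : deriv ω s ≤ ω s / s := by rw [le_div_iff₀ hs]; linarith
    have : 0 ≤ t - s := by linarith
    gcongr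
  have h4 : ω s / s * (t - s) = ω s * (t / s) - ω s := by field_simp
  linarith

lemma log_sub_le (h : RegW ω) {s t : ℝ} (hs : 0 < s) (hst : s ≤ t) (ht : t < π) :
    log (ω t) - log (ω s) ≤ t * deriv ω t / ω t * (log t - log s) := by
  set A := t * deriv ω t / ω t with hA
  have hsub : Icc s t ⊆ Ioo 0 π := fun x hx => ⟨hs.trans_le hx.1, hx.2.trans_lt ht⟩
  have hder : ∀ u ∈ Ioo 0 π, HasDerivAt (fun u => A * log u - log (ω u))
      (A * u⁻¹ - deriv ω u / ω u) u := fun u hu =>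
    ((Real.hasDerivAt_log hu.1.ne').const_mul A).sub ((h.diff u hu).log (h.pos u hu).ne')
  have hm : MonotoneOn (fun u => A * log u - log (ω u)) (Icc s t) := by
    refine monotoneOn_of_deriv_nonneg (convex_Icc s t)
      (fun x hx => (hder x (hsub hx)).continuousAt.continuousWithinAt)
      (fun x hx => (hder x (hsub (interior_subset hx))).differentiableAt.differentiableWithinAt) ?_
    intro x hx
    have hx' := hsub (interior_subset hx)
    have hxt : x ≤ t := (interior_subset hx).2
    rw [(hder x hx').deriv]
    have h1 := h.slope hx' ⟨hx'.1.trans_le hxt, ht⟩ hxt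
    simp only at h1
    have h2 : A * x⁻¹ - deriv ω x / ω x = (A - x * deriv ω x / ω x) * x⁻¹ := by
      have := hx'.1.ne'
      field_simp
    rw [h2]
    have := hx'.1
    exact mul_nonneg (by linarith) (by positivity)
  have := hm ⟨le_rfl, hst⟩ ⟨hst, le_rfl⟩ hst
  simp only at this
  nlinarith

lemma mul_log_sub_le (h : RegW ω) {s t : ℝ} (hs : 0 < s) (hst : s ≤ t) (ht : t < π) :
    ω t * (log (ω t) - log (ω s)) ≤ t * deriv ω t * log (t / s) := by
  have h1 := h.log_sub_le hs hst ht
  have h2 := h.pos t ⟨hs.trans_le hst, ht⟩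
  rw [log_div (by linarith) hs.ne']
  calc ω t * (log (ω t) - log (ω s)) ≤ ω t * (t * deriv ω t / ω t * (log t - log s)) := by gcongr
    _ = _ := by field_simp

lemma increment (h : RegW ω) {A t x : ℝ} (ht : 0 < t) (hx : 0 ≤ x) (htx : t + x ≤ 2)
    (hA : ∀ u ∈ Icc t 2, deriv ω u ≤ A * u ^ (-(1 / 4) : ℝ)) (hA0 : 0 ≤ A) :
    ω (t + x) - ω t ≤ 4 / 3 * A * x ^ (3 / 4 : ℝ) := by
  have hpi := Real.pi_gt_three
  have hsub : Icc t (t + x) ⊆ Ioo 0 π := fun u hu => ⟨ht.trans_le hu.1, by linarith [hu.2]⟩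
  have hder : ∀ u ∈ Ioo t (t + x), HasDerivAt (fun u => 4 / 3 * A * (u - t) ^ (3 / 4 : ℝ) - ω u)
      (4 / 3 * A * ((3 / 4 : ℝ) * (u - t) ^ ((3 / 4 : ℝ) - 1)) - deriv ω u) u := by
    intro u hu
    have h1 : HasDerivAt (fun u => (u - t) ^ (3 / 4 : ℝ))
        ((3 / 4 : ℝ) * (u - t) ^ ((3 / 4 : ℝ) - 1)) u := by
      have := ((hasDerivAt_id u).sub_const t).rpow_const (p := (3 / 4 : ℝ))
        (Or.inl (by simp only [id]; linarith [hu.1]))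
      simpa using this
    exact (h1.const_mul _).sub (h.diff u (hsub (Ioo_subset_Icc_self hu)))
  have hm : MonotoneOn (fun u => 4 / 3 * A * (u - t) ^ (3 / 4 : ℝ) - ω u) (Icc t (t + x)) := by
    refine monotoneOn_of_deriv_nonneg (convex_Icc _ _) ?_ ?_ ?_
    · refine ContinuousOn.sub ?_ fun u hu => (h.diff u (hsub hu)).continuousAt.continuousWithinAt
      refine ContinuousOn.mul continuousOn_const ?_
      exact ContinuousOn.rpow_const (by fun_prop) fun _ _ => Or.inr (by norm_num)
    · rw [interior_Icc]
      exact fun u hu => (hder u hu).differentiableAt.differentiableWithinAt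
    · rw [interior_Icc]
      intro u hu
      rw [(hder u hu).deriv]
      have h1 := hA u ⟨hu.1.le, by linarith [hu.2]⟩
      have h2 : u ^ (-(1 / 4) : ℝ) ≤ (u - t) ^ (-(1 / 4) : ℝ) :=
        rpow_le_rpow_of_nonpos (by linarith [hu.1]) (by linarith) (by norm_num)
      have h3 : (3 / 4 : ℝ) - 1 = -(1 / 4) := by norm_num
      rw [h3]
      nlinarith
  have := hm ⟨le_rfl, by linarith⟩ ⟨by linarith, le_rfl⟩ (by linarith : t ≤ t + x)
  simp only [sub_self, add_sub_cancel_left] at this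
  rw [Real.zero_rpow (by norm_num)] at this
  linarith

end RegW

/-- Weighted tail energy of the derivative of a weight. -/
noncomputable def tail (ω : ℝ → ℝ) (t : ℝ) : ENNReal :=
  ∫⁻ u in Ioo 0 2, if t < 2 * u then ENNReal.ofReal (u ^ (-(1 / 2) : ℝ) * deriv ω u ^ 2) else 0

lemma tail_lt_top {ω : ℝ → ℝ} (h : RegW ω) {t : ℝ} (ht : 0 < t) : tail ω t < ⊤ := by
  have hpi := Real.pi_gt_three
  rcases le_or_gt 4 t with ht4 | ht4
  · have : tail ω t = ∫⁻ u in Ioo (0 : ℝ) 2, 0 := by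
      refine setLIntegral_congr_fun measurableSet_Ioo fun u hu => ?_
      rw [if_neg]
      have := hu.2
      linarith
    rw [this]; simp
  refine lt_of_le_of_lt (b := ∫⁻ u in Ioo (0 : ℝ) 2,
    ENNReal.ofReal ((t / 2) ^ (-(1 / 2) : ℝ) * deriv ω (t / 2) ^ 2)) ?_ ?_
  · refine setLIntegral_mono' measurableSet_Ioo fun u hu => ?_
    split_ifs with hc
    · have h1 := h.anti (a := t / 2) (b := u) ⟨by linarith, by linarith⟩
        ⟨hu.1, by linarith [hu.2]⟩ (by linarith)
      have h2 := h.nonneg u ⟨hu.1, by linarith [hu.2]⟩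
      have h3 : u ^ (-(1 / 2) : ℝ) ≤ (t / 2) ^ (-(1 / 2) : ℝ) :=
        rpow_le_rpow_of_nonpos (by linarith) (by linarith) (by norm_num)
      have h4 := rpow_pos_of_pos hu.1 (-(1 / 2))
      gcongr
    · exact zero_le
  · rw [setLIntegral_const]
    exact ENNReal.mul_lt_top ENNReal.ofReal_lt_top (by simp)

lemma deriv_sq_le_tail {ω : ℝ → ℝ} (h : RegW ω) {t s : ℝ} (ht : 0 < t) (hts : t ≤ s) (hs : s ≤ 2) :
    ENNReal.ofReal (s ^ (1 / 2 : ℝ) * deriv ω s ^ 2) ≤ 2 * tail ω t := by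
  have hpi := Real.pi_gt_three
  have hs0 : 0 < s := by linarith
  have h1 : ENNReal.ofReal (s ^ (1 / 2 : ℝ) * deriv ω s ^ 2 / 2) ≤ tail ω t := by
    calc ENNReal.ofReal (s ^ (1 / 2 : ℝ) * deriv ω s ^ 2 / 2)
        = ∫⁻ u in Ioo (s / 2) s, ENNReal.ofReal (s ^ (-(1 / 2) : ℝ) * deriv ω s ^ 2) := by
          rw [setLIntegral_const, Real.volume_Ioo,
            ← ENNReal.ofReal_mul' (by linarith)]
          congr 1
          have : s ^ (1 / 2 : ℝ) = s ^ (-(1 / 2) : ℝ) * s := by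
            conv_rhs => rw [← Real.rpow_add_one hs0.ne']
            norm_num
          rw [this]; ring
      _ ≤ ∫⁻ u in Ioo (s / 2) s, if t < 2 * u then
            ENNReal.ofReal (u ^ (-(1 / 2) : ℝ) * deriv ω u ^ 2) else 0 := by
          refine setLIntegral_mono' measurableSet_Ioo fun u hu => ?_
          have hu0 : 0 < u := by linarith [hu.1]
          rw [if_pos (by linarith [hu.1])]
          have h1 := h.anti (a := u) (b := s) ⟨hu0, by linarith [hu.2]⟩
            ⟨hs0, by linarith⟩ hu.2.le
          have h2 := h.nonneg s ⟨hs0, by linarith⟩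
          have h3 : s ^ (-(1 / 2) : ℝ) ≤ u ^ (-(1 / 2) : ℝ) :=
            rpow_le_rpow_of_nonpos hu0 hu.2.le (by norm_num)
          have h4 := rpow_pos_of_pos hu0 (-(1 / 2))
          gcongr
      _ ≤ tail ω t := by
          refine lintegral_mono_set fun u hu => ⟨by linarith [hu.1], by linarith [hu.2]⟩
  calc ENNReal.ofReal (s ^ (1 / 2 : ℝ) * deriv ω s ^ 2)
      = 2 * ENNReal.ofReal (s ^ (1 / 2 : ℝ) * deriv ω s ^ 2 / 2) := by
        rw [← ENNReal.ofReal_ofNat 2, ← ENNReal.ofReal_mul (by norm_num)]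
        congr 1; ring
    _ ≤ _ := by gcongr

/-- Real-valued square root of the tail energy. -/
noncomputable def tailRoot (ω : ℝ → ℝ) (t : ℝ) : ℝ := √(2 * (tail ω t).toReal)

lemma tailRoot_nonneg (ω : ℝ → ℝ) (t : ℝ) : 0 ≤ tailRoot ω t := Real.sqrt_nonneg _

lemma ofReal_tailRoot_sq {ω : ℝ → ℝ} (h : RegW ω) {t : ℝ} (ht : 0 < t) :
    ENNReal.ofReal (tailRoot ω t ^ 2) = 2 * tail ω t := by
  rw [tailRoot, Real.sq_sqrt (by positivity), ENNReal.ofReal_mul (by norm_num),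
    ENNReal.ofReal_toReal (tail_lt_top h ht).ne]
  simp

lemma deriv_le_tailRoot {ω : ℝ → ℝ} (h : RegW ω) {t s : ℝ} (ht : 0 < t) (hs : s ∈ Icc t 2) :
    deriv ω s ≤ tailRoot ω t * s ^ (-(1 / 4) : ℝ) := by
  have hs0 : 0 < s := ht.trans_le hs.1
  have h1 := deriv_sq_le_tail h ht hs.1 hs.2
  rw [← ofReal_tailRoot_sq h ht, ENNReal.ofReal_le_ofReal_iff (by positivity)] at h1
  have h2 : s ^ (1 / 2 : ℝ) = (s ^ (1 / 4 : ℝ)) ^ 2 := by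
    rw [← Real.rpow_natCast, ← Real.rpow_mul hs0.le]; norm_num
  rw [h2, ← mul_pow] at h1
  have h4 := (le_abs_self _).trans (abs_le_of_sq_le_sq h1 (tailRoot_nonneg _ _))
  rw [Real.rpow_neg hs0.le, ← div_eq_mul_inv, le_div_iff₀ (by positivity)]
  linarith

lemma lintegral_swap {α β : Type*} [MeasurableSpace α] [MeasurableSpace β] {μ : Measure α}
    {ν : Measure β} [SFinite μ] [SFinite ν] {F : α × β → ENNReal} (hF : Measurable F) :
    ∫⁻ a, ∫⁻ b, F (a, b) ∂ν ∂μ = ∫⁻ b, ∫⁻ a, F (a, b) ∂μ ∂ν :=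
  lintegral_lintegral_swap (f := fun a b => F (a, b)) hF.aemeasurable

lemma lintegral_Ioi_rpow {p b : ℝ} (hp : 0 < p) {a : ℝ} (hba : 0 < b + a) :
    ∫⁻ R in Ioi a, ENNReal.ofReal ((b + R) ^ (-p - 1)) =
      ENNReal.ofReal ((b + a) ^ (-p) / p) := by
  have hder : ∀ x ∈ Ioi a, HasDerivAt (fun R => -((b + R) ^ (-p) / p)) ((b + x) ^ (-p - 1)) x := by
    intro x hx
    have hx' : b + x ≠ 0 := by have : a < x := hx; linarith
    have := ((((hasDerivAt_id x).const_add b).rpow_const (p := -p) (Or.inl hx')).div_const p).neg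
    refine this.congr_deriv ?_
    simp only [id]
    field_simp
  have hcont : ContinuousWithinAt (fun R => -((b + R) ^ (-p) / p)) (Ici a) a := by
    refine ContinuousAt.continuousWithinAt ?_
    refine ContinuousAt.neg (ContinuousAt.div_const ?_ _)
    exact ContinuousAt.rpow_const (by fun_prop) (Or.inl hba.ne')
  have hpos : ∀ x ∈ Ioi a, 0 ≤ (b + x) ^ (-p - 1) := fun x hx => by
    have : a < x := hx
    have : 0 < b + x := by linarith
    positivity
  have hlim : Filter.Tendsto (fun R => -((b + R) ^ (-p) / p)) Filter.atTop (nhds 0) := by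
    have h1 := (tendsto_rpow_neg_atTop hp).comp
      (Filter.tendsto_atTop_add_const_left Filter.atTop b Filter.tendsto_id)
    simpa using (h1.div_const p).neg
  have h_int := integrableOn_Ioi_deriv_of_nonneg hcont hder hpos hlim
  rw [← ofReal_integral_eq_lintegral_ofReal h_int
    (by filter_upwards [ae_restrict_mem measurableSet_Ioi] with x hx using hpos x hx),
    integral_Ioi_of_hasDerivAt_of_nonneg hcont hder hpos hlim]
  simp

/-- Integration of a power kernel against a measure with polynomial growth. -/
lemma lintegral_kernel_le {ν : Measure ℝ} [SFinite ν] {M d p y θ₀ : ℝ} (hM : 0 ≤ M) (hd : 0 < d)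
    (hdp : d < p) (hy : 0 < y)
    (hν : ∀ R, 0 < R → ν {θ | |θ - θ₀| < R} ≤ ENNReal.ofReal (M * R ^ d)) :
    ∫⁻ θ, ENNReal.ofReal ((y + |θ - θ₀|) ^ (-p)) ∂ν ≤
      ENNReal.ofReal (M * (p / (p - d)) * y ^ (-(p - d))) := by
  have hp : 0 < p := hd.trans hdp
  have hmeas : MeasurableSet {q : ℝ × ℝ | |q.1 - θ₀| < q.2} :=
    measurableSet_lt (by fun_prop) (by fun_prop)
  have h1 : ∀ θ, ENNReal.ofReal ((y + |θ - θ₀|) ^ (-p)) = ∫⁻ R in Ioi 0,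
      {q : ℝ × ℝ | |q.1 - θ₀| < q.2}.indicator
        (fun q => ENNReal.ofReal (p * (y + q.2) ^ (-p - 1))) (θ, R) := by
    intro θ
    have ha := abs_nonneg (θ - θ₀)
    have h2 : ∀ R, {q : ℝ × ℝ | |q.1 - θ₀| < q.2}.indicator
        (fun q => ENNReal.ofReal (p * (y + q.2) ^ (-p - 1))) (θ, R) =
        (Ioi |θ - θ₀|).indicator (fun R => ENNReal.ofReal (p * (y + R) ^ (-p - 1))) R := by
      intro R
      simp [indicator_apply]
    simp_rw [h2]
    rw [setLIntegral_indicator measurableSet_Ioi, Ioi_inter_Ioi, sup_eq_left.2 ha]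
    simp_rw [ENNReal.ofReal_mul hp.le]
    rw [lintegral_const_mul _ (by fun_prop), lintegral_Ioi_rpow hp (by positivity),
      ← ENNReal.ofReal_mul hp.le]
    congr 1
    field_simp
  simp_rw [h1]
  rw [lintegral_swap ((by fun_prop : Measurable fun q : ℝ × ℝ =>
    ENNReal.ofReal (p * (y + q.2) ^ (-p - 1))).indicator hmeas)]
  calc _ ≤ ∫⁻ R in Ioi 0, ENNReal.ofReal (M * p) * ENNReal.ofReal ((y + R) ^ (-(p - d) - 1)) := by
        refine setLIntegral_mono' measurableSet_Ioi fun R hR => ?_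
        have hR : 0 < R := hR
        have h2 : ∀ θ, {q : ℝ × ℝ | |q.1 - θ₀| < q.2}.indicator
            (fun q => ENNReal.ofReal (p * (y + q.2) ^ (-p - 1))) (θ, R) =
            {θ | |θ - θ₀| < R}.indicator
              (fun _ => ENNReal.ofReal (p * (y + R) ^ (-p - 1))) θ := by
          intro θ
          simp [indicator_apply]
        simp_rw [h2]
        rw [lintegral_indicator (measurableSet_lt (by fun_prop) (by fun_prop)), setLIntegral_const]
        refine (mul_le_mul_right (hν R hR) _).trans ?_
        rw [← ENNReal.ofReal_mul (by positivity), ← ENNReal.ofReal_mul (by positivity)]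
        refine ENNReal.ofReal_le_ofReal ?_
        have h3 : R ^ d ≤ (y + R) ^ d := rpow_le_rpow hR.le (by linarith) hd.le
        have h4 : (y + R) ^ (-(p - d) - 1) = (y + R) ^ (-p - 1) * (y + R) ^ d := by
          rw [← Real.rpow_add (by positivity)]; ring_nf
        rw [h4]
        calc p * (y + R) ^ (-p - 1) * (M * R ^ d) ≤ p * (y + R) ^ (-p - 1) * (M * (y + R) ^ d) := by
              gcongr
          _ = _ := by ring
    _ = _ := by
        rw [lintegral_const_mul _ (by fun_prop), lintegral_Ioi_rpow (by linarith) (by linarith),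
          ← ENNReal.ofReal_mul (by positivity)]
        congr 1
        rw [add_zero]
        have : p - d ≠ 0 := by linarith
        field_simp

lemma volume_abs_sub_lt (θ₀ R : ℝ) :
    volume {θ | |θ - θ₀| < R} = ENNReal.ofReal (2 * R) := by
  have : {θ | |θ - θ₀| < R} = Ioo (θ₀ - R) (θ₀ + R) := by
    ext x
    simp only [mem_ofPred_eq, mem_Ioo, abs_lt]
    constructor <;> rintro ⟨h1, h2⟩ <;> constructor <;> linarith
  rw [this, Real.volume_Ioo]; congr 1; ring

lemma lintegral_kernel_volume {q y θ₀ : ℝ} (hq : 0 < q) (hy : 0 < y) (S : Set ℝ) :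
    ∫⁻ θ in S, ENNReal.ofReal ((y + |θ - θ₀|) ^ (-(1 + q))) ≤
      ENNReal.ofReal (2 * ((1 + q) / q) * y ^ (-q)) := by
  refine (lintegral_mono' Measure.restrict_le_self le_rfl).trans ?_
  have := lintegral_kernel_le (ν := volume) (M := 2) (d := 1) (p := 1 + q) (y := y) (θ₀ := θ₀)
    (by norm_num) one_pos (by linarith) hy
    (fun R hR => by rw [volume_abs_sub_lt, Real.rpow_one])
  rwa [add_sub_cancel_left] at this

/-- A half-open period centred at `θ₀`. -/
abbrev period (θ₀ : ℝ) : Set ℝ := Ioc (θ₀ - π) (θ₀ + π)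

lemma abs_sub_le_of_mem_period {θ θ₀ : ℝ} (h : θ ∈ period θ₀) : |θ - θ₀| ≤ π := by
  rw [abs_le]; constructor <;> linarith [h.1, h.2]

namespace DistReg
variable {δ : ℝ → ℝ} {d K : ℝ}

lemma ae_pos (h : DistReg δ d K) : ∀ᵐ θ, 0 < δ θ := by
  have hpi := Real.pi_gt_three
  have h1 : ∀ n : ℤ, volume {θ : ℝ | |θ - n| < 1 ∧ δ θ = 0} = 0 := by
    intro n
    refine le_antisymm (le_of_forall_gt fun ε hε => ?_) zero_le
    have h0 : Filter.Tendsto (fun s : ℝ => ENNReal.ofReal (K * ((1 : ℝ) ^ d * s ^ (1 - d))))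
        (nhdsWithin 0 (Ioi 0)) (nhds 0) := by
      have : Filter.Tendsto (fun s : ℝ => ENNReal.ofReal (K * ((1 : ℝ) ^ d * s ^ (1 - d))))
        (nhds 0) (nhds (ENNReal.ofReal (K * ((1 : ℝ) ^ d * 0 ^ (1 - d))))) := by
        refine ENNReal.tendsto_ofReal ?_
        refine Filter.Tendsto.const_mul _ (Filter.Tendsto.const_mul _ ?_)
        exact (Real.continuousAt_rpow_const 0 (1 - d) (Or.inr (by linarith [h.d_lt]))).tendsto
      rw [Real.zero_rpow (by linarith [h.d_lt])] at this
      simp only [mul_zero, ENNReal.ofReal_zero] at this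
      exact this.mono_left nhdsWithin_le_nhds
    obtain ⟨s, hs1, hs2⟩ := ((h0.eventually (gt_mem_nhds hε)).and self_mem_nhdsWithin).exists
    refine lt_of_le_of_lt (le_trans (measure_mono ?_) (h.vol n 1 s one_pos (by linarith) hs2)) hs1
    rintro θ ⟨h2, h3⟩
    exact ⟨h2, by rw [h3]; exact hs2⟩
  rw [ae_iff]
  refine measure_mono_null (t := ⋃ n : ℤ, {θ : ℝ | |θ - n| < 1 ∧ δ θ = 0}) ?_
    (measure_iUnion_null h1)
  intro θ hθ
  have hθ' : ¬ 0 < δ θ := hθ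
  refine mem_iUnion.2 ⟨⌊θ⌋, ?_, le_antisymm (not_lt.1 hθ') (h.nonneg θ)⟩
  rw [abs_lt]
  constructor <;> linarith [Int.floor_le θ, Int.lt_floor_add_one θ]

lemma lintegral_log_le (h : DistReg δ d K) {p R t : ℝ} (hR : 0 < R) (hR' : R ≤ 2 * π)
    (ht : 0 < t) :
    ∫⁻ θ in {θ | |θ - p| < R}, ENNReal.ofReal (log (t / δ θ)) ≤
      ENNReal.ofReal (K / (1 - d) * t ^ (1 - d) * R ^ d) := by
  have hd := h.d_lt
  have hK := h.K_pos
  have hδ := h.continuous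
  have hmeas : MeasurableSet {q : ℝ × ℝ | δ q.1 < q.2} :=
    measurableSet_lt (by fun_prop) (by fun_prop)
  have h1 : ∀ θ, ENNReal.ofReal (log (t / δ θ)) ≤ ∫⁻ s in Ioo 0 t,
      {q : ℝ × ℝ | δ q.1 < q.2}.indicator (fun q => ENNReal.ofReal (q.2⁻¹)) (θ, s) := by
    intro θ
    rcases (h.nonneg θ).eq_or_lt with h0 | h0
    · simp [← h0]
    rcases le_or_gt t (δ θ) with h2 | h2
    · rw [ENNReal.ofReal_of_nonpos]
      · exact zero_le
      · exact log_nonpos (by positivity) (by rw [div_le_one h0]; exact h2)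
    have h3 : ∫⁻ s in Ioo (δ θ) t, ENNReal.ofReal (s⁻¹) = ENNReal.ofReal (log (t / δ θ)) := by
      rw [← ofReal_integral_eq_lintegral_ofReal, ← integral_Ioc_eq_integral_Ioo,
        ← intervalIntegral.integral_of_le h2.le, integral_inv_of_pos h0 ht]
      · have := (intervalIntegral.intervalIntegrable_inv (μ := volume) (a := δ θ) (b := t)
          (f := fun x => x) (fun x hx => ?_) continuousOn_id).1
        · exact this.mono_set Ioo_subset_Ioc_self
        · rw [uIcc_of_le h2.le] at hx
          have := hx.1
          linarith
      · filter_upwards [ae_restrict_mem measurableSet_Ioo] with s hs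
        have : 0 < s := h0.trans hs.1
        simp only [Pi.zero_apply]; positivity
    rw [← h3]
    calc ∫⁻ s in Ioo (δ θ) t, ENNReal.ofReal (s⁻¹) = ∫⁻ s in Ioo (δ θ) t,
          {q : ℝ × ℝ | δ q.1 < q.2}.indicator (fun q => ENNReal.ofReal (q.2⁻¹)) (θ, s) := by
          refine setLIntegral_congr_fun measurableSet_Ioo fun s hs => ?_
          have : (θ, s) ∈ {q : ℝ × ℝ | δ q.1 < q.2} := hs.1
          rw [indicator_of_mem this]
      _ ≤ _ := lintegral_mono_set (Ioo_subset_Ioo_left h0.le)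
  refine (lintegral_mono h1).trans ?_
  rw [lintegral_swap ((by fun_prop : Measurable fun q : ℝ × ℝ =>
    ENNReal.ofReal (q.2⁻¹)).indicator hmeas)]
  calc _ ≤ ∫⁻ s in Ioo 0 t, ENNReal.ofReal (K * R ^ d * s ^ (-d)) := by
        refine setLIntegral_mono' measurableSet_Ioo fun s hs => ?_
        have hs0 : 0 < s := hs.1
        have h2 : ∀ θ, {q : ℝ × ℝ | δ q.1 < q.2}.indicator (fun q => ENNReal.ofReal (q.2⁻¹)) (θ, s)
            = {θ | δ θ < s}.indicator (fun _ => ENNReal.ofReal (s⁻¹)) θ := by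
          intro θ; simp [indicator_apply]
        simp_rw [h2]
        have hm : MeasurableSet {θ | δ θ < s} := measurableSet_lt (by fun_prop) (by fun_prop)
        rw [lintegral_indicator hm, setLIntegral_const, Measure.restrict_apply hm]
        have h3 := h.vol p R s hR hR' hs0
        have h4 : {θ | δ θ < s} ∩ {θ | |θ - p| < R} = {θ | |θ - p| < R ∧ δ θ < s} := by
          ext; simp [and_comm]
        rw [h4]
        refine (mul_le_mul_right h3 _).trans ?_
        rw [← ENNReal.ofReal_mul (by positivity)]
        refine ENNReal.ofReal_le_ofReal (le_of_eq ?_)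
        rw [sub_eq_add_neg, Real.rpow_add hs0, Real.rpow_one]
        field_simp
    _ = _ := by
        have hi : IntegrableOn (fun s : ℝ => s ^ (-d)) (Ioo 0 t) := by
          have := (intervalIntegral.intervalIntegrable_rpow' (a := 0) (b := t) (r := -d)
            (by linarith)).1
          exact this.mono_set Ioo_subset_Ioc_self
        rw [← ofReal_integral_eq_lintegral_ofReal (hi.const_mul _), integral_const_mul,
          ← integral_Ioc_eq_integral_Ioo, ← intervalIntegral.integral_of_le ht.le,
          integral_rpow (Or.inl (by linarith))]
        · congr 1
          rw [Real.zero_rpow (by linarith)]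
          rw [show -d + 1 = 1 - d by ring]
          field_simp
          ring
        · filter_upwards [ae_restrict_mem measurableSet_Ioo] with s hs
          have : 0 < s := hs.1
          simp only [Pi.zero_apply]; positivity

lemma lintegral_log_kernel_le (h : DistReg δ d K) {θ₀ t : ℝ} (ht : 0 < t) :
    ∫⁻ θ in period θ₀, ENNReal.ofReal (log (t / δ θ)) *
        ENNReal.ofReal ((t + |θ - θ₀|) ^ (-2 : ℝ)) ≤
      ENNReal.ofReal (K / (1 - d) * (2 / (2 - d)) / t) := by
  have hd := h.d_lt
  have hd0 := h.d_pos
  have hK := h.K_pos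
  have hδ := h.continuous
  have hpi := Real.pi_pos
  have hm : Measurable fun θ => ENNReal.ofReal (log (t / δ θ)) := by
    have := hδ.measurable
    fun_prop
  set ν := (volume.restrict (period θ₀)).withDensity fun θ => ENNReal.ofReal (log (t / δ θ)) with hν
  have h1 := lintegral_kernel_le (ν := ν) (M := K / (1 - d) * t ^ (1 - d)) (d := d) (p := 2)
    (y := t) (θ₀ := θ₀) (by have : 0 < 1 - d := by linarith
                            positivity) hd0 (by linarith) ht ?_
  · rw [hν, lintegral_withDensity_eq_lintegral_mul _ hm (by fun_prop)] at h1
    refine h1.trans (ENNReal.ofReal_le_ofReal (le_of_eq ?_))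
    have : t ^ (1 - d) * t ^ (-(2 - d)) = t⁻¹ := by
      rw [← Real.rpow_add ht, ← Real.rpow_neg_one]; ring_nf
    calc _ = K / (1 - d) * (2 / (2 - d)) * (t ^ (1 - d) * t ^ (-(2 - d))) := by ring
      _ = _ := by rw [this]; rfl
  · intro R hR
    have hmR : MeasurableSet {θ | |θ - θ₀| < R} := measurableSet_lt (by fun_prop) (by fun_prop)
    rw [hν, withDensity_apply _ hmR, Measure.restrict_restrict hmR]
    rcases le_or_gt R (2 * π) with h2 | h2
    · exact (lintegral_mono_set inter_subset_left).trans (h.lintegral_log_le hR h2 ht)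
    · refine (lintegral_mono_set (t := {θ | |θ - θ₀| < 2 * π}) ?_).trans
        ((h.lintegral_log_le (by positivity) le_rfl ht).trans ?_)
      · intro θ hθ
        have := abs_sub_le_of_mem_period hθ.2
        exact lt_of_le_of_lt this (by linarith)
      · refine ENNReal.ofReal_le_ofReal ?_
        have h3 : 0 < 1 - d := by linarith
        have h4 : (2 * π) ^ d ≤ R ^ d := rpow_le_rpow (by positivity) h2.le hd0.le
        gcongr

end DistReg

section kernel
variable {δ ω : ℝ → ℝ} {d K : ℝ}

lemma osc_pointwise (h : DistReg δ d K) (hω : RegW ω) {θ₀ θ y A : ℝ} (hy : y ∈ Ioc (0 : ℝ) 1)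
    (hA0 : 0 ≤ A)
    (hA : ∀ u ∈ Icc (max (δ θ₀) y) 2, deriv ω u ≤ A * u ^ (-(1 / 4) : ℝ)) (hθ : 0 < δ θ) :
    ω (max (δ θ₀) y) * |log (ω (δ θ)) - log (ω (max (δ θ₀) y))| * (y + |θ - θ₀|) ^ (-2 : ℝ) ≤
      2 * A * (y + |θ - θ₀|) ^ (-(1 + 1 / 4) : ℝ) +
      9 * A * max (δ θ₀) y ^ (3 / 4 : ℝ) *
        (max (log (max (δ θ₀) y / δ θ)) 0 * (max (δ θ₀) y + |θ - θ₀|) ^ (-2 : ℝ)) := by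
  have hpi := Real.pi_gt_three
  set t := max (δ θ₀) y with ht
  set x := |θ - θ₀| with hx
  have hx0 : 0 ≤ x := abs_nonneg _
  have hy0 := hy.1
  have ht0 : 0 < t := hy0.trans_le (le_max_right _ _)
  have ht2 : t ≤ 2 := max_le (h.le_two _) (by linarith [hy.2])
  have htm : t ∈ Ioo 0 π := ⟨ht0, by linarith⟩
  have hωt := hω.pos t htm
  have h2θ := h.le_two θ
  have hωθ := hω.pos (δ θ) ⟨hθ, by linarith⟩
  have hyx : 0 < y + x := by positivity
  have htx : 0 < t + x := by positivity
  have hl : δ θ ≤ t + x := (h.lip θ θ₀).trans (by gcongr; exact le_max_left _ _)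
  have hl' : δ θ₀ ≤ δ θ + x := by rw [hx, abs_sub_comm]; exact h.lip θ₀ θ
  have hxp : x ^ (3 / 4 : ℝ) * (y + x) ^ (-2 : ℝ) ≤ (y + x) ^ (-(1 + 1 / 4) : ℝ) := by
    have h1 : x ^ (3 / 4 : ℝ) ≤ (y + x) ^ (3 / 4 : ℝ) :=
      rpow_le_rpow hx0 (by linarith) (by norm_num)
    calc _ ≤ (y + x) ^ (3 / 4 : ℝ) * (y + x) ^ (-2 : ℝ) := by gcongr
      _ = _ := by rw [← Real.rpow_add hyx]; norm_num
  have hnn : 0 ≤ 9 * A * t ^ (3 / 4 : ℝ) * (max (log (t / δ θ)) 0 * (t + x) ^ (-2 : ℝ)) := by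
    positivity
  have hnn' : 0 ≤ 2 * A * (y + x) ^ (-(1 + 1 / 4) : ℝ) := by positivity
  have first : ω t * |log (ω (δ θ)) - log (ω t)| ≤ 2 * A * x ^ (3 / 4 : ℝ) →
      ω t * |log (ω (δ θ)) - log (ω t)| * (y + x) ^ (-2 : ℝ) ≤
        2 * A * (y + x) ^ (-(1 + 1 / 4) : ℝ) := by
    intro h1
    calc _ ≤ 2 * A * x ^ (3 / 4 : ℝ) * (y + x) ^ (-2 : ℝ) := by gcongr
      _ = 2 * A * (x ^ (3 / 4 : ℝ) * (y + x) ^ (-2 : ℝ)) := by ring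
      _ ≤ _ := by gcongr
  rcases le_or_gt (δ θ) t with hc | hc
  · have hm := hω.mono hθ hc htm.2
    have hlog : log (ω (δ θ)) ≤ log (ω t) := log_le_log hωθ hm
    have habs : |log (ω (δ θ)) - log (ω t)| = log (ω t) - log (ω (δ θ)) := by
      rw [abs_of_nonpos (by linarith)]; ring
    have hlt : 0 ≤ log (t / δ θ) := log_nonneg (by rwa [one_le_div hθ])
    have hmain : ω t * |log (ω (δ θ)) - log (ω t)| ≤ A * t ^ (3 / 4 : ℝ) * log (t / δ θ) := by
      rw [habs]
      refine (hω.mul_log_sub_le hθ hc htm.2).trans ?_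
      have h1 := hA t ⟨le_rfl, ht2⟩
      have h2 : t * deriv ω t ≤ A * t ^ (3 / 4 : ℝ) := by
        calc t * deriv ω t ≤ t * (A * t ^ (-(1 / 4) : ℝ)) := by gcongr
          _ = A * (t ^ (1 : ℝ) * t ^ (-(1 / 4) : ℝ)) := by rw [Real.rpow_one]; ring
          _ = _ := by rw [← Real.rpow_add ht0]; norm_num
      gcongr
    rcases le_or_gt (t + x) (3 * (y + x)) with h3 | h3
    · have h4 : (y + x) ^ (-2 : ℝ) ≤ 9 * (t + x) ^ (-2 : ℝ) := by
        rw [Real.rpow_neg hyx.le, Real.rpow_neg htx.le, Real.rpow_two, Real.rpow_two,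
          ← div_eq_mul_inv, le_div_iff₀ (by positivity), ← div_eq_inv_mul,
          div_le_iff₀ (by positivity)]
        nlinarith
      have : ω t * |log (ω (δ θ)) - log (ω t)| * (y + x) ^ (-2 : ℝ) ≤
          9 * A * t ^ (3 / 4 : ℝ) * (max (log (t / δ θ)) 0 * (t + x) ^ (-2 : ℝ)) := by
        rw [max_eq_left hlt]
        calc _ ≤ A * t ^ (3 / 4 : ℝ) * log (t / δ θ) * (9 * (t + x) ^ (-2 : ℝ)) := by gcongr
          _ = _ := by ring
      linarith
    · have hty : δ θ₀ = t := by
        rw [ht, eq_comm, max_eq_left_iff]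
        by_contra! hcon
        have : t = y := max_eq_right hcon.le
        linarith
      have hxt : 2 * x < t := by linarith
      refine (first (hmain.trans ?_)).trans (by linarith)
      have h5 : log (t / δ θ) ≤ 2 * x / t := by
        have h6 : t / 2 ≤ δ θ := by linarith
        calc log (t / δ θ) ≤ t / δ θ - 1 := log_le_sub_one_of_pos (by positivity)
          _ = (t - δ θ) / δ θ := by field_simp
          _ ≤ x / (t / 2) := by gcongr; linarith
          _ = _ := by field_simp
      have h7 : t ^ (3 / 4 : ℝ) * (x / t) ≤ x ^ (3 / 4 : ℝ) := by
        rcases hx0.eq_or_lt with h8 | h8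
        · rw [← h8]; simp [Real.zero_rpow]
        · have h9 : t ^ (3 / 4 : ℝ) * (x / t) = t ^ (-(1 / 4) : ℝ) * x := by
            have : t ^ (3 / 4 : ℝ) = t ^ (-(1 / 4) : ℝ) * t := by
              conv_rhs => rw [← Real.rpow_add_one ht0.ne']
              norm_num
            rw [this]; field_simp
          have h10 : x ^ (3 / 4 : ℝ) = x ^ (-(1 / 4) : ℝ) * x := by
            conv_rhs => rw [← Real.rpow_add_one h8.ne']
            norm_num
          rw [h9, h10]
          have := rpow_le_rpow_of_nonpos h8 (by linarith : x ≤ t) (by norm_num : -(1 / 4 : ℝ) ≤ 0)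
          gcongr
      calc _ ≤ A * t ^ (3 / 4 : ℝ) * (2 * x / t) := by gcongr
        _ = 2 * A * (t ^ (3 / 4 : ℝ) * (x / t)) := by ring
        _ ≤ _ := by gcongr
  · have hm := hω.mono ht0 hc.le (by linarith)
    refine (first ?_).trans (by linarith)
    have hlog : log (ω t) ≤ log (ω (δ θ)) := log_le_log hωt hm
    rw [abs_of_nonneg (by linarith), ← log_div hωθ.ne' hωt.ne']
    have h1 : log (ω (δ θ) / ω t) ≤ ω (δ θ) / ω t - 1 := log_le_sub_one_of_pos (by positivity)
    have h2 : ω t * log (ω (δ θ) / ω t) ≤ ω (δ θ) - ω t := by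
      calc _ ≤ ω t * (ω (δ θ) / ω t - 1) := by gcongr
        _ = _ := by field_simp
    have h3 := hω.increment (A := A) (t := t) (x := δ θ - t) ht0 (by linarith) (by linarith) hA hA0
    rw [add_sub_cancel] at h3
    have h4 : (δ θ - t) ^ (3 / 4 : ℝ) ≤ x ^ (3 / 4 : ℝ) :=
      rpow_le_rpow (by linarith) (by linarith) (by norm_num)
    calc _ ≤ 4 / 3 * A * (δ θ - t) ^ (3 / 4 : ℝ) := h2.trans h3
      _ ≤ 2 * A * x ^ (3 / 4 : ℝ) := by gcongr; norm_num

/-- The constant in the oscillation bound. -/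
noncomputable def oscConst (d K : ℝ) : ℝ := 20 + 9 * (K / (1 - d) * (2 / (2 - d)))

lemma oscConst_pos (h : DistReg δ d K) : 0 < oscConst d K := by
  have := h.d_lt
  have := h.K_pos
  have : 0 < 1 - d := by linarith
  have : 0 < 2 - d := by linarith
  unfold oscConst; positivity

lemma osc_lintegral (h : DistReg δ d K) (hω : RegW ω) {θ₀ y A : ℝ} (hy : y ∈ Ioc (0 : ℝ) 1)
    (hA0 : 0 ≤ A)
    (hA : ∀ u ∈ Icc (max (δ θ₀) y) 2, deriv ω u ≤ A * u ^ (-(1 / 4) : ℝ)) :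
    ∫⁻ θ in period θ₀, ENNReal.ofReal (ω (max (δ θ₀) y) *
      |log (ω (δ θ)) - log (ω (max (δ θ₀) y))| * (y + |θ - θ₀|) ^ (-2 : ℝ)) ≤
      ENNReal.ofReal (oscConst d K * A * y ^ (-(1 / 4) : ℝ)) := by
  set t := max (δ θ₀) y with ht
  have hδ := h.continuous.measurable
  have hy0 := hy.1
  have hyt : y ≤ t := le_max_right _ _
  have ht0 : 0 < t := hy0.trans_le hyt
  have hd := h.d_lt
  have hK := h.K_pos
  have hd1 : 0 < 1 - d := by linarith
  have hd2 : 0 < 2 - d := by linarith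
  calc _ ≤ ∫⁻ θ in period θ₀, (ENNReal.ofReal (2 * A) *
            ENNReal.ofReal ((y + |θ - θ₀|) ^ (-(1 + 1 / 4) : ℝ)) +
          ENNReal.ofReal (9 * A * t ^ (3 / 4 : ℝ)) * (ENNReal.ofReal (log (t / δ θ)) *
            ENNReal.ofReal ((t + |θ - θ₀|) ^ (-2 : ℝ)))) := by
        refine lintegral_mono_ae (ae_restrict_of_ae ?_)
        filter_upwards [h.ae_pos] with θ hθ
        have h1 := ENNReal.ofReal_le_ofReal (osc_pointwise h hω hy hA0 hA hθ)
        refine h1.trans (le_of_eq ?_)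
        have h2 : ENNReal.ofReal (log (t / δ θ)) = ENNReal.ofReal (max (log (t / δ θ)) 0) := by
          simp [ENNReal.ofReal_max]
        rw [h2, ← ENNReal.ofReal_mul (by positivity), ← ENNReal.ofReal_mul (by positivity),
          ← ENNReal.ofReal_mul (by positivity), ← ENNReal.ofReal_add (by positivity)
            (by positivity)]
    _ ≤ ENNReal.ofReal (2 * A) * ENNReal.ofReal (2 * ((1 + 1 / 4) / (1 / 4)) * y ^ (-(1 / 4) : ℝ)) +
          ENNReal.ofReal (9 * A * t ^ (3 / 4 : ℝ)) *
            ENNReal.ofReal (K / (1 - d) * (2 / (2 - d)) / t) := by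
        rw [lintegral_add_left (by fun_prop), lintegral_const_mul _ (by fun_prop),
          lintegral_const_mul _ (by fun_prop)]
        gcongr
        · exact lintegral_kernel_volume (by norm_num) hy0 _
        · exact h.lintegral_log_kernel_le ht0
    _ ≤ _ := by
        rw [← ENNReal.ofReal_mul (by positivity), ← ENNReal.ofReal_mul (by positivity),
          ← ENNReal.ofReal_add (by positivity) (by positivity)]
        refine ENNReal.ofReal_le_ofReal ?_
        have h3 : t ^ (3 / 4 : ℝ) = t ^ (-(1 / 4) : ℝ) * t := by
          conv_rhs => rw [← Real.rpow_add_one ht0.ne']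
          norm_num
        have h4 := rpow_le_rpow_of_nonpos hy0 hyt (by norm_num : -(1 / 4 : ℝ) ≤ 0)
        have h5 : 9 * A * t ^ (3 / 4 : ℝ) * (K / (1 - d) * (2 / (2 - d)) / t) =
            9 * (K / (1 - d) * (2 / (2 - d))) * A * t ^ (-(1 / 4) : ℝ) := by
          rw [h3]; field_simp
        rw [h5]
        have h6 : 9 * (K / (1 - d) * (2 / (2 - d))) * A * t ^ (-(1 / 4) : ℝ) ≤
          9 * (K / (1 - d) * (2 / (2 - d))) * A * y ^ (-(1 / 4) : ℝ) := by gcongr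
        refine (add_le_add_right h6 _).trans (le_of_eq ?_)
        unfold oscConst; ring

lemma pos_lintegral (h : DistReg δ d K) (hω : RegW ω) {θ₀ y : ℝ} (hy : y ∈ Ioc (0 : ℝ) 1) :
    ∫⁻ θ in period θ₀, ENNReal.ofReal (y * (y + |θ - θ₀|) ^ (-2 : ℝ) *
      (log (ω (δ θ)) - log (ω (max (δ θ₀) y)))) ≤ ENNReal.ofReal 14 := by
  have hpi := Real.pi_gt_three
  set t := max (δ θ₀) y with ht
  have hy0 := hy.1
  have hyt : y ≤ t := le_max_right _ _
  have ht0 : 0 < t := hy0.trans_le hyt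
  have ht2 : t ≤ 2 := max_le (h.le_two _) (by linarith [hy.2])
  have hωt := hω.pos t ⟨ht0, by linarith⟩
  calc _ ≤ ∫⁻ θ in period θ₀, ENNReal.ofReal (4 / 3 * y ^ (1 / 4 : ℝ)) *
            ENNReal.ofReal ((y + |θ - θ₀|) ^ (-(1 + 1 / 4) : ℝ)) := by
        refine lintegral_mono_ae (ae_restrict_of_ae ?_)
        filter_upwards [h.ae_pos] with θ hθ
        rw [← ENNReal.ofReal_mul (by positivity)]
        refine ENNReal.ofReal_le_ofReal ?_
        set x := |θ - θ₀| with hx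
        have hx0 : 0 ≤ x := abs_nonneg _
        have hyx : 0 < y + x := by positivity
        have h2θ := h.le_two θ
        have hωθ := hω.pos (δ θ) ⟨hθ, by linarith⟩
        have hl : δ θ ≤ t + x := (h.lip θ θ₀).trans (by gcongr; exact le_max_left _ _)
        have hlog : log (ω (δ θ)) - log (ω t) ≤ 4 / 3 * ((y + x) / y) ^ (3 / 4 : ℝ) := by
          rcases le_or_gt (δ θ) t with hc | hc
          · have := log_le_log hωθ (hω.mono hθ hc (by linarith))
            have : 0 ≤ 4 / 3 * ((y + x) / y) ^ (3 / 4 : ℝ) := by positivity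
            linarith
          · rw [← log_div hωθ.ne' hωt.ne']
            have h1 : ω (δ θ) / ω t ≤ (y + x) / y := by
              have h2 := hω.le_mul_div ht0 hc.le (by linarith)
              have h3 : δ θ / t ≤ (y + x) / y := by
                rw [div_le_div_iff₀ ht0 hy0]
                nlinarith
              rw [div_le_iff₀ hωt]
              refine h2.trans ?_
              rw [mul_comm]; gcongr
            refine (log_le_log (by positivity) h1).trans ?_
            refine (Real.log_le_rpow_div (ε := 3 / 4) (by positivity) (by norm_num)).trans ?_
            exact le_of_eq (by ring)
        calc y * (y + x) ^ (-2 : ℝ) * (log (ω (δ θ)) - log (ω t))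
            ≤ y * (y + x) ^ (-2 : ℝ) * (4 / 3 * ((y + x) / y) ^ (3 / 4 : ℝ)) := by gcongr
          _ = 4 / 3 * (y / y ^ (3 / 4 : ℝ)) * ((y + x) ^ (-2 : ℝ) * (y + x) ^ (3 / 4 : ℝ)) := by
            rw [Real.div_rpow hyx.le hy0.le]; ring
          _ = _ := by
            rw [← Real.rpow_add hyx]
            have : y / y ^ (3 / 4 : ℝ) = y ^ (1 / 4 : ℝ) := by
              conv_lhs => rw [← Real.rpow_one y, ← Real.rpow_mul hy0.le, ← Real.rpow_sub hy0]
              norm_num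
            rw [this]; norm_num
    _ ≤ ENNReal.ofReal (4 / 3 * y ^ (1 / 4 : ℝ)) *
          ENNReal.ofReal (2 * ((1 + 1 / 4) / (1 / 4)) * y ^ (-(1 / 4) : ℝ)) := by
        rw [lintegral_const_mul _ (by fun_prop)]
        gcongr
        exact lintegral_kernel_volume (by norm_num) hy0 _
    _ ≤ _ := by
        rw [← ENNReal.ofReal_mul (by positivity)]
        refine ENNReal.ofReal_le_ofReal ?_
        have : y ^ (1 / 4 : ℝ) * y ^ (-(1 / 4) : ℝ) = 1 := by
          rw [← Real.rpow_add hy0]; norm_num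
        nlinarith

lemma DistReg.integrable_log_rpow (h : DistReg δ d K) (α : ℝ) :
    IntegrableOn (fun θ => log (δ θ ^ α)) (Ioc 0 (2 * π)) := by
  have hpi := Real.pi_pos
  have hδ := h.continuous.measurable
  have h1 : IntegrableOn (fun θ => log (2 / δ θ)) (Ioc 0 (2 * π)) := by
    refine ⟨(by fun_prop : Measurable fun θ => log (2 / δ θ)).aestronglyMeasurable, ?_⟩
    rw [hasFiniteIntegral_iff_norm]
    refine lt_of_le_of_lt (b := ∫⁻ θ in {θ | |θ - π| < 2 * π}, ENNReal.ofReal (log (2 / δ θ))) ?_ ?_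
    · refine (lintegral_mono_ae (ae_restrict_of_ae ?_)).trans (lintegral_mono_set ?_)
      · filter_upwards [h.ae_pos] with θ hθ
        refine ENNReal.ofReal_le_ofReal (le_of_eq ?_)
        rw [Real.norm_of_nonneg]
        exact log_nonneg (by rw [one_le_div hθ]; exact h.le_two θ)
      · intro θ hθ
        simp only [mem_ofPred_eq, abs_lt]
        constructor <;> linarith [hθ.1, hθ.2]
    · exact lt_of_le_of_lt (h.lintegral_log_le (by positivity) le_rfl two_pos)
        ENNReal.ofReal_lt_top
  have h2 : IntegrableOn (fun θ => α * (log 2 - log (2 / δ θ))) (Ioc 0 (2 * π)) :=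
    ((integrableOn_const (by simp [ENNReal.mul_eq_top])).sub h1).const_mul α
  refine h2.congr (ae_restrict_of_ae ?_)
  filter_upwards [h.ae_pos] with θ hθ
  rw [log_div two_ne_zero hθ.ne', Real.log_rpow hθ]
  ring

end kernel

lemma setLIntegral_period_eq {F : ℝ → ENNReal} (hF : ∀ θ, F (θ + 2 * π) = F θ) (a b : ℝ) :
    ∫⁻ θ in Ioc a (a + 2 * π), F θ = ∫⁻ θ in Ioc b (b + 2 * π), F θ := by
  have : VAddInvariantMeasure (AddSubgroup.zmultiples (2 * π)) ℝ volume :=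
    ⟨fun c s _ => measure_preimage_add _ _ _⟩
  exact (isAddFundamentalDomain_Ioc Real.two_pi_pos a).setLIntegral_eq
    (isAddFundamentalDomain_Ioc Real.two_pi_pos b) F
    (Function.Periodic.map_vadd_zmultiples (f := F) hF)

lemma setLIntegral_period {F : ℝ → ENNReal} (hF : ∀ θ, F (θ + 2 * π) = F θ) (θ₀ : ℝ) :
    ∫⁻ θ in Ioc 0 (2 * π), F θ = ∫⁻ θ in period θ₀, F θ := by
  have := setLIntegral_period_eq hF 0 (θ₀ - π)
  rw [zero_add] at this
  rw [this, period]
  congr 3; ring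

lemma cpt_sub_norm_ge (θ : ℝ) (z : ℂ) : 1 - ‖z‖ ≤ ‖cpt θ - z‖ := by
  have := norm_sub_norm_le (cpt θ) z
  rwa [norm_cpt] at this

lemma cpt_sub_ne {z : ℂ} (hz : ‖z‖ < 1) (θ : ℝ) : cpt θ - z ≠ 0 := by
  have := cpt_sub_norm_ge θ z
  exact norm_pos_iff.1 (by linarith)

lemma continuous_herglotz_kernel {z : ℂ} (hz : ‖z‖ < 1) :
    Continuous fun θ => (cpt θ + z) / (cpt θ - z) :=
  (continuous_cpt.add continuous_const).div (continuous_cpt.sub continuous_const) (cpt_sub_ne hz)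

lemma continuous_herglotz_deriv_kernel {z : ℂ} (hz : ‖z‖ < 1) :
    Continuous fun θ => 2 * cpt θ / (cpt θ - z) ^ 2 :=
  (continuous_const.mul continuous_cpt).div ((continuous_cpt.sub continuous_const).pow 2)
    fun θ => pow_ne_zero _ (cpt_sub_ne hz θ)

lemma norm_herglotz_deriv_kernel_le {z : ℂ} {r : ℝ} (hz : ‖z‖ ≤ r) (hr : r < 1) (θ : ℝ) :
    ‖2 * cpt θ / (cpt θ - z) ^ 2‖ ≤ 2 / (1 - r) ^ 2 := by
  rw [norm_div, norm_mul, norm_cpt, norm_pow]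
  have h1 := cpt_sub_norm_ge θ z
  have h2 : 0 < 1 - r := by linarith
  have h3 : 1 - r ≤ ‖cpt θ - z‖ := by linarith
  simp only [Complex.norm_ofNat, mul_one]
  gcongr

lemma norm_herglotz_kernel_le {z : ℂ} (hz : ‖z‖ < 1) (θ : ℝ) :
    ‖(cpt θ + z) / (cpt θ - z)‖ ≤ 2 / (1 - ‖z‖) := by
  rw [norm_div]
  have h1 := cpt_sub_norm_ge θ z
  have h2 : 0 < 1 - ‖z‖ := by linarith
  have h3 : ‖cpt θ + z‖ ≤ 2 := (norm_add_le _ _).trans (by rw [norm_cpt]; linarith)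
  gcongr

/-- The Herglotz integral of a boundary function. -/
noncomputable def herglotz (φ : ℝ → ℝ) (z : ℂ) : ℂ :=
  ∫ θ in Ioc 0 (2 * π), ((cpt θ + z) / (cpt θ - z)) * ((φ θ : ℝ) : ℂ)

/-- The outer function with boundary log-modulus `φ`. -/
noncomputable def outer (φ : ℝ → ℝ) (z : ℂ) : ℂ :=
  Complex.exp ((((2 * π)⁻¹ : ℝ) : ℂ) * herglotz φ z)

/-- The derivative of the Herglotz integral. -/
noncomputable def herglotz' (φ : ℝ → ℝ) (z : ℂ) : ℂ :=
  ∫ θ in Ioc 0 (2 * π), (2 * cpt θ / (cpt θ - z) ^ 2) * ((φ θ : ℝ) : ℂ)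

section
variable {φ : ℝ → ℝ}

lemma integrable_herglotz (hφ : IntegrableOn φ (Ioc 0 (2 * π))) {z : ℂ} (hz : ‖z‖ < 1) :
    IntegrableOn (fun θ => ((cpt θ + z) / (cpt θ - z)) * ((φ θ : ℝ) : ℂ)) (Ioc 0 (2 * π)) :=
  Integrable.bdd_mul (c := 2 / (1 - ‖z‖)) hφ.ofReal
    (continuous_herglotz_kernel hz).aestronglyMeasurable
    (Filter.Eventually.of_forall fun θ => norm_herglotz_kernel_le hz θ)

lemma integrable_herglotz' (hφ : IntegrableOn φ (Ioc 0 (2 * π))) {z : ℂ} (hz : ‖z‖ < 1) :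
    IntegrableOn (fun θ => (2 * cpt θ / (cpt θ - z) ^ 2) * ((φ θ : ℝ) : ℂ)) (Ioc 0 (2 * π)) :=
  Integrable.bdd_mul (c := 2 / (1 - ‖z‖) ^ 2) hφ.ofReal
    (continuous_herglotz_deriv_kernel hz).aestronglyMeasurable
    (Filter.Eventually.of_forall fun θ => norm_herglotz_deriv_kernel_le le_rfl hz θ)

lemma hasDerivAt_herglotz (hφ : IntegrableOn φ (Ioc 0 (2 * π))) {z : ℂ} (hz : ‖z‖ < 1) :
    HasDerivAt (herglotz φ) (herglotz' φ z) z := by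
  obtain ⟨r, hzr, hr⟩ := exists_between hz
  have hs : Metric.ball (0 : ℂ) r ∈ nhds z := Metric.isOpen_ball.mem_nhds (by simpa using hzr)
  refine (hasDerivAt_integral_of_dominated_loc_of_deriv_le (s := Metric.ball (0 : ℂ) r)
    (F := fun z θ => ((cpt θ + z) / (cpt θ - z)) * ((φ θ : ℝ) : ℂ))
    (F' := fun z θ => (2 * cpt θ / (cpt θ - z) ^ 2) * ((φ θ : ℝ) : ℂ))
    (bound := fun θ => 2 / (1 - r) ^ 2 * ‖φ θ‖) hs ?_ (integrable_herglotz hφ hz)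
    (integrable_herglotz' hφ hz).aestronglyMeasurable ?_ (hφ.norm.const_mul _) ?_).2
  · filter_upwards [hs] with w hw
    exact (integrable_herglotz hφ ((by simpa using hw : ‖w‖ < r).trans hr)).aestronglyMeasurable
  · refine Filter.Eventually.of_forall fun θ w hw => ?_
    rw [norm_mul, Complex.norm_real]
    gcongr
    exact norm_herglotz_deriv_kernel_le (by simpa using hw : ‖w‖ < r).le hr θ
  · refine Filter.Eventually.of_forall fun θ w hw => ?_
    have hw' : cpt θ - w ≠ 0 := cpt_sub_ne ((by simpa using hw : ‖w‖ < r).trans hr) θ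
    have h1 : HasDerivAt (fun w => (cpt θ + w) / (cpt θ - w))
        ((1 * (cpt θ - w) - (cpt θ + w) * (-1)) / (cpt θ - w) ^ 2) w :=
      ((hasDerivAt_id w).const_add _).div ((hasDerivAt_id w).const_sub _) hw'
    refine (h1.mul_const ((φ θ : ℝ) : ℂ)).congr_deriv ?_
    congr 2; ring

lemma circleIntegral_eq (f : ℂ → ℂ) :
    circleIntegral f 0 1 = ∫ θ in Ioc 0 (2 * π), cpt θ * Complex.I * f (cpt θ) := by
  rw [circleIntegral, intervalIntegral.integral_of_le Real.two_pi_pos.le]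
  simp [circleMap, cpt]

lemma herglotz'_const (c : ℝ) (z : ℂ) : herglotz' (fun _ => c) z = 0 := by
  have h := circleIntegral.integral_sub_zpow_of_ne (n := -2) (by norm_num) 0 z 1
  rw [circleIntegral_eq] at h
  unfold herglotz'
  rw [integral_mul_const]
  have h2 : ∀ θ, 2 * cpt θ / (cpt θ - z) ^ 2 =
      (2 / Complex.I) * (cpt θ * Complex.I * (cpt θ - z) ^ (-2 : ℤ)) := by
    intro θ
    rw [zpow_neg]
    have : Complex.I ≠ 0 := Complex.I_ne_zero
    field_simp
  simp_rw [h2]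
  rw [integral_const_mul, h]
  simp

lemma herglotz_const (c : ℝ) {z : ℂ} (hz : ‖z‖ < 1) :
    herglotz (fun _ => c) z = ((2 * π * c : ℝ) : ℂ) := by
  have h := circleIntegral.integral_sub_inv_of_mem_ball (c := 0) (w := z) (R := 1) (by simpa using hz)
  rw [circleIntegral_eq] at h
  unfold herglotz
  rw [integral_mul_const]
  have h2 : ∀ θ, (cpt θ + z) / (cpt θ - z) =
      (2 / Complex.I) * (cpt θ * Complex.I * (cpt θ - z)⁻¹) - 1 := by
    intro θ
    have : Complex.I ≠ 0 := Complex.I_ne_zero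
    have := cpt_sub_ne hz θ
    field_simp
    ring
  have hc : Continuous fun θ => cpt θ * Complex.I * (cpt θ - z)⁻¹ :=
    (continuous_cpt.mul continuous_const).mul
      ((continuous_cpt.sub continuous_const).inv₀ (cpt_sub_ne hz))
  have hi : IntegrableOn (fun θ => cpt θ * Complex.I * (cpt θ - z)⁻¹) (Ioc 0 (2 * π)) :=
    (hc.continuousOn.integrableOn_Icc).mono_set Ioc_subset_Icc_self
  simp_rw [h2]
  rw [integral_sub (hi.const_mul _) (integrableOn_const (by simp [ENNReal.mul_eq_top])),
    integral_const_mul, h]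
  have : Complex.I ≠ 0 := Complex.I_ne_zero
  simp only [integral_const, MeasurableSet.univ, measureReal_restrict_apply, univ_inter,
    Real.volume_real_Ioc]
  rw [max_eq_left (by have := Real.pi_pos; linarith)]
  simp only [Complex.real_smul]
  push_cast
  field_simp
  ring

lemma herglotz_sub_const (hφ : IntegrableOn φ (Ioc 0 (2 * π))) (c : ℝ) {z : ℂ} (hz : ‖z‖ < 1) :
    herglotz φ z = herglotz (fun θ => φ θ - c) z + ((2 * π * c : ℝ) : ℂ) := by
  rw [← herglotz_const c hz]
  unfold herglotz
  rw [← integral_add]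
  · refine integral_congr_ae (Filter.Eventually.of_forall fun θ => ?_)
    push_cast; ring
  · exact integrable_herglotz (φ := fun θ => φ θ - c)
      (hφ.sub (integrableOn_const (by simp [ENNReal.mul_eq_top]))) hz
  · exact integrable_herglotz (φ := fun _ => c) (integrableOn_const (by simp [ENNReal.mul_eq_top])) hz

lemma herglotz'_sub_const (hφ : IntegrableOn φ (Ioc 0 (2 * π))) (c : ℝ) {z : ℂ} (hz : ‖z‖ < 1) :
    herglotz' φ z = herglotz' (fun θ => φ θ - c) z := by
  rw [← add_zero (herglotz' (fun θ => φ θ - c) z), ← herglotz'_const c z]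
  unfold herglotz'
  rw [← integral_add]
  · refine integral_congr_ae (Filter.Eventually.of_forall fun θ => ?_)
    push_cast; ring
  · exact integrable_herglotz' (φ := fun θ => φ θ - c)
      (hφ.sub (integrableOn_const (by simp [ENNReal.mul_eq_top]))) hz
  · exact integrable_herglotz' (φ := fun _ => c) (integrableOn_const (by simp [ENNReal.mul_eq_top])) hz

lemma hasDerivAt_outer (hφ : IntegrableOn φ (Ioc 0 (2 * π))) {z : ℂ} (hz : ‖z‖ < 1) :
    HasDerivAt (outer φ) (outer φ z * ((((2 * π)⁻¹ : ℝ) : ℂ) * herglotz' φ z)) z :=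
  ((hasDerivAt_herglotz hφ hz).const_mul _).cexp

lemma norm_outer (φ : ℝ → ℝ) (z : ℂ) :
    ‖outer φ z‖ = Real.exp ((2 * π)⁻¹ * (herglotz φ z).re) := by
  rw [outer, Complex.norm_exp, Complex.re_ofReal_mul]

/-- The Poisson kernel. -/
noncomputable def poisson (z : ℂ) (θ : ℝ) : ℝ := (1 - ‖z‖ ^ 2) / ‖cpt θ - z‖ ^ 2

lemma re_herglotz_kernel (z : ℂ) (θ : ℝ) : ((cpt θ + z) / (cpt θ - z)).re = poisson z θ := by
  rw [poisson, ← Complex.normSq_eq_norm_sq, ← Complex.normSq_eq_norm_sq,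
    Complex.div_re, ← add_div]
  have h1 : (1 : ℝ) = Complex.normSq (cpt θ) := by
    rw [Complex.normSq_eq_norm_sq, norm_cpt]; norm_num
  rw [h1]
  congr 1
  simp [Complex.normSq_apply]
  ring

lemma re_herglotz (hφ : IntegrableOn φ (Ioc 0 (2 * π))) {z : ℂ} (hz : ‖z‖ < 1) :
    IntegrableOn (fun θ => poisson z θ * φ θ) (Ioc 0 (2 * π)) ∧
    (herglotz φ z).re = ∫ θ in Ioc 0 (2 * π), poisson z θ * φ θ := by
  have h1 := integrable_herglotz hφ hz
  have h2 : ∀ θ, RCLike.re (((cpt θ + z) / (cpt θ - z)) * ((φ θ : ℝ) : ℂ)) = poisson z θ * φ θ := by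
    intro θ
    rw [← re_herglotz_kernel]
    simp
  constructor
  · have := h1.re
    simp_rw [h2] at this
    exact this
  · have := integral_re h1
    simp_rw [h2] at this
    exact this.symm

end

section
variable {θ₀ y : ℝ}

lemma norm_polar (hy : y ≤ 1) (θ₀ : ℝ) : ‖((1 - y : ℝ) : ℂ) * cpt θ₀‖ = 1 - y := by
  rw [norm_mul, norm_cpt, Complex.norm_real, mul_one, Real.norm_of_nonneg (by linarith)]

lemma polar_norm_lt (hy : y ∈ Ioc (0 : ℝ) 1) (θ₀ : ℝ) : ‖((1 - y : ℝ) : ℂ) * cpt θ₀‖ < 1 := by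
  rw [norm_polar hy.2]; linarith [hy.1]

lemma cpt_sub_polar_ge (hy : y ∈ Ioc (0 : ℝ) 1) {θ : ℝ} (h : |θ - θ₀| ≤ π) :
    (y + |θ - θ₀|) / 6 ≤ ‖cpt θ - ((1 - y : ℝ) : ℂ) * cpt θ₀‖ := by
  set z := ((1 - y : ℝ) : ℂ) * cpt θ₀ with hz
  have h1 : y ≤ ‖cpt θ - z‖ := by
    have := cpt_sub_norm_ge θ z
    rw [hz, norm_polar hy.2] at this
    linarith
  have h2 := le_norm_cpt_sub h
  have h3 : ‖cpt θ - cpt θ₀‖ ≤ ‖cpt θ - z‖ + y := by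
    have h4 : cpt θ - cpt θ₀ = (cpt θ - z) - (y : ℂ) * cpt θ₀ := by
      rw [hz]; push_cast; ring
    rw [h4]
    refine (norm_sub_le _ _).trans ?_
    rw [norm_mul, norm_cpt, Complex.norm_real, mul_one, Real.norm_of_nonneg hy.1.le]
  have hpi := Real.pi_gt_three
  have hpi' := Real.pi_lt_four
  have h5 : 2 / 4 * |θ - θ₀| ≤ 2 / π * |θ - θ₀| := by gcongr
  have := norm_nonneg (cpt θ - z)
  linarith

lemma inv_sq_le (hy : y ∈ Ioc (0 : ℝ) 1) {θ : ℝ} (h : |θ - θ₀| ≤ π) :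
    (‖cpt θ - ((1 - y : ℝ) : ℂ) * cpt θ₀‖ ^ 2)⁻¹ ≤ 36 * (y + |θ - θ₀|) ^ (-2 : ℝ) := by
  have h1 := cpt_sub_polar_ge hy h
  have h2 : 0 < y + |θ - θ₀| := by have := hy.1; positivity
  rw [Real.rpow_neg h2.le, Real.rpow_two]
  calc _ ≤ (((y + |θ - θ₀|) / 6) ^ 2)⁻¹ := by gcongr
    _ = _ := by rw [div_pow, inv_div]; ring

lemma poisson_nonneg (hy : y ∈ Ioc (0 : ℝ) 1) (θ : ℝ) :
    0 ≤ poisson (((1 - y : ℝ) : ℂ) * cpt θ₀) θ := by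
  unfold poisson
  rw [norm_polar hy.2]
  have : 0 ≤ 1 - (1 - y) ^ 2 := by nlinarith [hy.1, hy.2]
  positivity

lemma poisson_le (hy : y ∈ Ioc (0 : ℝ) 1) {θ : ℝ} (h : |θ - θ₀| ≤ π) :
    poisson (((1 - y : ℝ) : ℂ) * cpt θ₀) θ ≤ 72 * (y * (y + |θ - θ₀|) ^ (-2 : ℝ)) := by
  unfold poisson
  rw [norm_polar hy.2, div_eq_mul_inv]
  have h0 := hy.1
  have h1 : 1 - (1 - y) ^ 2 ≤ 2 * y := by nlinarith
  calc _ ≤ 2 * y * (36 * (y + |θ - θ₀|) ^ (-2 : ℝ)) := by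
        gcongr
        exact inv_sq_le hy h
    _ = _ := by ring

end

section
variable {δ ω : ℝ → ℝ} {d K θ₀ y : ℝ}

lemma norm_outer_le (h : DistReg δ d K) (hω : RegW ω)
    (hφ : IntegrableOn (fun θ => log (ω (δ θ))) (Ioc 0 (2 * π))) (hy : y ∈ Ioc (0 : ℝ) 1) :
    ‖outer (fun θ => log (ω (δ θ))) (((1 - y : ℝ) : ℂ) * cpt θ₀)‖ ≤
      Real.exp 336 * ω (max (δ θ₀) y) := by
  have hpi := Real.pi_gt_three
  set t := max (δ θ₀) y with ht
  set z := ((1 - y : ℝ) : ℂ) * cpt θ₀ with hz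
  have hz1 : ‖z‖ < 1 := polar_norm_lt hy θ₀
  have ht0 : 0 < t := hy.1.trans_le (le_max_right _ _)
  have ht2 : t ≤ 2 := max_le (h.le_two _) (by linarith [hy.2])
  have hωt := hω.pos t ⟨ht0, by linarith⟩
  have hφ' : IntegrableOn (fun θ => log (ω (δ θ)) - log (ω t)) (Ioc 0 (2 * π)) :=
    hφ.sub (integrableOn_const (by simp [ENNReal.mul_eq_top]))
  obtain ⟨h1, h2⟩ := re_herglotz hφ' hz1
  have h3 : (∫ θ in Ioc 0 (2 * π), poisson z θ * (log (ω (δ θ)) - log (ω t))) ≤ 72 * 14 := by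
    rw [integral_eq_lintegral_pos_part_sub_lintegral_neg_part h1]
    have h4 : ∫⁻ θ in Ioc 0 (2 * π), ENNReal.ofReal (poisson z θ * (log (ω (δ θ)) - log (ω t))) ≤
        ENNReal.ofReal (72 * 14) := by
      rw [setLIntegral_period (θ₀ := θ₀) (fun θ => by
        rw [h.periodic, poisson, cpt_periodic, ← poisson])]
      calc _ ≤ ∫⁻ θ in period θ₀, ENNReal.ofReal 72 * ENNReal.ofReal
              (y * (y + |θ - θ₀|) ^ (-2 : ℝ) * (log (ω (δ θ)) - log (ω t))) := by
            refine setLIntegral_mono' measurableSet_Ioc fun θ hθ => ?_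
            have hθ' := abs_sub_le_of_mem_period hθ
            rcases le_or_gt (log (ω (δ θ)) - log (ω t)) 0 with h5 | h5
            · rw [ENNReal.ofReal_of_nonpos (mul_nonpos_of_nonneg_of_nonpos
                (poisson_nonneg hy θ) h5)]
              exact zero_le
            · rw [← ENNReal.ofReal_mul (by norm_num), ← mul_assoc]
              refine ENNReal.ofReal_le_ofReal ?_
              have := poisson_le hy hθ'
              gcongr
        _ ≤ ENNReal.ofReal 72 * ENNReal.ofReal 14 := by
            rw [lintegral_const_mul' _ _ ENNReal.ofReal_ne_top]
            gcongr
            exact pos_lintegral h hω hy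
        _ = _ := by rw [← ENNReal.ofReal_mul (by norm_num)]
    have h5 := ENNReal.toReal_mono ENNReal.ofReal_ne_top h4
    rw [ENNReal.toReal_ofReal (by norm_num)] at h5
    have := ENNReal.toReal_nonneg (a := ∫⁻ θ in Ioc 0 (2 * π),
      ENNReal.ofReal (-(poisson z θ * (log (ω (δ θ)) - log (ω t)))))
    linarith
  rw [norm_outer, herglotz_sub_const hφ (log (ω t)) hz1, Complex.add_re, h2, Complex.ofReal_re,
    mul_add, Real.exp_add]
  have h6 : (2 * π)⁻¹ * (2 * π * log (ω t)) = log (ω t) := by field_simp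
  rw [h6, Real.exp_log hωt]
  gcongr
  have h7 : (2 * π)⁻¹ ≤ 1 / 3 := by
    rw [one_div]; gcongr; linarith
  have h8 : 0 < (2 * π)⁻¹ := by positivity
  nlinarith

lemma norm_deriv_outer_le (h : DistReg δ d K) (hω : RegW ω)
    (hφ : IntegrableOn (fun θ => log (ω (δ θ))) (Ioc 0 (2 * π))) {A : ℝ} (hy : y ∈ Ioc (0 : ℝ) 1)
    (hA0 : 0 ≤ A)
    (hA : ∀ u ∈ Icc (max (δ θ₀) y) 2, deriv ω u ≤ A * u ^ (-(1 / 4) : ℝ)) :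
    ‖deriv (outer (fun θ => log (ω (δ θ)))) (((1 - y : ℝ) : ℂ) * cpt θ₀)‖ ≤
      Real.exp 336 * 12 * oscConst d K * A * y ^ (-(1 / 4) : ℝ) := by
  have hpi := Real.pi_gt_three
  set t := max (δ θ₀) y with ht
  set z := ((1 - y : ℝ) : ℂ) * cpt θ₀ with hz
  have hz1 : ‖z‖ < 1 := polar_norm_lt hy θ₀
  have ht0 : 0 < t := hy.1.trans_le (le_max_right _ _)
  have ht2 : t ≤ 2 := max_le (h.le_two _) (by linarith [hy.2])
  have hωt := hω.pos t ⟨ht0, by linarith⟩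
  have hC := oscConst_pos h
  have hy0 := hy.1
  have key : ω t * ‖herglotz' (fun θ => log (ω (δ θ)) - log (ω t)) z‖ ≤
      72 * (oscConst d K * A * y ^ (-(1 / 4) : ℝ)) := by
    rw [← ENNReal.ofReal_le_ofReal_iff (by positivity), ENNReal.ofReal_mul hωt.le,
      ofReal_norm]
    calc _ ≤ ENNReal.ofReal (ω t) * ∫⁻ θ in Ioc 0 (2 * π), ‖(2 * cpt θ / (cpt θ - z) ^ 2) *
            ((log (ω (δ θ)) - log (ω t) : ℝ) : ℂ)‖ₑ := by
          gcongr
          exact enorm_integral_le_lintegral_enorm _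
      _ = ∫⁻ θ in Ioc 0 (2 * π), ENNReal.ofReal (ω t) * ‖(2 * cpt θ / (cpt θ - z) ^ 2) *
            ((log (ω (δ θ)) - log (ω t) : ℝ) : ℂ)‖ₑ := by
          rw [lintegral_const_mul' _ _ ENNReal.ofReal_ne_top]
      _ = ∫⁻ θ in period θ₀, ENNReal.ofReal (ω t) * ‖(2 * cpt θ / (cpt θ - z) ^ 2) *
            ((log (ω (δ θ)) - log (ω t) : ℝ) : ℂ)‖ₑ := by
          rw [setLIntegral_period (θ₀ := θ₀) (fun θ => by rw [h.periodic, cpt_periodic])]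
      _ ≤ ∫⁻ θ in period θ₀, ENNReal.ofReal 72 * ENNReal.ofReal (ω t *
            |log (ω (δ θ)) - log (ω t)| * (y + |θ - θ₀|) ^ (-2 : ℝ)) := by
          refine setLIntegral_mono' measurableSet_Ioc fun θ hθ => ?_
          have hθ' := abs_sub_le_of_mem_period hθ
          rw [← ofReal_norm, ← ENNReal.ofReal_mul hωt.le,
            ← ENNReal.ofReal_mul (by norm_num)]
          refine ENNReal.ofReal_le_ofReal ?_
          rw [norm_mul, norm_div, norm_mul, norm_cpt, norm_pow, Complex.norm_real,
            Complex.norm_ofNat, mul_one, Real.norm_eq_abs, div_eq_mul_inv]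
          have := inv_sq_le hy hθ'
          calc _ ≤ ω t * (2 * (36 * (y + |θ - θ₀|) ^ (-2 : ℝ)) *
                  |log (ω (δ θ)) - log (ω t)|) := by gcongr
            _ = _ := by ring
      _ ≤ ENNReal.ofReal 72 * ENNReal.ofReal (oscConst d K * A * y ^ (-(1 / 4) : ℝ)) := by
          rw [lintegral_const_mul' _ _ ENNReal.ofReal_ne_top]
          gcongr
          exact osc_lintegral h hω hy hA0 hA
      _ = _ := by rw [← ENNReal.ofReal_mul (by norm_num)]
  rw [(hasDerivAt_outer hφ hz1).deriv, herglotz'_sub_const hφ (log (ω t)) hz1, norm_mul, norm_mul,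
    Complex.norm_real, Real.norm_of_nonneg (by positivity)]
  have h1 := norm_outer_le (θ₀ := θ₀) h hω hφ hy
  rw [← hz, ← ht] at h1
  set H := ‖herglotz' (fun θ => log (ω (δ θ)) - log (ω t)) z‖ with hH
  have hH0 : 0 ≤ H := norm_nonneg _
  calc _ ≤ Real.exp 336 * ω t * ((2 * π)⁻¹ * H) := by gcongr
    _ = Real.exp 336 * (2 * π)⁻¹ * (ω t * H) := by ring
    _ ≤ Real.exp 336 * (2 * 3)⁻¹ * (72 * (oscConst d K * A * y ^ (-(1 / 4) : ℝ))) := by gcongr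
    _ = _ := by ring

lemma tendsto_norm_outer (h : DistReg δ d K) (hω : RegW ω)
    (hφ : IntegrableOn (fun θ => log (ω (δ θ))) (Ioc 0 (2 * π))) (hδ : 0 < δ θ₀) :
    Filter.Tendsto (fun y : ℝ => ‖outer (fun θ => log (ω (δ θ))) (((1 - y : ℝ) : ℂ) * cpt θ₀)‖)
      (nhdsWithin 0 (Ioi 0)) (nhds (ω (δ θ₀))) := by
  have hpi := Real.pi_gt_three
  set t := δ θ₀ with ht
  have ht2 : t ≤ 2 := h.le_two _
  have hωt := hω.pos t ⟨hδ, by linarith⟩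
  have hC := oscConst_pos h
  set A := tailRoot ω t with hAdef
  have hA0 : 0 ≤ A := tailRoot_nonneg _ _
  have bound : ∀ y ∈ Ioc 0 (min 1 t), |(2 * π)⁻¹ *
      (herglotz (fun θ => log (ω (δ θ))) (((1 - y : ℝ) : ℂ) * cpt θ₀)).re - log (ω t)| ≤
      72 * (oscConst d K * A / ω t) * y ^ (3 / 4 : ℝ) := by
    intro y hy'
    have hy : y ∈ Ioc (0 : ℝ) 1 := ⟨hy'.1, hy'.2.trans (min_le_left _ _)⟩
    have hy0 := hy.1
    have hyt : max (δ θ₀) y = t := max_eq_left (hy'.2.trans (min_le_right _ _))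
    set z := ((1 - y : ℝ) : ℂ) * cpt θ₀ with hz
    have hz1 : ‖z‖ < 1 := polar_norm_lt hy θ₀
    have hφ' : IntegrableOn (fun θ => log (ω (δ θ)) - log (ω t)) (Ioc 0 (2 * π)) :=
      hφ.sub (integrableOn_const (by simp [ENNReal.mul_eq_top]))
    obtain ⟨-, h2⟩ := re_herglotz hφ' hz1
    rw [herglotz_sub_const hφ (log (ω t)) hz1, Complex.add_re, h2, Complex.ofReal_re]
    have h6 : ∀ I : ℝ, (2 * π)⁻¹ * (I + 2 * π * log (ω t)) - log (ω t) = (2 * π)⁻¹ * I := by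
      intro I; field_simp; ring
    rw [h6, abs_mul, abs_of_pos (by positivity : 0 < (2 * π)⁻¹)]
    set I := ∫ θ in Ioc 0 (2 * π), poisson z θ * (log (ω (δ θ)) - log (ω t)) with hI
    have key : ω t * |I| ≤ 72 * y * (oscConst d K * A * y ^ (-(1 / 4) : ℝ)) := by
      rw [← ENNReal.ofReal_le_ofReal_iff (by positivity), ENNReal.ofReal_mul hωt.le,
        ← Real.norm_eq_abs, ofReal_norm]
      calc _ ≤ ENNReal.ofReal (ω t) * ∫⁻ θ in Ioc 0 (2 * π),
              ‖poisson z θ * (log (ω (δ θ)) - log (ω t))‖ₑ := by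
            gcongr
            exact enorm_integral_le_lintegral_enorm _
        _ = ∫⁻ θ in Ioc 0 (2 * π), ENNReal.ofReal (ω t) *
              ‖poisson z θ * (log (ω (δ θ)) - log (ω t))‖ₑ := by
            rw [lintegral_const_mul' _ _ ENNReal.ofReal_ne_top]
        _ = ∫⁻ θ in period θ₀, ENNReal.ofReal (ω t) *
              ‖poisson z θ * (log (ω (δ θ)) - log (ω t))‖ₑ := by
            rw [setLIntegral_period (θ₀ := θ₀) (fun θ => by
              rw [h.periodic, poisson, cpt_periodic, ← poisson])]
        _ ≤ ∫⁻ θ in period θ₀, ENNReal.ofReal (72 * y) * ENNReal.ofReal (ω t *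
              |log (ω (δ θ)) - log (ω t)| * (y + |θ - θ₀|) ^ (-2 : ℝ)) := by
            refine setLIntegral_mono' measurableSet_Ioc fun θ hθ => ?_
            have hθ' := abs_sub_le_of_mem_period hθ
            rw [← ofReal_norm, ← ENNReal.ofReal_mul hωt.le,
              ← ENNReal.ofReal_mul (by positivity)]
            refine ENNReal.ofReal_le_ofReal ?_
            rw [norm_mul, Real.norm_of_nonneg (poisson_nonneg hy θ), Real.norm_eq_abs]
            have := poisson_le hy hθ'
            calc _ ≤ ω t * (72 * (y * (y + |θ - θ₀|) ^ (-2 : ℝ)) *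
                    |log (ω (δ θ)) - log (ω t)|) := by gcongr
              _ = _ := by ring
        _ ≤ ENNReal.ofReal (72 * y) * ENNReal.ofReal (oscConst d K * A * y ^ (-(1 / 4) : ℝ)) := by
            rw [lintegral_const_mul' _ _ ENNReal.ofReal_ne_top]
            gcongr
            have := osc_lintegral (θ₀ := θ₀) h hω hy hA0
              (by rw [hyt]; exact fun u hu => deriv_le_tailRoot hω hδ hu)
            rwa [hyt] at this
        _ = _ := by rw [← ENNReal.ofReal_mul (by positivity)]
    have h7 : y ^ (3 / 4 : ℝ) = y * y ^ (-(1 / 4) : ℝ) := by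
      rw [mul_comm]
      conv_rhs => rw [← Real.rpow_add_one hy0.ne']
      norm_num
    have h8 : (2 * π)⁻¹ ≤ 1 := inv_le_one_of_one_le₀ (by linarith)
    have h9 : |I| ≤ 72 * (oscConst d K * A / ω t) * y ^ (3 / 4 : ℝ) := by
      rw [h7]
      have : |I| ≤ 72 * y * (oscConst d K * A * y ^ (-(1 / 4) : ℝ)) / ω t := by
        rw [le_div_iff₀ hωt]; linarith
      refine this.trans (le_of_eq ?_)
      ring
    refine le_trans ?_ h9
    have := abs_nonneg I
    nlinarith
  have hmem : Ioc 0 (min 1 t) ∈ nhdsWithin (0 : ℝ) (Ioi 0) :=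
    Ioc_mem_nhdsGT (lt_min one_pos hδ)
  have hlim : Filter.Tendsto (fun y : ℝ => (2 * π)⁻¹ *
      (herglotz (fun θ => log (ω (δ θ))) (((1 - y : ℝ) : ℂ) * cpt θ₀)).re)
      (nhdsWithin 0 (Ioi 0)) (nhds (log (ω t))) := by
    rw [tendsto_iff_norm_sub_tendsto_zero]
    have h0 : Filter.Tendsto (fun y : ℝ => 72 * (oscConst d K * A / ω t) * y ^ (3 / 4 : ℝ))
        (nhdsWithin 0 (Ioi 0)) (nhds 0) := by
      have h1 : Filter.Tendsto (fun y : ℝ => y ^ (3 / 4 : ℝ)) (nhds 0) (nhds (0 ^ (3 / 4 : ℝ))) :=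
        (Real.continuousAt_rpow_const 0 _ (Or.inr (by norm_num))).tendsto
      rw [Real.zero_rpow (by norm_num)] at h1
      have := (h1.const_mul (72 * (oscConst d K * A / ω t))).mono_left
        (nhdsWithin_le_nhds (s := Ioi 0))
      simpa using this
    refine squeeze_zero' (Filter.Eventually.of_forall fun _ => norm_nonneg _) ?_ h0
    filter_upwards [hmem] with y hy
    exact bound y hy
  have := (Real.continuous_exp.tendsto _).comp hlim
  rw [Real.exp_log hωt] at this
  refine this.congr fun y => ?_
  rw [norm_outer]; rfl

end

lemma lintegral_ball_polar {F : ℂ → ENNReal} (hF : Measurable F) (R : ℝ) :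
    ∫⁻ z in Metric.ball (0 : ℂ) R, F z =
      ∫⁻ θ in Ioc 0 (2 * π), ∫⁻ r in Ioo 0 R, ENNReal.ofReal r * F ((r : ℂ) * cpt θ) := by
  have hcpt := continuous_cpt.measurable
  rw [setLIntegral_period (θ₀ := 0) (fun θ => by simp_rw [cpt_periodic]),
    ← lintegral_indicator measurableSet_ball, ← Complex.lintegral_comp_polarCoord_symm,
    polarCoord_target, Measure.volume_eq_prod, ← Measure.prod_restrict,
    lintegral_prod_symm' _ (by
      have : Measurable fun p : ℝ × ℝ => Complex.polarCoord.symm p := by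
        simp only [Complex.polarCoord_symm_apply]
        fun_prop
      exact (by fun_prop : Measurable fun p : ℝ × ℝ => ENNReal.ofReal p.1).mul
        ((hF.indicator measurableSet_ball).comp this)), period, zero_sub, zero_add,
    Measure.restrict_congr_set (Ioo_ae_eq_Ioc (μ := volume) (a := -π) (b := π))]
  refine lintegral_congr fun θ => ?_
  simp only [smul_eq_mul]
  rw [← lintegral_indicator measurableSet_Ioi, ← lintegral_indicator measurableSet_Ioo]
  refine lintegral_congr fun r => ?_
  have h1 : ∀ r : ℝ, Complex.polarCoord.symm (r, θ) = (r : ℂ) * cpt θ := by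
    intro r
    rw [Complex.polarCoord_symm_apply, cpt, Complex.exp_mul_I]
    simp
  simp only [h1]
  by_cases hr : 0 < r
  · rw [indicator_of_mem (s := Ioi 0) (by exact hr)]
    by_cases hR : r < R
    · have h2 : (r : ℂ) * cpt θ ∈ Metric.ball (0 : ℂ) R := by
        simp [norm_cpt, abs_of_pos hr, hR]
      rw [indicator_of_mem (s := Ioo 0 R) ⟨hr, hR⟩, indicator_of_mem h2]
    · have h2 : (r : ℂ) * cpt θ ∉ Metric.ball (0 : ℂ) R := by
        simpa [norm_cpt, abs_of_pos hr] using hR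
      rw [indicator_of_notMem (s := Ioo 0 R) (fun h => hR h.2), indicator_of_notMem h2, mul_zero]
  · rw [indicator_of_notMem (s := Ioi 0) (by exact hr),
      indicator_of_notMem (s := Ioo 0 R) (fun h => hr h.1)]

lemma area_mean_value {h : ℂ → ℂ} (hh : DifferentiableOn ℂ h (Metric.ball 0 1)) (hm : Measurable h)
    {z : ℂ} {R : ℝ} (hR : 0 < R) (hzR : ‖z‖ + R ≤ 1) :
    ENNReal.ofReal (π * R ^ 2) * ‖h z‖ₑ ≤ ∫⁻ w in Metric.ball z R, ‖h w‖ₑ := by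
  have hpi := Real.pi_pos
  have hcpt := continuous_cpt.measurable
  have e1 : ∫⁻ w in Metric.ball z R, ‖h w‖ₑ = ∫⁻ w in Metric.ball (0 : ℂ) R, ‖h (z + w)‖ₑ := by
    rw [← lintegral_indicator measurableSet_ball, ← lintegral_indicator measurableSet_ball,
      ← lintegral_add_left_eq_self _ z]
    refine lintegral_congr fun w => ?_
    simp only [indicator, Metric.mem_ball, dist_zero_right, dist_self_add_left]
  have hmeas : Measurable fun p : ℝ × ℝ => ENNReal.ofReal p.2 * ‖h (z + (p.2 : ℂ) * cpt p.1)‖ₑ := by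
    fun_prop
  rw [e1, lintegral_ball_polar (F := fun w => ‖h (z + w)‖ₑ) (by fun_prop), lintegral_swap hmeas]
  have key : ∀ r ∈ Ioo 0 R, ENNReal.ofReal (2 * π) * ‖h z‖ₑ ≤
      ∫⁻ θ in Ioc 0 (2 * π), ‖h (z + (r : ℂ) * cpt θ)‖ₑ := by
    intro r hr
    have hsub : Metric.closedBall z |r| ⊆ Metric.ball 0 1 := by
      intro w hw
      rw [abs_of_pos hr.1, mem_closedBall_iff_norm] at hw
      rw [mem_ball_zero_iff]
      have := norm_le_norm_add_norm_sub' w z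
      linarith [hr.2]
    have hd : DiffContOnCl ℂ h (Metric.ball z |r|) := by
      refine DifferentiableOn.diffContOnCl ?_
      exact (hh.mono hsub).mono Metric.closure_ball_subset_closedBall
    have := hd.circleAverage
    rw [Real.circleAverage_def, intervalIntegral.integral_of_le (by positivity)] at this
    rw [← this, enorm_smul, ← mul_assoc, Real.enorm_of_nonneg (by positivity),
      ← ENNReal.ofReal_mul (by positivity), mul_inv_cancel₀ (by positivity), ENNReal.ofReal_one,
      one_mul]
    exact enorm_integral_le_lintegral_enorm _
  have e2 : ENNReal.ofReal (π * R ^ 2) =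
      ∫⁻ r in Ioo 0 R, ENNReal.ofReal r * ENNReal.ofReal (2 * π) := by
    rw [lintegral_mul_const _ (by fun_prop), Measure.restrict_congr_set (Ioo_ae_eq_Ioc (μ := volume)),
      ← ofReal_integral_eq_lintegral_ofReal]
    · rw [← intervalIntegral.integral_of_le hR.le, integral_id, ← ENNReal.ofReal_mul (by simp; positivity)]
      congr 1; ring
    · exact (continuous_id.intervalIntegrable 0 R).1
    · filter_upwards [ae_restrict_mem measurableSet_Ioc] with r hr using hr.1.le
  rw [e2, ← lintegral_mul_const _ (by fun_prop)]
  refine setLIntegral_mono' measurableSet_Ioo fun r hr => ?_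
  dsimp only
  rw [lintegral_const_mul _ (by fun_prop), mul_assoc]
  gcongr
  exact key r hr

lemma enorm_sq_le_area {h : ℂ → ℂ} (hh : DifferentiableOn ℂ h (Metric.ball 0 1)) (hm : Measurable h)
    {z : ℂ} {s : ℝ} (hs : 0 < s) (hzs : ‖z‖ + s ≤ 1) :
    ‖h z‖ₑ ^ 2 ≤ ENNReal.ofReal (2 * s⁻¹ ^ 2) *
      ∫⁻ w in Metric.ball z (s / 2), ‖h w‖ₑ ^ 2 := by
  have := area_mean_value (h := fun w => h w ^ 2) (hh.pow 2) (by fun_prop) (z := z)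
    (R := s / 2) (by positivity) (by linarith)
  simp only [enorm_pow] at this
  have h3 := Real.pi_gt_three
  calc ‖h z‖ₑ ^ 2 ≤ ENNReal.ofReal (2 * s⁻¹ ^ 2) *
        (ENNReal.ofReal (π * (s / 2) ^ 2) * ‖h z‖ₑ ^ 2) := by
        rw [← mul_assoc, ← ENNReal.ofReal_mul (by positivity)]
        refine le_mul_of_one_le_left zero_le ?_
        rw [ENNReal.one_le_ofReal]
        have : 2 * s⁻¹ ^ 2 * (π * (s / 2) ^ 2) = π / 2 * (s⁻¹ * s) ^ 2 := by ring
        rw [this, inv_mul_cancel₀ hs.ne']; linarith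
    _ ≤ _ := by gcongr

section embedding

variable {b : ℝ → ENNReal} {C d : ℝ}

lemma box_kernel_le (hb : Measurable b) (hper : ∀ θ, b (θ + 2 * π) = b θ) (hC : 0 ≤ C)
    (box : ∀ φ h : ℝ, 0 < h → h ≤ 2 * π → ∫⁻ θ in {θ | |θ - φ| < h}, b θ ≤ ENNReal.ofReal (C * h ^ d))
    {w : ℂ} (hw : ‖w‖ < 1) :
    ∫⁻ θ in Ioc 0 (2 * π), ∫⁻ s in Ioo (0 : ℝ) 1, b θ * (ENNReal.ofReal (s ^ (-1 - d)) *
      (if ‖w - ((1 - s : ℝ) : ℂ) * cpt θ‖ < s / 2 then 1 else 0)) ≤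
      ENNReal.ofReal (2 * C * (2 * π) ^ d) := by
  have hpi := Real.pi_pos
  have hcpt := continuous_cpt.measurable
  set y := 1 - ‖w‖ with hy
  have hy0 : 0 < y := by linarith
  set φ := w.arg
  have hwφ : w = ((1 - y : ℝ) : ℂ) * cpt φ := by
    rw [hy, sub_sub_cancel, cpt, Complex.norm_mul_exp_arg_mul_I]
  have hmeas : Measurable fun p : ℝ × ℝ => b p.1 * (ENNReal.ofReal (p.2 ^ (-1 - d)) *
      (if ‖w - ((1 - p.2 : ℝ) : ℂ) * cpt p.1‖ < p.2 / 2 then (1 : ENNReal) else 0)) := by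
    refine (hb.comp measurable_fst).mul ((by fun_prop : Measurable fun p : ℝ × ℝ =>
      ENNReal.ofReal (p.2 ^ (-1 - d))).mul (Measurable.ite ?_ measurable_const measurable_const))
    exact measurableSet_lt (by fun_prop) (by fun_prop)
  rw [setLIntegral_period (θ₀ := φ) (fun θ => by simp_rw [hper, cpt_periodic]), lintegral_swap hmeas]
  dsimp only
  calc _ ≤ ∫⁻ s in Ioo (0 : ℝ) 1, (Ioo (2 * y / 3) (2 * y)).indicator
        (fun _ => ENNReal.ofReal (C * (2 * π) ^ d * (3 / (2 * y)))) s := by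
        refine setLIntegral_mono' measurableSet_Ioo fun s hs => ?_
        have hs0 := hs.1
        have hn : ‖((1 - s : ℝ) : ℂ)‖ = 1 - s := by
          rw [Complex.norm_real, Real.norm_of_nonneg (by linarith [hs.2])]
        by_cases hsy : s ∈ Ioo (2 * y / 3) (2 * y)
        · rw [indicator_of_mem hsy]
          calc _ ≤ ∫⁻ θ in period φ, ENNReal.ofReal (s ^ (-1 - d)) *
                ({θ | |θ - φ| < 2 * π * s}.indicator b θ) := by
                refine setLIntegral_mono' measurableSet_Ioc fun θ hθ => ?_
                split_ifs with hlt
                · rw [indicator_of_mem, mul_one, mul_comm]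
                  rw [Set.mem_ofPred_eq]
                  have h1 := le_norm_cpt_sub (abs_sub_le_of_mem_period hθ)
                  have h0 : |1 - y - (1 - s)| < s / 2 := by
                    have := abs_norm_sub_norm_le w (((1 - s : ℝ) : ℂ) * cpt θ)
                    rw [norm_mul, hn, norm_cpt, mul_one] at this
                    refine lt_of_le_of_lt ?_ hlt
                    rwa [hy, sub_sub_cancel]
                  have h2 : (1 - s) * ‖cpt θ - cpt φ‖ < s := by
                    calc (1 - s) * ‖cpt θ - cpt φ‖ = ‖(w - ((1 - s : ℝ) : ℂ) * cpt θ) +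
                          (((1 - s) - (1 - y) : ℝ) : ℂ) * cpt φ‖ := by
                          rw [show (1 - s) * ‖cpt θ - cpt φ‖ =
                            ‖((1 - s : ℝ) : ℂ) * (cpt θ - cpt φ)‖ by rw [norm_mul, hn], ← norm_neg]
                          congr 1
                          rw [hwφ]; push_cast; ring
                      _ ≤ ‖w - ((1 - s : ℝ) : ℂ) * cpt θ‖ + |1 - s - (1 - y)| := by
                          refine (norm_add_le _ _).trans ?_
                          rw [norm_mul _ (cpt φ), norm_cpt, mul_one, Complex.norm_real, Real.norm_eq_abs]
                      _ < s := by rw [abs_sub_comm]; linarith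
                  have h3 : ‖cpt θ - cpt φ‖ < 4 * s := by
                    have h4 : ‖cpt θ - cpt φ‖ ≤ 2 := by
                      refine (norm_sub_le _ _).trans ?_
                      rw [norm_cpt, norm_cpt]; norm_num
                    rcases le_or_gt s (1 / 2) with h | h
                    · nlinarith [norm_nonneg (cpt θ - cpt φ)]
                    · linarith
                  have h5 : 2 / π * |θ - φ| < 4 * s := h1.trans_lt h3
                  rw [div_mul_eq_mul_div, div_lt_iff₀ hpi] at h5
                  linarith
                · simp
            _ ≤ ENNReal.ofReal (s ^ (-1 - d)) * ENNReal.ofReal (C * (2 * π * s) ^ d) := by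
                rw [lintegral_const_mul' _ _ ENNReal.ofReal_ne_top]
                gcongr
                refine (setLIntegral_le_lintegral _ _).trans ?_
                rw [lintegral_indicator (measurableSet_lt (by fun_prop) (by fun_prop))]
                exact box φ _ (by positivity) (by nlinarith [hs.2])
            _ ≤ _ := by
                rw [← ENNReal.ofReal_mul (by positivity)]
                refine ENNReal.ofReal_le_ofReal ?_
                have h1 : s ^ (-1 - d) * (C * (2 * π * s) ^ d) = C * (2 * π) ^ d * s⁻¹ := by
                  rw [Real.mul_rpow (by positivity) hs0.le, Real.rpow_sub hs0, Real.rpow_neg_one]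
                  field_simp
                rw [h1]
                gcongr
                rw [inv_le_comm₀ hs0 (by positivity), inv_div]
                exact hsy.1.le
        · rw [indicator_of_notMem hsy]
          refine le_of_eq ?_
          rw [lintegral_eq_zero_of_ae_eq_zero]
          refine Filter.Eventually.of_forall fun θ => ?_
          simp only [Pi.zero_apply]
          rw [if_neg, mul_zero, mul_zero]
          intro hlt
          apply hsy
          have := abs_norm_sub_norm_le w (((1 - s : ℝ) : ℂ) * cpt θ)
          rw [norm_mul, hn, norm_cpt, mul_one] at this
          have := abs_lt.1 (this.trans_lt hlt)
          constructor <;> linarith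
    _ ≤ ∫⁻ s, (Ioo (2 * y / 3) (2 * y)).indicator
        (fun _ => ENNReal.ofReal (C * (2 * π) ^ d * (3 / (2 * y)))) s := setLIntegral_le_lintegral _ _
    _ = ENNReal.ofReal (2 * C * (2 * π) ^ d) := by
        rw [lintegral_indicator_const measurableSet_Ioo, Real.volume_Ioo,
          ← ENNReal.ofReal_mul (by positivity)]
        congr 1
        field_simp; ring

lemma box_embedding (hb : Measurable b) (hper : ∀ θ, b (θ + 2 * π) = b θ) (hC : 0 ≤ C)
    (box : ∀ φ h : ℝ, 0 < h → h ≤ 2 * π → ∫⁻ θ in {θ | |θ - φ| < h}, b θ ≤ ENNReal.ofReal (C * h ^ d))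
    {h : ℂ → ℂ} (hh : DifferentiableOn ℂ h (Metric.ball 0 1)) (hm : Measurable h) :
    ∫⁻ θ in Ioc 0 (2 * π), b θ * ∫⁻ s in Ioo (0 : ℝ) 1, ENNReal.ofReal (s ^ (1 - d)) *
      ‖h (((1 - s : ℝ) : ℂ) * cpt θ)‖ₑ ^ 2 ≤
      ENNReal.ofReal (4 * C * (2 * π) ^ d) * ∫⁻ w in Metric.ball (0 : ℂ) 1, ‖h w‖ₑ ^ 2 := by
  have hpi := Real.pi_pos
  have hcpt := continuous_cpt.measurable
  have hmeas : Measurable fun p : (ℝ × ℝ) × ℂ => b p.1.1 * (ENNReal.ofReal (p.1.2 ^ (-1 - d)) *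
      (if ‖p.2 - ((1 - p.1.2 : ℝ) : ℂ) * cpt p.1.1‖ < p.1.2 / 2 then (1 : ENNReal) else 0)) := by
    refine (by fun_prop : Measurable fun p : (ℝ × ℝ) × ℂ => b p.1.1).mul
      ((by fun_prop : Measurable fun p : (ℝ × ℝ) × ℂ =>
      ENNReal.ofReal (p.1.2 ^ (-1 - d))).mul (Measurable.ite ?_ measurable_const measurable_const))
    exact measurableSet_lt (by fun_prop) (by fun_prop)
  set k : ℝ → ℝ → ℂ → ENNReal := fun θ s w => b θ * (ENNReal.ofReal (s ^ (-1 - d)) *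
      (if ‖w - ((1 - s : ℝ) : ℂ) * cpt θ‖ < s / 2 then (1 : ENNReal) else 0)) with hk
  have hmeas' : Measurable fun p : (ℝ × ℝ) × ℂ => k p.1.1 p.1.2 p.2 := hmeas
  calc _ ≤ ∫⁻ θ in Ioc 0 (2 * π), ∫⁻ s in Ioo (0 : ℝ) 1, ∫⁻ w in Metric.ball (0 : ℂ) 1,
        k θ s w * (2 * ‖h w‖ₑ ^ 2) := by
        refine lintegral_mono fun θ => ?_
        dsimp only
        rw [← lintegral_const_mul _ (by fun_prop)]
        refine setLIntegral_mono' measurableSet_Ioo fun s hs => ?_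
        have hs0 := hs.1
        set z := ((1 - s : ℝ) : ℂ) * cpt θ with hz
        have hzn : ‖z‖ + s ≤ 1 := by
          rw [hz, norm_mul, norm_cpt, mul_one, Complex.norm_real,
            Real.norm_of_nonneg (by linarith [hs.2])]
          linarith
        have hsub : Metric.ball z (s / 2) ⊆ Metric.ball (0 : ℂ) 1 := by
          intro w hw
          rw [mem_ball_iff_norm] at hw
          rw [mem_ball_zero_iff]
          have := norm_le_norm_add_norm_sub' w z
          linarith
        have h1 : ∀ w, k θ s w * (2 * ‖h w‖ₑ ^ 2) = (Metric.ball z (s / 2)).indicator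
            (fun w => b θ * (ENNReal.ofReal (s ^ (-1 - d))) * 2 * ‖h w‖ₑ ^ 2) w := by
          intro w
          by_cases hw : ‖w - z‖ < s / 2
          · rw [indicator_of_mem (mem_ball_iff_norm.2 hw)]
            simp only [hk, ← hz, if_pos hw]; ring
          · rw [indicator_of_notMem (fun h => hw (mem_ball_iff_norm.1 h))]
            simp only [hk, ← hz, if_neg hw]; ring
        simp_rw [h1]
        rw [lintegral_indicator measurableSet_ball, Measure.restrict_restrict measurableSet_ball,
          inter_eq_left.2 hsub, lintegral_const_mul _ (by fun_prop)]
        calc _ ≤ b θ * (ENNReal.ofReal (s ^ (1 - d)) * (ENNReal.ofReal (2 * s⁻¹ ^ 2) *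
                ∫⁻ w in Metric.ball z (s / 2), ‖h w‖ₑ ^ 2)) := by
              gcongr
              exact enorm_sq_le_area hh hm hs0 hzn
          _ = b θ * (ENNReal.ofReal (s ^ (1 - d)) * ENNReal.ofReal (2 * s⁻¹ ^ 2)) *
                ∫⁻ w in Metric.ball z (s / 2), ‖h w‖ₑ ^ 2 := by ring
          _ = b θ * (ENNReal.ofReal (s ^ (-1 - d)) * 2) *
                ∫⁻ w in Metric.ball z (s / 2), ‖h w‖ₑ ^ 2 := by
              congr 2
              rw [← ENNReal.ofReal_mul (by positivity), ← ENNReal.ofReal_ofNat,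
                ← ENNReal.ofReal_mul (by positivity)]
              congr 1
              rw [show -1 - d = (1 - d) - 2 by ring, Real.rpow_sub hs0 _ 2, Real.rpow_two]
              field_simp
          _ = _ := by ring
    _ = ∫⁻ θ in Ioc 0 (2 * π), ∫⁻ w in Metric.ball (0 : ℂ) 1, ∫⁻ s in Ioo (0 : ℝ) 1,
        k θ s w * (2 * ‖h w‖ₑ ^ 2) := by
        refine lintegral_congr fun θ => ?_
        exact lintegral_swap (F := fun p : ℝ × ℂ => k θ p.1 p.2 * (2 * ‖h p.2‖ₑ ^ 2))
          ((hmeas'.comp (by fun_prop : Measurable fun p : ℝ × ℂ => ((θ, p.1), p.2))).mul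
            (by fun_prop))
    _ = ∫⁻ w in Metric.ball (0 : ℂ) 1, ∫⁻ θ in Ioc 0 (2 * π), ∫⁻ s in Ioo (0 : ℝ) 1,
        k θ s w * (2 * ‖h w‖ₑ ^ 2) := by
        refine lintegral_swap (F := fun p : ℝ × ℂ => ∫⁻ s in Ioo (0 : ℝ) 1,
          k p.1 s p.2 * (2 * ‖h p.2‖ₑ ^ 2)) ?_
        exact Measurable.lintegral_prod_right' (f := fun q : (ℝ × ℂ) × ℝ =>
          k q.1.1 q.2 q.1.2 * (2 * ‖h q.1.2‖ₑ ^ 2)) ((hmeas'.comp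
            (by fun_prop : Measurable fun q : (ℝ × ℂ) × ℝ => ((q.1.1, q.2), q.1.2))).mul
            (by fun_prop))
    _ ≤ ∫⁻ w in Metric.ball (0 : ℂ) 1, ENNReal.ofReal (2 * C * (2 * π) ^ d) * (2 * ‖h w‖ₑ ^ 2) := by
        refine setLIntegral_mono' measurableSet_ball fun w hw => ?_
        have hfin : 2 * ‖h w‖ₑ ^ 2 ≠ ⊤ := by finiteness
        simp_rw [lintegral_mul_const' _ _ hfin]
        gcongr
        exact box_kernel_le hb hper hC box (mem_ball_zero_iff.1 hw)
    _ = _ := by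
        rw [lintegral_const_mul _ (by fun_prop), lintegral_const_mul _ (by fun_prop), ← mul_assoc]
        congr 1
        rw [← ENNReal.ofReal_ofNat, ← ENNReal.ofReal_mul (by positivity)]
        congr 1; ring

end embedding

lemma lintegral_mul_sq_le {α : Type*} [MeasurableSpace α] {μ : Measure α} {f g : α → ENNReal}
    (hf : AEMeasurable f μ) (hg : AEMeasurable g μ) :
    (∫⁻ x, f x * g x ∂μ) ^ 2 ≤ (∫⁻ x, f x ^ 2 ∂μ) * ∫⁻ x, g x ^ 2 ∂μ := by
  have h := ENNReal.lintegral_mul_le_Lp_mul_Lq μ Real.HolderConjugate.two_two hf hg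
  simp only [Pi.mul_apply, ENNReal.rpow_two] at h
  calc _ ≤ ((∫⁻ x, f x ^ 2 ∂μ) ^ (1 / 2 : ℝ) * (∫⁻ x, g x ^ 2 ∂μ) ^ (1 / 2 : ℝ)) ^ 2 := by gcongr
    _ = _ := by
      rw [mul_pow, ← ENNReal.rpow_mul_natCast, ← ENNReal.rpow_mul_natCast]
      norm_num

lemma enorm_add_sq_le {x y a b : ENNReal} (h : x ≤ a + b) (hy : y = x) :
    y ^ 2 ≤ 4 * (a ^ 2 + b ^ 2) := by
  rw [hy]
  have h1 : x ≤ 2 * max a b :=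
    h.trans (by rw [two_mul]; exact add_le_add (le_max_left _ _) (le_max_right _ _))
  calc x ^ 2 ≤ (2 * max a b) ^ 2 := by gcongr
    _ = 4 * (max a b) ^ 2 := by ring
    _ ≤ _ := by
      gcongr
      rcases le_total a b with h | h
      · rw [max_eq_right h]; exact le_add_self
      · rw [max_eq_left h]; exact le_self_add

lemma setLIntegral_one_sub (F : ℝ → ENNReal) :
    ∫⁻ r in Ioo (0 : ℝ) 1, F r = ∫⁻ y in Ioo (0 : ℝ) 1, F (1 - y) := by
  rw [← lintegral_indicator measurableSet_Ioo, ← lintegral_indicator measurableSet_Ioo,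
    ← lintegral_sub_left_eq_self _ (1 : ℝ)]
  refine lintegral_congr fun y => ?_
  have : (1 - y) ∈ Ioo (0 : ℝ) 1 ↔ y ∈ Ioo (0 : ℝ) 1 := by
    constructor <;> intro h <;> constructor <;> linarith [h.1, h.2]
  by_cases hy : y ∈ Ioo (0 : ℝ) 1
  · rw [indicator_of_mem hy, indicator_of_mem (this.2 hy)]
  · rw [indicator_of_notMem hy, indicator_of_notMem (fun h => hy (this.1 h))]

lemma lintegral_Ioo_rpow {p c : ℝ} (hp : -1 < p) (hc : 0 ≤ c) :
    ∫⁻ s in Ioo (0 : ℝ) c, ENNReal.ofReal (s ^ p) = ENNReal.ofReal (c ^ (p + 1) / (p + 1)) := by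
  rw [Measure.restrict_congr_set (Ioo_ae_eq_Ioc (μ := volume)),
    ← ofReal_integral_eq_lintegral_ofReal]
  · rw [← intervalIntegral.integral_of_le hc, integral_rpow (Or.inl hp),
      Real.zero_rpow (by linarith), sub_zero]
  · exact (intervalIntegral.intervalIntegrable_rpow' hp).1
  · filter_upwards [ae_restrict_mem measurableSet_Ioc] with r hr using rpow_nonneg hr.1.le _

lemma integrableOn_norm_sq_iff {S : Set ℂ} {F : ℂ → ℂ} (hF : Measurable F) :
    IntegrableOn (fun z => ‖F z‖ ^ 2) S volume ↔ ∫⁻ z in S, ‖F z‖ₑ ^ 2 < ⊤ := by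
  have h : ∀ z, ‖‖F z‖ ^ 2‖ₑ = ‖F z‖ₑ ^ 2 := fun z => by
    rw [enorm_pow, enorm_norm]
  rw [IntegrableOn, Integrable, HasFiniteIntegral]
  simp_rw [h]
  exact and_iff_right (by fun_prop)

section growth

variable {g : ℂ → ℂ}

lemma enorm_le_radial (hg : DifferentiableOn ℂ g (Metric.ball 0 1)) {y : ℝ} (hy : y ∈ Ioo (0 : ℝ) 1)
    (θ : ℝ) : ‖g (((1 - y : ℝ) : ℂ) * cpt θ)‖ₑ ≤
      ‖g 0‖ₑ + ∫⁻ s in Ioo (0 : ℝ) 1, ‖deriv g (((1 - s : ℝ) : ℂ) * cpt θ)‖ₑ := by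
  have hopen : IsOpen (Metric.ball (0 : ℂ) 1) := Metric.isOpen_ball
  set r := 1 - y with hr
  have hr0 : 0 < r := by linarith [hy.2]
  have hr1 : r < 1 := by linarith [hy.1]
  have hmem : ∀ t ∈ Icc 0 r, (t : ℂ) * cpt θ ∈ Metric.ball (0 : ℂ) 1 := by
    intro t ht
    rw [mem_ball_zero_iff, norm_mul, norm_cpt, mul_one, Complex.norm_real,
      Real.norm_of_nonneg ht.1]
    linarith [ht.2]
  have hd : ∀ t ∈ uIcc 0 r, HasDerivAt (fun t : ℝ => g ((t : ℂ) * cpt θ))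
      (deriv g ((t : ℂ) * cpt θ) * cpt θ) t := by
    intro t ht
    rw [uIcc_of_le hr0.le] at ht
    have h1 := (hg.differentiableAt (hopen.mem_nhds (hmem t ht))).hasDerivAt
    have h2 : HasDerivAt (fun t : ℝ => (t : ℂ) * cpt θ) (cpt θ) t := by
      simpa using (Complex.ofRealCLM.hasDerivAt (x := t)).mul_const (cpt θ)
    exact h1.comp t h2
  have hc : ContinuousOn (fun t : ℝ => deriv g ((t : ℂ) * cpt θ) * cpt θ) (uIcc 0 r) := by
    rw [uIcc_of_le hr0.le]
    exact ((hg.deriv hopen).continuousOn.comp (by fun_prop) hmem).mul continuousOn_const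
  have hftc := intervalIntegral.integral_eq_sub_of_hasDerivAt hd hc.intervalIntegrable
  rw [intervalIntegral.integral_of_le hr0.le] at hftc
  simp only [Complex.ofReal_zero, zero_mul] at hftc
  rw [← setLIntegral_one_sub (fun t => ‖deriv g ((t : ℂ) * cpt θ)‖ₑ)]
  calc _ = ‖g 0 + (g ((r : ℂ) * cpt θ) - g 0)‖ₑ := by rw [add_sub_cancel]
    _ ≤ ‖g 0‖ₑ + ‖g ((r : ℂ) * cpt θ) - g 0‖ₑ := enorm_add_le _ _
    _ ≤ ‖g 0‖ₑ + ∫⁻ t in Ioc 0 r, ‖deriv g ((t : ℂ) * cpt θ)‖ₑ := by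
        rw [← hftc]
        gcongr
        refine (enorm_integral_le_lintegral_enorm _).trans (le_of_eq ?_)
        refine lintegral_congr fun t => ?_
        rw [enorm_mul, ← ofReal_norm (cpt θ), norm_cpt, ENNReal.ofReal_one, mul_one]
    _ ≤ _ := by
        gcongr

lemma enorm_sq_le_radial (hg : DifferentiableOn ℂ g (Metric.ball 0 1)) {d : ℝ} (hd : 0 < d)
    {y : ℝ} (hy : y ∈ Ioo (0 : ℝ) 1) (θ : ℝ) :
    ‖g (((1 - y : ℝ) : ℂ) * cpt θ)‖ₑ ^ 2 ≤ 4 * (‖g 0‖ₑ ^ 2 + ENNReal.ofReal (1 / d) *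
      ∫⁻ s in Ioo (0 : ℝ) 1, ENNReal.ofReal (s ^ (1 - d)) *
        ‖deriv g (((1 - s : ℝ) : ℂ) * cpt θ)‖ₑ ^ 2) := by
  have hm := measurable_deriv g
  refine (enorm_add_sq_le (enorm_le_radial hg hy θ) rfl).trans ?_
  gcongr
  have hsq : ∀ p : ℝ, ∀ s ∈ Ioo (0 : ℝ) 1,
      ENNReal.ofReal (s ^ (p / 2)) ^ 2 = ENNReal.ofReal (s ^ p) := by
    intro p s hs
    rw [← ENNReal.ofReal_pow (rpow_nonneg hs.1.le _), ← Real.rpow_natCast, ← Real.rpow_mul hs.1.le]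
    congr 2; push_cast; ring
  calc _ = (∫⁻ s in Ioo (0 : ℝ) 1, ENNReal.ofReal (s ^ (-(1 - d) / 2)) *
          (ENNReal.ofReal (s ^ ((1 - d) / 2)) * ‖deriv g (((1 - s : ℝ) : ℂ) * cpt θ)‖ₑ)) ^ 2 := by
        congr 1
        refine setLIntegral_congr_fun measurableSet_Ioo fun s hs => ?_
        rw [← mul_assoc, ← ENNReal.ofReal_mul (rpow_nonneg hs.1.le _), ← Real.rpow_add hs.1]
        ring_nf
        simp
    _ ≤ _ := lintegral_mul_sq_le (by fun_prop) (by fun_prop)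
    _ = _ := by
        congr 1
        · rw [setLIntegral_congr_fun measurableSet_Ioo (hsq _), lintegral_Ioo_rpow (by linarith) (by simp)]
          congr 1
          rw [Real.one_rpow]; ring
        · refine setLIntegral_congr_fun measurableSet_Ioo fun s hs => ?_
          rw [mul_pow, hsq _ s hs]

end growth

theorem isMultiplierD_of_box {f : ℂ → ℂ} {M C d : ℝ} (hf : DifferentiableOn ℂ f unitDisc)
    (hM : ∀ z ∈ unitDisc, ‖f z‖ ≤ M) (hd : 0 < d) (hC : 0 ≤ C)
    (box : ∀ φ h : ℝ, 0 < h → h ≤ 2 * π → ∫⁻ θ in {θ | |θ - φ| < h}, ∫⁻ y in Ioo (0 : ℝ) 1,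
      ‖deriv f (((1 - y : ℝ) : ℂ) * cpt θ)‖ₑ ^ 2 ≤ ENNReal.ofReal (C * h ^ d)) :
    IsMultiplierD f := by
  have hpi := Real.pi_pos
  have hcpt := continuous_cpt.measurable
  have hM0 : 0 ≤ M := (norm_nonneg _).trans (hM 0 (by simp [unitDisc]))
  have hopen : IsOpen unitDisc := Metric.isOpen_ball
  rintro g ⟨hg, ⟨Mg, hMg⟩, hgd⟩
  refine ⟨hf.mul hg, ⟨M ^ 2 * Mg, fun r hr => ?_⟩, ?_⟩
  · have hmem : ∀ θ, (r : ℂ) * cpt θ ∈ unitDisc := by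
      intro θ
      rw [unitDisc, mem_ball_zero_iff, norm_mul, norm_cpt, mul_one, Complex.norm_real,
        Real.norm_of_nonneg hr.1.le]
      exact hr.2
    have hcc : Continuous fun θ => (r : ℂ) * cpt θ := continuous_const.mul continuous_cpt
    have hgc : Continuous fun θ => g ((r : ℂ) * cpt θ) := hg.continuousOn.comp_continuous hcc hmem
    have hfc : Continuous fun θ => f ((r : ℂ) * cpt θ) := hf.continuousOn.comp_continuous hcc hmem
    have h_int : ∀ {F : ℝ → ℝ}, Continuous F → IntegrableOn F (Ioc 0 (2 * π)) :=
      fun hF => (hF.intervalIntegrable 0 (2 * π)).1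
    calc _ ≤ ∫ θ in Ioc 0 (2 * π), M ^ 2 * ‖g ((r : ℂ) * cpt θ)‖ ^ 2 := by
          refine setIntegral_mono_on (h_int ((hfc.mul hgc).norm.pow 2))
            (h_int (continuous_const.mul (hgc.norm.pow 2))) measurableSet_Ioc
            fun θ _ => ?_
          rw [norm_mul, mul_pow]
          gcongr
          exact hM _ (hmem θ)
      _ ≤ _ := by
          rw [integral_const_mul]
          gcongr
          exact hMg r hr
  · have hmf := measurable_deriv f
    have hmg := measurable_deriv g
    rw [integrableOn_norm_sq_iff hmg] at hgd
    rw [integrableOn_norm_sq_iff (measurable_deriv _)]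
    set g₀ := unitDisc.indicator g with hg₀
    have hmg₀ : Measurable g₀ := by
      classical
      rw [hg₀, ← piecewise_eq_indicator]
      exact hg.continuousOn.measurable_piecewise continuousOn_const hopen.measurableSet
    set b : ℝ → ENNReal := fun θ => ∫⁻ y in Ioo (0 : ℝ) 1,
      ‖deriv f (((1 - y : ℝ) : ℂ) * cpt θ)‖ₑ ^ 2 with hb
    have hbm : Measurable b := Measurable.lintegral_prod_right' (f := fun q : ℝ × ℝ =>
      ‖deriv f (((1 - q.2 : ℝ) : ℂ) * cpt q.1)‖ₑ ^ 2) (by fun_prop)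
    have hbper : ∀ θ, b (θ + 2 * π) = b θ := fun θ => by simp only [hb, cpt_periodic]
    have hbtot : ∫⁻ θ in Ioc 0 (2 * π), b θ < ⊤ := by
      refine lt_of_le_of_lt ?_ ((box π (2 * π) (by positivity) le_rfl).trans_lt ENNReal.ofReal_lt_top)
      refine lintegral_mono_set fun θ hθ => ?_
      rw [Set.mem_ofPred_eq, abs_lt]
      constructor <;> linarith [hθ.1, hθ.2]
    have hprod : ∫⁻ z in unitDisc, ‖deriv f z‖ₑ ^ 2 * ‖g₀ z‖ₑ ^ 2 < ⊤ := by
      rw [unitDisc, lintegral_ball_polar (F := fun z => ‖deriv f z‖ₑ ^ 2 * ‖g₀ z‖ₑ ^ 2) (by fun_prop)]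
      set D : ℝ → ENNReal := fun θ => ∫⁻ s in Ioo (0 : ℝ) 1, ENNReal.ofReal (s ^ (1 - d)) *
        ‖deriv g (((1 - s : ℝ) : ℂ) * cpt θ)‖ₑ ^ 2 with hD
      have hDm : Measurable D := Measurable.lintegral_prod_right' (f := fun q : ℝ × ℝ =>
        ENNReal.ofReal (q.2 ^ (1 - d)) * ‖deriv g (((1 - q.2 : ℝ) : ℂ) * cpt q.1)‖ₑ ^ 2) (by fun_prop)
      calc _ ≤ ∫⁻ θ in Ioc 0 (2 * π), b θ * (4 * (‖g 0‖ₑ ^ 2 + ENNReal.ofReal (1 / d) * D θ)) := by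
            refine lintegral_mono fun θ => ?_
            dsimp only
            rw [setLIntegral_one_sub (fun r => ENNReal.ofReal r *
              (‖deriv f ((r : ℂ) * cpt θ)‖ₑ ^ 2 * ‖g₀ ((r : ℂ) * cpt θ)‖ₑ ^ 2)), hb,
              ← lintegral_mul_const _ (by fun_prop)]
            refine setLIntegral_mono' measurableSet_Ioo fun y hy => ?_
            have hle : ENNReal.ofReal (1 - y) ≤ 1 := by
              rw [ENNReal.ofReal_le_one]; linarith [hy.1]
            have hmem : ((1 - y : ℝ) : ℂ) * cpt θ ∈ unitDisc := by
              rw [unitDisc, mem_ball_zero_iff]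
              exact polar_norm_lt ⟨hy.1, hy.2.le⟩ θ
            refine (mul_le_of_le_one_left zero_le hle).trans ?_
            rw [hg₀, indicator_of_mem hmem]
            gcongr
            exact enorm_sq_le_radial hg hd hy θ
        _ = 4 * ‖g 0‖ₑ ^ 2 * (∫⁻ θ in Ioc 0 (2 * π), b θ) +
              4 * ENNReal.ofReal (1 / d) * ∫⁻ θ in Ioc 0 (2 * π), b θ * D θ := by
            rw [← lintegral_const_mul _ (by fun_prop), ← lintegral_const_mul _ (by fun_prop),
              ← lintegral_add_left (by fun_prop)]
            refine lintegral_congr fun θ => ?_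
            ring
        _ < ⊤ := by
            refine ENNReal.add_lt_top.2 ⟨ENNReal.mul_lt_top (by finiteness) hbtot,
              ENNReal.mul_lt_top (by finiteness) ?_⟩
            refine (box_embedding hbm hbper hC box (hg.deriv hopen) hmg).trans_lt ?_
            exact ENNReal.mul_lt_top ENNReal.ofReal_lt_top hgd
    calc _ ≤ ∫⁻ z in unitDisc, 4 * (‖deriv f z‖ₑ ^ 2 * ‖g₀ z‖ₑ ^ 2 +
          ENNReal.ofReal M ^ 2 * ‖deriv g z‖ₑ ^ 2) := by
          refine setLIntegral_mono' hopen.measurableSet fun z hz => ?_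
          have h1 : deriv (fun z => f z * g z) z = deriv f z * g z + f z * deriv g z :=
            deriv_fun_mul (hf.differentiableAt (hopen.mem_nhds hz))
              (hg.differentiableAt (hopen.mem_nhds hz))
          rw [← mul_pow, ← mul_pow, h1, hg₀, indicator_of_mem hz]
          refine enorm_add_sq_le ((enorm_add_le _ _).trans ?_) rfl
          rw [enorm_mul, enorm_mul]
          gcongr
          rw [← ofReal_norm]
          exact ENNReal.ofReal_le_ofReal (hM z hz)
      _ < ⊤ := by
          rw [lintegral_const_mul _ (by fun_prop), lintegral_add_left (by fun_prop),
            lintegral_const_mul _ (by fun_prop)]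
          refine ENNReal.mul_lt_top (by finiteness) (ENNReal.add_lt_top.2 ⟨hprod, ?_⟩)
          exact ENNReal.mul_lt_top (by finiteness) hgd

section box

variable {δ : ℝ → ℝ} {ω : ℝ → ℝ} {d K : ℝ}

lemma tail_box (h : DistReg δ d K) (ω : ℝ → ℝ) {φ R : ℝ} (hR : 0 < R) (hR' : R ≤ 2 * π) :
    ∫⁻ θ in {θ | |θ - φ| < R}, ∫⁻ y in Ioo (0 : ℝ) 1,
      ENNReal.ofReal (y ^ (-(1 / 2) : ℝ)) * tail ω (max (δ θ) y) ≤
      ENNReal.ofReal (8 * K * R ^ d) *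
        ∫⁻ u in Ioo (0 : ℝ) 2, ENNReal.ofReal (deriv ω u ^ 2 * u ^ (1 - d)) := by
  have hδm := h.continuous.measurable
  have hωm := measurable_deriv ω
  have hK := h.K_pos
  have hd := h.d_pos
  have hd1 := h.d_lt
  set W : ℝ → ENNReal := fun u => ENNReal.ofReal (u ^ (-(1 / 2) : ℝ) * deriv ω u ^ 2) with hW
  have hWm : Measurable W := by fun_prop
  obtain ⟨χ, hχ⟩ : ∃ χ : ℝ → ℝ → ENNReal, χ = fun a u => if a < 2 * u then 1 else 0 := ⟨_, rfl⟩
  have m1 : Measurable fun p : ℝ × ℝ => χ p.1 p.2 := by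
    rw [hχ]
    exact Measurable.ite (measurableSet_lt (by fun_prop) (by fun_prop)) measurable_const measurable_const
  have m2 : Measurable fun p : ℝ × ℝ => χ (δ p.1) p.2 :=
    m1.comp (by fun_prop : Measurable fun p : ℝ × ℝ => (δ p.1, p.2))
  set A : ℝ → ENNReal := fun u => ∫⁻ y in Ioo (0 : ℝ) 1,
    ENNReal.ofReal (y ^ (-(1 / 2) : ℝ)) * χ y u with hA
  have hAm : Measurable A := by
    refine Measurable.lintegral_prod_right' (f := fun q : ℝ × ℝ =>
      ENNReal.ofReal (q.2 ^ (-(1 / 2) : ℝ)) * χ q.2 q.1) ?_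
    exact (by fun_prop : Measurable fun q : ℝ × ℝ => ENNReal.ofReal (q.2 ^ (-(1 / 2) : ℝ))).mul
      (m1.comp measurable_swap)
  have hAle : ∀ u ∈ Ioo (0 : ℝ) 2, A u ≤ ENNReal.ofReal ((2 * u) ^ (1 / 2 : ℝ) * 2) := by
    intro u hu
    calc A u ≤ ∫⁻ y in Ioo (0 : ℝ) 1, (Ioo 0 (2 * u)).indicator
          (fun y => ENNReal.ofReal (y ^ (-(1 / 2) : ℝ))) y := by
          refine setLIntegral_mono' measurableSet_Ioo fun y hy => ?_
          simp only [hχ]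
          split_ifs with hlt
          · rw [indicator_of_mem (show y ∈ Ioo 0 (2 * u) from ⟨hy.1, hlt⟩), mul_one]
          · simp
      _ ≤ ∫⁻ y, (Ioo 0 (2 * u)).indicator
          (fun y => ENNReal.ofReal (y ^ (-(1 / 2) : ℝ))) y := setLIntegral_le_lintegral _ _
      _ = _ := by
          rw [lintegral_indicator measurableSet_Ioo, lintegral_Ioo_rpow (by norm_num)
            (by linarith [hu.1])]
          norm_num
          congr 1
          ring
  have e1 : ∀ θ, ∫⁻ y in Ioo (0 : ℝ) 1,
      ENNReal.ofReal (y ^ (-(1 / 2) : ℝ)) * tail ω (max (δ θ) y) =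
      ∫⁻ u in Ioo (0 : ℝ) 2, χ (δ θ) u * (W u * A u) := by
    intro θ
    have mF : Measurable fun p : ℝ × ℝ => χ (δ θ) p.2 *
        (W p.2 * (ENNReal.ofReal (p.1 ^ (-(1 / 2) : ℝ)) * χ p.1 p.2)) :=
      (m2.comp (by fun_prop : Measurable fun p : ℝ × ℝ => (θ, p.2))).mul
        ((hWm.comp measurable_snd).mul ((by fun_prop : Measurable fun q : ℝ × ℝ =>
          ENNReal.ofReal (q.1 ^ (-(1 / 2) : ℝ))).mul m1))
    calc _ = ∫⁻ y in Ioo (0 : ℝ) 1, ∫⁻ u in Ioo (0 : ℝ) 2, χ (δ θ) u *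
          (W u * (ENNReal.ofReal (y ^ (-(1 / 2) : ℝ)) * χ y u)) := by
          refine lintegral_congr fun y => ?_
          rw [tail, ← lintegral_const_mul' _ _ ENNReal.ofReal_ne_top]
          refine lintegral_congr fun u => ?_
          simp only [hχ]
          by_cases h1 : δ θ < 2 * u
          · by_cases h2 : y < 2 * u
            · rw [if_pos (max_lt h1 h2), if_pos h1, if_pos h2, hW]; ring
            · rw [if_neg (fun hm => h2 ((le_max_right _ _).trans_lt hm)), if_neg h2]; simp
          · rw [if_neg (fun hm => h1 ((le_max_left _ _).trans_lt hm)), if_neg h1]; simp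
      _ = _ := by
          rw [lintegral_swap mF]
          refine lintegral_congr fun u => ?_
          dsimp only
          rw [lintegral_const_mul _ ?_, lintegral_const_mul _ ?_]
          · exact (by fun_prop : Measurable fun q : ℝ =>
              ENNReal.ofReal (q ^ (-(1 / 2) : ℝ))).mul (m1.comp measurable_prodMk_right)
          · exact ((by fun_prop : Measurable fun q : ℝ =>
              ENNReal.ofReal (q ^ (-(1 / 2) : ℝ))).mul (m1.comp measurable_prodMk_right)).const_mul _
  simp_rw [e1]
  rw [lintegral_swap (F := fun p : ℝ × ℝ => χ (δ p.1) p.2 * (W p.2 * A p.2))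
    (m2.mul (by fun_prop)), ← lintegral_const_mul _ (by fun_prop)]
  refine setLIntegral_mono' measurableSet_Ioo fun u hu => ?_
  have hu0 := hu.1
  dsimp only
  rw [lintegral_mul_const _ (show Measurable fun θ => χ (δ θ) u from m2.comp measurable_prodMk_right)]
  have e2 : ∫⁻ θ in {θ | |θ - φ| < R}, χ (δ θ) u ≤
      ENNReal.ofReal (K * (R ^ d * (2 * u) ^ (1 - d))) := by
    refine le_trans (le_of_eq ?_) (h.vol φ R (2 * u) hR hR' (by linarith))
    have hset : MeasurableSet {θ | δ θ < 2 * u} := measurableSet_lt hδm measurable_const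
    have : (fun θ => χ (δ θ) u) =
        {θ | δ θ < 2 * u}.indicator (fun _ => 1) := by
      ext θ; simp [hχ, indicator]
    rw [this, lintegral_indicator_const hset, one_mul, Measure.restrict_apply hset]
    congr 1
    ext θ
    simp [and_comm]
  calc _ ≤ ENNReal.ofReal (K * (R ^ d * (2 * u) ^ (1 - d))) *
        (W u * ENNReal.ofReal ((2 * u) ^ (1 / 2 : ℝ) * 2)) := by
        gcongr
        exact hAle u hu
    _ ≤ _ := by
        rw [hW, ← ENNReal.ofReal_mul (by positivity), ← ENNReal.ofReal_mul (by positivity),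
          ← ENNReal.ofReal_mul (by positivity)]
        refine ENNReal.ofReal_le_ofReal ?_
        rw [Real.mul_rpow zero_le_two hu0.le, Real.mul_rpow zero_le_two hu0.le]
        have h2 : (2 : ℝ) ^ (1 - d) ≤ 2 := by
          conv_rhs => rw [← Real.rpow_one 2]
          exact Real.rpow_le_rpow_of_exponent_le one_le_two (by linarith)
        have h3 : (2 : ℝ) ^ (1 / 2 : ℝ) ≤ 2 := by
          conv_rhs => rw [← Real.rpow_one 2]
          exact Real.rpow_le_rpow_of_exponent_le one_le_two (by norm_num)
        have h4 : u ^ (-(1 / 2) : ℝ) * u ^ (1 / 2 : ℝ) = 1 := by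
          rw [← Real.rpow_add hu0]; norm_num
        calc _ = (2 : ℝ) ^ (1 - d) * (2 : ℝ) ^ (1 / 2 : ℝ) * (2 * K * R ^ d *
                (deriv ω u ^ 2 * u ^ (1 - d))) * (u ^ (-(1 / 2) : ℝ) * u ^ (1 / 2 : ℝ)) := by ring
          _ ≤ 2 * 2 * (2 * K * R ^ d * (deriv ω u ^ 2 * u ^ (1 - d))) * 1 := by
              rw [h4]; gcongr
          _ = _ := by ring

lemma outer_box (h : DistReg δ d K) (hω : RegW ω)
    (hφ : IntegrableOn (fun θ => log (ω (δ θ))) (Ioc 0 (2 * π)))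
    (hI : ∫⁻ u in Ioc (0 : ℝ) 1, ENNReal.ofReal (deriv ω u ^ 2 * u ^ (1 - d)) < ⊤) :
    ∃ C : ℝ, 0 ≤ C ∧ ∀ φ R : ℝ, 0 < R → R ≤ 2 * π →
      ∫⁻ θ in {θ | |θ - φ| < R}, ∫⁻ y in Ioo (0 : ℝ) 1,
        ‖deriv (outer fun θ => log (ω (δ θ))) (((1 - y : ℝ) : ℂ) * cpt θ)‖ₑ ^ 2 ≤
        ENNReal.ofReal (C * R ^ d) := by
  have hpi := Real.pi_gt_three
  have hd1 := h.d_lt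
  have hK := h.K_pos
  have hωm := measurable_deriv ω
  have hosc := oscConst_pos h
  set c := Real.exp 336 * 12 * oscConst d K with hc
  have hc0 : 0 < c := by positivity
  set I := ∫⁻ u in Ioo (0 : ℝ) 2, ENNReal.ofReal (deriv ω u ^ 2 * u ^ (1 - d)) with hIdef
  have hI2 : I ≠ ⊤ := by
    refine ne_of_lt (lt_of_le_of_lt (lintegral_mono_set (t := Ioc 0 1 ∪ Ioo 1 2) fun u hu => ?_)
      ((lintegral_union_le _ _ _).trans_lt (ENNReal.add_lt_top.2 ⟨hI, ?_⟩)))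
    · rcases le_or_gt u 1 with h1 | h1
      · exact Or.inl ⟨hu.1, h1⟩
      · exact Or.inr ⟨h1, hu.2⟩
    · calc _ ≤ ∫⁻ u in Ioo (1 : ℝ) 2, ENNReal.ofReal (deriv ω 1 ^ 2 * 2) := by
            refine setLIntegral_mono' measurableSet_Ioo fun u hu => ENNReal.ofReal_le_ofReal ?_
            have hu1 : u ∈ Ioo 0 π := ⟨by linarith [hu.1], by linarith [hu.2]⟩
            have hu0 := hu1.1
            have := hω.anti ⟨one_pos, by linarith⟩ hu1 hu.1.le
            have := hω.nonneg u hu1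
            gcongr
            calc u ^ (1 - d) ≤ u ^ (1 : ℝ) :=
                  Real.rpow_le_rpow_of_exponent_le hu.1.le (by linarith [h.d_pos])
              _ ≤ 2 := by rw [Real.rpow_one]; exact hu.2.le
        _ < ⊤ := by
            rw [setLIntegral_const, Real.volume_Ioo]
            finiteness
  refine ⟨16 * c ^ 2 * K * I.toReal, by positivity, fun φ R hR hR' => ?_⟩
  calc _ ≤ ∫⁻ θ in {θ | |θ - φ| < R}, ENNReal.ofReal (2 * c ^ 2) * ∫⁻ y in Ioo (0 : ℝ) 1,
        ENNReal.ofReal (y ^ (-(1 / 2) : ℝ)) * tail ω (max (δ θ) y) := by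
        refine lintegral_mono fun θ => ?_
        dsimp only
        rw [← lintegral_const_mul' _ _ ENNReal.ofReal_ne_top]
        refine setLIntegral_mono' measurableSet_Ioo fun y hy => ?_
        have hy0 := hy.1
        have hyc : y ∈ Ioc (0 : ℝ) 1 := ⟨hy.1, hy.2.le⟩
        have ht0 : 0 < max (δ θ) y := hy.1.trans_le (le_max_right _ _)
        have hb := norm_deriv_outer_le (θ₀ := θ) h hω hφ hyc (tailRoot_nonneg ω (max (δ θ) y))
          (fun u hu => deriv_le_tailRoot hω ht0 hu)
        rw [← hc] at hb
        set T := tailRoot ω (max (δ θ) y) with hT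
        have hT0 : 0 ≤ T := tailRoot_nonneg _ _
        rw [← ofReal_norm]
        calc _ ≤ ENNReal.ofReal (c * T * y ^ (-(1 / 4) : ℝ)) ^ 2 := by gcongr
          _ = ENNReal.ofReal (c ^ 2) * (ENNReal.ofReal (y ^ (-(1 / 2) : ℝ)) *
                ENNReal.ofReal (T ^ 2)) := by
              rw [← ENNReal.ofReal_pow (by positivity), ← ENNReal.ofReal_mul (by positivity),
                ← ENNReal.ofReal_mul (by positivity)]
              congr 1
              have : y ^ (-(1 / 2) : ℝ) = (y ^ (-(1 / 4) : ℝ)) ^ 2 := by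
                rw [← Real.rpow_natCast, ← Real.rpow_mul hy0.le]; norm_num
              rw [this]; ring
          _ = _ := by
              rw [hT, ofReal_tailRoot_sq hω ht0, ENNReal.ofReal_mul zero_le_two,
                ENNReal.ofReal_ofNat]
              ring
    _ ≤ ENNReal.ofReal (2 * c ^ 2) * (ENNReal.ofReal (8 * K * R ^ d) * I) := by
        rw [lintegral_const_mul' _ _ ENNReal.ofReal_ne_top]
        gcongr
        exact tail_box h ω hR hR'
    _ = _ := by
        rw [← ENNReal.ofReal_toReal hI2, ← ENNReal.ofReal_mul (by positivity),
          ← ENNReal.ofReal_mul (by positivity), ENNReal.toReal_ofReal (by positivity)]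
        congr 1; ring

theorem isMultiplierD_outer (h : DistReg δ d K) (hω : RegW ω)
    (hφ : IntegrableOn (fun θ => log (ω (δ θ))) (Ioc 0 (2 * π)))
    (hI : ∫⁻ u in Ioc (0 : ℝ) 1, ENNReal.ofReal (deriv ω u ^ 2 * u ^ (1 - d)) < ⊤) :
    IsMultiplierD (outer fun θ => log (ω (δ θ))) := by
  have hpi := Real.pi_gt_three
  obtain ⟨C, hC, hbox⟩ := outer_box h hω hφ hI
  refine isMultiplierD_of_box (M := Real.exp 336 * ω 2) ?_ ?_ h.d_pos hC hbox
  · intro z hz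
    exact (hasDerivAt_outer hφ (mem_ball_zero_iff.1 hz)).differentiableAt.differentiableWithinAt
  · intro z hz
    rw [unitDisc, mem_ball_zero_iff] at hz
    have hy : 1 - ‖z‖ ∈ Ioc (0 : ℝ) 1 := ⟨by linarith, by linarith [norm_nonneg z]⟩
    have := norm_outer_le (θ₀ := z.arg) h hω hφ hy
    rw [sub_sub_cancel, cpt, Complex.norm_mul_exp_arg_mul_I] at this
    refine this.trans ?_
    gcongr
    exact hω.mono (hy.1.trans_le (le_max_right _ _)) (max_le (h.le_two _) (by linarith [hy.2]))
      (by linarith)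

end box

section path

variable {g : ℂ → ℂ}

lemma enorm_sub_le_path (hg : DifferentiableOn ℂ g (Metric.ball 0 1)) {γ γ' : ℝ → ℂ} {a b : ℝ}
    (hab : a ≤ b) (hγ : ∀ t ∈ Icc a b, HasDerivAt γ (γ' t) t) (hγ' : ContinuousOn γ' (Icc a b))
    (hmem : ∀ t ∈ Icc a b, γ t ∈ Metric.ball (0 : ℂ) 1) (hle : ∀ t ∈ Icc a b, ‖γ' t‖ ≤ 1) :
    ‖g (γ b) - g (γ a)‖ₑ ≤ ∫⁻ t in Ioo a b, ‖deriv g (γ t)‖ₑ := by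
  have hopen : IsOpen (Metric.ball (0 : ℂ) 1) := Metric.isOpen_ball
  have hd : ∀ t ∈ uIcc a b, HasDerivAt (fun t : ℝ => g (γ t)) (deriv g (γ t) * γ' t) t := by
    intro t ht
    rw [uIcc_of_le hab] at ht
    exact (hg.differentiableAt (hopen.mem_nhds (hmem t ht))).hasDerivAt.comp t (hγ t ht)
  have hc : ContinuousOn (fun t : ℝ => deriv g (γ t) * γ' t) (uIcc a b) := by
    rw [uIcc_of_le hab]
    exact ((hg.deriv hopen).continuousOn.comp
      (fun t ht => (hγ t ht).continuousAt.continuousWithinAt) hmem).mul hγ'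
  have hftc := intervalIntegral.integral_eq_sub_of_hasDerivAt hd hc.intervalIntegrable
  rw [intervalIntegral.integral_of_le hab] at hftc
  rw [← hftc, Measure.restrict_congr_set (Ioo_ae_eq_Ioc (μ := volume))]
  refine (enorm_integral_le_lintegral_enorm _).trans ?_
  refine setLIntegral_mono' measurableSet_Ioc fun t ht => ?_
  rw [enorm_mul]
  calc _ ≤ ‖deriv g (γ t)‖ₑ * 1 := by
        gcongr
        rw [← ofReal_norm, ← ENNReal.ofReal_one]
        exact ENNReal.ofReal_le_ofReal (hle t (Ioc_subset_Icc_self ht))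
    _ = _ := mul_one _

lemma enorm_sub_le_arc (hg : DifferentiableOn ℂ g (Metric.ball 0 1)) {a b y : ℝ} (hab : a ≤ b)
    (hy : y ∈ Ioc (0 : ℝ) 1) :
    ‖g (((1 - y : ℝ) : ℂ) * cpt b) - g (((1 - y : ℝ) : ℂ) * cpt a)‖ₑ ≤
      ∫⁻ u in Ioo a b, ‖deriv g (((1 - y : ℝ) : ℂ) * cpt u)‖ₑ := by
  refine enorm_sub_le_path hg (γ := fun u => ((1 - y : ℝ) : ℂ) * cpt u)
    (γ' := fun u => ((1 - y : ℝ) : ℂ) * (cpt u * Complex.I)) hab ?_ ?_ ?_ ?_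
  · intro t _
    have : HasDerivAt (fun u : ℝ => (u : ℂ) * Complex.I) Complex.I t := by
      simpa using (Complex.ofRealCLM.hasDerivAt (x := t)).mul_const Complex.I
    exact this.cexp.const_mul _
  · have := continuous_cpt
    fun_prop
  · intro t _
    exact mem_ball_zero_iff.2 (polar_norm_lt hy t)
  · intro t _
    rw [← mul_assoc, norm_mul, Complex.norm_I, mul_one, norm_polar hy.2]
    linarith [hy.1]

lemma enorm_sub_le_radial (hg : DifferentiableOn ℂ g (Metric.ball 0 1)) {a b : ℝ} (hab : a ≤ b)
    (ha : 0 < a) (hb : b ≤ 1) (θ : ℝ) :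
    ‖g (((1 - b : ℝ) : ℂ) * cpt θ) - g (((1 - a : ℝ) : ℂ) * cpt θ)‖ₑ ≤
      ∫⁻ y in Ioo a b, ‖deriv g (((1 - y : ℝ) : ℂ) * cpt θ)‖ₑ := by
  refine enorm_sub_le_path hg (γ := fun y => ((1 - y : ℝ) : ℂ) * cpt θ)
    (γ' := fun _ => -cpt θ) hab ?_ ?_ ?_ ?_
  · intro t _
    have := ((hasDerivAt_id t).const_sub 1).ofReal_comp.mul_const (cpt θ)
    simpa using this
  · fun_prop
  · intro t ht
    exact mem_ball_zero_iff.2 (polar_norm_lt ⟨ha.trans_le ht.1, ht.2.trans hb⟩ θ)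
  · intro t _
    rw [norm_neg, norm_cpt]

lemma boundary_sub_le (hg : DifferentiableOn ℂ g (Metric.ball 0 1)) {σ θ A : ℝ}
    (hσ : σ ∈ Ioc (0 : ℝ) 1)
    (hA : Filter.Tendsto (fun y : ℝ => ‖g (((1 - y : ℝ) : ℂ) * cpt θ)‖)
      (nhdsWithin 0 (Ioi 0)) (nhds A)) :
    ENNReal.ofReal |‖g (((1 - σ : ℝ) : ℂ) * cpt θ)‖ - A| ≤
      ∫⁻ y in Ioo 0 σ, ‖deriv g (((1 - y : ℝ) : ℂ) * cpt θ)‖ₑ := by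
  refine le_of_tendsto ((ENNReal.continuous_ofReal.tendsto _).comp (hA.const_sub _).abs) ?_
  filter_upwards [Ioo_mem_nhdsGT hσ.1] with y hy
  calc _ ≤ ENNReal.ofReal ‖g (((1 - σ : ℝ) : ℂ) * cpt θ) - g (((1 - y : ℝ) : ℂ) * cpt θ)‖ :=
        ENNReal.ofReal_le_ofReal (abs_norm_sub_norm_le _ _)
    _ ≤ _ := by
        rw [ofReal_norm]
        exact enorm_sub_le_radial hg hy.2.le hy.1 hσ.2 θ
    _ ≤ _ := lintegral_mono_set (Ioo_subset_Ioo_left hy.1.le)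

lemma setLIntegral_add_left (e a b : ℝ) (G : ℝ → ENNReal) :
    ∫⁻ σ in Ioo a b, G (e + σ) = ∫⁻ u in Ioo (e + a) (e + b), G u := by
  have := setLIntegral_affine one_pos e a b G
  simpa [add_comm] using this

/-- An oscillation of the boundary modulus along an arc is paid for by the Dirichlet energy in the
box above that arc. -/
lemma box_lower (hg : DifferentiableOn ℂ g (Metric.ball 0 1)) {θ₀ t c : ℝ} (ht : 0 < t)
    (ht1 : t ≤ 1) (hc : 0 ≤ c) {β : ℝ → ℝ}
    (hβ : ∀ u ∈ Ioo (t / 2) t, Filter.Tendsto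
      (fun y : ℝ => ‖g (((1 - y : ℝ) : ℂ) * cpt (θ₀ + u))‖) (nhdsWithin 0 (Ioi 0)) (nhds (β u)))
    (hinc : ∀ σ ∈ Ioo 0 (t / 6), c ≤ β (5 * t / 6 + σ) - β (t / 2 + σ)) :
    ENNReal.ofReal (c ^ 2) ≤ 81 * ∫⁻ u in Ioo (t / 2) t, ∫⁻ y in Ioo 0 (t / 2),
      ‖deriv g (((1 - y : ℝ) : ℂ) * cpt (θ₀ + u))‖ₑ ^ 2 := by
  have hcpt := continuous_cpt.measurable
  have hgm := measurable_deriv g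
  set F : ℝ × ℝ → ENNReal := fun p => ‖deriv g (((1 - p.2 : ℝ) : ℂ) * cpt (θ₀ + p.1))‖ₑ with hF
  have hFm : Measurable F := by fun_prop
  set G : ℝ → ENNReal := fun u => ∫⁻ y in Ioo 0 (t / 2), F (u, y) with hG
  have hGm : Measurable G := hFm.lintegral_prod_right'
  set J := ∫⁻ u in Ioo (t / 2) t, G u with hJ
  have pt : ∀ σ ∈ Ioo 0 (t / 6), ENNReal.ofReal c ≤
      (G (t / 2 + σ) + G (5 * t / 6 + σ)) + ∫⁻ u in Ioo (t / 2) t, F (u, σ) := by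
    intro σ hσ
    have hσ1 := hσ.1
    have hσ2 := hσ.2
    have hσ' : σ ∈ Ioc (0 : ℝ) 1 := ⟨hσ1, by linarith⟩
    have b1 := boundary_sub_le hg hσ' (hβ (t / 2 + σ) ⟨by linarith, by linarith⟩)
    have b2 := boundary_sub_le hg hσ' (hβ (5 * t / 6 + σ) ⟨by linarith, by linarith⟩)
    have b3 := enorm_sub_le_arc hg (a := θ₀ + (t / 2 + σ)) (b := θ₀ + (5 * t / 6 + σ))
      (by linarith) hσ'
    rw [← setLIntegral_add_left θ₀ (t / 2 + σ) (5 * t / 6 + σ)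
      (fun u => ‖deriv g (((1 - σ : ℝ) : ℂ) * cpt u)‖ₑ)] at b3
    set z₁ := g (((1 - σ : ℝ) : ℂ) * cpt (θ₀ + (t / 2 + σ)))
    set z₂ := g (((1 - σ : ℝ) : ℂ) * cpt (θ₀ + (5 * t / 6 + σ)))
    calc ENNReal.ofReal c ≤ ENNReal.ofReal (|‖z₁‖ - β (t / 2 + σ)| +
          |‖z₂‖ - β (5 * t / 6 + σ)| + ‖z₂ - z₁‖) := by
          refine ENNReal.ofReal_le_ofReal ?_
          have := hinc σ hσ
          have h1 := le_abs_self (‖z₁‖ - β (t / 2 + σ))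
          have h2 := neg_abs_le (‖z₂‖ - β (5 * t / 6 + σ))
          have h3 := norm_sub_norm_le z₂ z₁
          linarith
      _ = ENNReal.ofReal |‖z₁‖ - β (t / 2 + σ)| + ENNReal.ofReal |‖z₂‖ - β (5 * t / 6 + σ)| +
          ‖z₂ - z₁‖ₑ := by
          rw [ENNReal.ofReal_add (by positivity) (by positivity),
            ENNReal.ofReal_add (by positivity) (by positivity), ofReal_norm]
      _ ≤ _ := by
          refine add_le_add (add_le_add (b1.trans ?_) (b2.trans ?_)) (b3.trans ?_)
          · exact lintegral_mono_set (Ioo_subset_Ioo_right (by linarith))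
          · exact lintegral_mono_set (Ioo_subset_Ioo_right (by linarith))
          · exact lintegral_mono_set (Ioo_subset_Ioo (by linarith) (by linarith))
  have int : ENNReal.ofReal c * ENNReal.ofReal (t / 6) ≤ 3 * J := by
    calc _ = ∫⁻ σ in Ioo 0 (t / 6), ENNReal.ofReal c := by
          rw [setLIntegral_const, Real.volume_Ioo, sub_zero]
      _ ≤ ∫⁻ σ in Ioo 0 (t / 6), ((G (t / 2 + σ) + G (5 * t / 6 + σ)) +
            ∫⁻ u in Ioo (t / 2) t, F (u, σ)) := setLIntegral_mono' measurableSet_Ioo pt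
      _ = ((∫⁻ σ in Ioo 0 (t / 6), G (t / 2 + σ)) + ∫⁻ σ in Ioo 0 (t / 6), G (5 * t / 6 + σ)) +
            ∫⁻ σ in Ioo 0 (t / 6), ∫⁻ u in Ioo (t / 2) t, F (u, σ) := by
          rw [lintegral_add_left (by fun_prop), lintegral_add_left (by fun_prop)]
      _ ≤ (J + J) + J := by
          refine add_le_add (add_le_add ?_ ?_) ?_
          · rw [setLIntegral_add_left]
            exact lintegral_mono_set (Ioo_subset_Ioo (by linarith) (by linarith))
          · rw [setLIntegral_add_left]
            exact lintegral_mono_set (Ioo_subset_Ioo (by linarith) (by linarith))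
          · refine (lintegral_mono_set (Ioo_subset_Ioo_right (by linarith : t / 6 ≤ t / 2))).trans
              (le_of_eq ?_)
            rw [hJ, hG, lintegral_swap hFm]
      _ = _ := by ring
  have cs : J ^ 2 ≤ ENNReal.ofReal (t / 2) ^ 2 * ∫⁻ u in Ioo (t / 2) t, ∫⁻ y in Ioo 0 (t / 2),
      F (u, y) ^ 2 := by
    calc J ^ 2 = (∫⁻ u in Ioo (t / 2) t, 1 * G u) ^ 2 := by simp_rw [one_mul]; rfl
      _ ≤ (∫⁻ u in Ioo (t / 2) t, 1 ^ 2) * ∫⁻ u in Ioo (t / 2) t, G u ^ 2 :=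
          lintegral_mul_sq_le aemeasurable_const hGm.aemeasurable
      _ ≤ ENNReal.ofReal (t / 2) * ∫⁻ u in Ioo (t / 2) t, ENNReal.ofReal (t / 2) *
            ∫⁻ y in Ioo 0 (t / 2), F (u, y) ^ 2 := by
          gcongr with u
          · rw [one_pow, lintegral_one, Measure.restrict_apply_univ, Real.volume_Ioo]
            exact ENNReal.ofReal_le_ofReal (by linarith)
          · calc G u ^ 2 = (∫⁻ y in Ioo 0 (t / 2), 1 * F (u, y)) ^ 2 := by simp_rw [one_mul]; rfl
              _ ≤ (∫⁻ y in Ioo 0 (t / 2), 1 ^ 2) * ∫⁻ y in Ioo 0 (t / 2), F (u, y) ^ 2 :=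
                  lintegral_mul_sq_le aemeasurable_const
                    (hFm.comp measurable_prodMk_left).aemeasurable
              _ = _ := by
                  rw [one_pow, lintegral_one, Measure.restrict_apply_univ, Real.volume_Ioo, sub_zero]
      _ = _ := by
          rw [lintegral_const_mul' _ _ ENNReal.ofReal_ne_top]; ring
  set D := ∫⁻ u in Ioo (t / 2) t, ∫⁻ y in Ioo 0 (t / 2), F (u, y) ^ 2 with hD
  have fin : ENNReal.ofReal (t / 6) ^ 2 * ENNReal.ofReal (c ^ 2) ≤
      ENNReal.ofReal (t / 6) ^ 2 * (81 * D) := by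
    calc _ = (ENNReal.ofReal c * ENNReal.ofReal (t / 6)) ^ 2 := by
          rw [ENNReal.ofReal_pow hc]; ring
      _ ≤ (3 * J) ^ 2 := by gcongr
      _ = 9 * J ^ 2 := by ring
      _ ≤ 9 * (ENNReal.ofReal (t / 2) ^ 2 * D) := by gcongr
      _ = _ := by
          have : ENNReal.ofReal (t / 2) = 3 * ENNReal.ofReal (t / 6) := by
            rw [← ENNReal.ofReal_ofNat, ← ENNReal.ofReal_mul (by norm_num)]
            congr 1; ring
          rw [this]; ring
  exact (ENNReal.mul_le_mul_iff_right (pow_ne_zero _ (by simpa using ht)) (by finiteness)).1 fin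

end path

/-- Dirichlet energy density of `g` along the radius at angle `θ`, near the circle. -/
noncomputable def radialEnergy (g : ℂ → ℂ) (θ : ℝ) : ENNReal :=
  ∫⁻ y in Ioo (0 : ℝ) (1 / 2), ‖deriv g (((1 - y : ℝ) : ℂ) * cpt θ)‖ₑ ^ 2

lemma measurable_radialEnergy (g : ℂ → ℂ) : Measurable (radialEnergy g) := by
  have hcpt := continuous_cpt.measurable
  have hgm := measurable_deriv g
  exact Measurable.lintegral_prod_right' (f := fun q : ℝ × ℝ =>
    ‖deriv g (((1 - q.2 : ℝ) : ℂ) * cpt q.1)‖ₑ ^ 2) (by fun_prop)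

lemma lintegral_radialEnergy_lt_top {g : ℂ → ℂ}
    (hg : ∫⁻ z in unitDisc, ‖deriv g z‖ₑ ^ 2 < ⊤) :
    ∫⁻ θ in Ioc 0 (2 * π), radialEnergy g θ < ⊤ := by
  have hgm := measurable_deriv g
  refine lt_of_le_of_lt (b := 2 * ∫⁻ z in unitDisc, ‖deriv g z‖ₑ ^ 2) ?_
    (ENNReal.mul_lt_top (by simp) hg)
  rw [unitDisc, lintegral_ball_polar (by fun_prop), ← lintegral_const_mul' _ _ (by simp)]
  refine lintegral_mono fun θ => ?_
  dsimp only
  rw [← lintegral_const_mul' _ _ (by simp), setLIntegral_one_sub]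
  refine (setLIntegral_mono' measurableSet_Ioo fun y hy => ?_).trans
    (lintegral_mono_set (Ioo_subset_Ioo_right (by norm_num : (1 / 2 : ℝ) ≤ 1)))
  rw [← mul_assoc]
  refine le_mul_of_one_le_left' ?_
  rw [← ENNReal.ofReal_ofNat, ← ENNReal.ofReal_mul (by norm_num), ← ENNReal.ofReal_one]
  exact ENNReal.ofReal_le_ofReal (by linarith [hy.2])

lemma le_two_sin_sub {t σ : ℝ} (ht1 : t ≤ 1) (hσ : σ ∈ Ioo 0 (t / 6)) :
    t / 6 ≤ 2 * sin ((5 * t / 6 + σ) / 2) - 2 * sin ((t / 2 + σ) / 2) := by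
  have hpi := Real.pi_lt_d2
  have hpi0 := Real.pi_gt_three
  have h1 := hσ.1
  have h2 := hσ.2
  rw [← mul_sub, Real.sin_sub_sin]
  have hs : 2 / π * (t / 12) ≤ sin (((5 * t / 6 + σ) / 2 - (t / 2 + σ) / 2) / 2) := by
    have e : ((5 * t / 6 + σ) / 2 - (t / 2 + σ) / 2) / 2 = t / 12 := by ring
    rw [e]
    exact Real.mul_le_sin (by linarith) (by linarith)
  have hc : 7 / 8 ≤ cos (((5 * t / 6 + σ) / 2 + (t / 2 + σ) / 2) / 2) := by
    refine le_trans ?_ (Real.one_sub_sq_div_two_le_cos (x := _))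
    nlinarith
  have h3 : 0.63 ≤ 2 / π := by
    rw [le_div_iff₀ (by linarith)]; linarith
  have h4 : 0.63 * (t / 12) ≤ 2 / π * (t / 12) := by gcongr; linarith
  have h5 : 0.63 * (t / 12) * (7 / 8) ≤ sin (((5 * t / 6 + σ) / 2 - (t / 2 + σ) / 2) / 2) *
      cos (((5 * t / 6 + σ) / 2 + (t / 2 + σ) / 2) / 2) :=
    mul_le_mul (h4.trans hs) hc (by norm_num) (by linarith)
  linarith

section necessity

variable {ξ d K a L : ℝ} {ω δ : ℝ → ℝ}

lemma gap_lower (hδ : ∀ u, 0 ≤ u → u ≤ π * L → δ (2 * π * a + u) = 2 * sin (u / 2))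
    (h : DistReg δ d K) (hω : RegW ω)
    (hφ : IntegrableOn (fun θ => log (ω (δ θ))) (Ioc 0 (2 * π)))
    (hL1 : L ≤ 1) :
    ∫⁻ t in Ioc 0 L, ENNReal.ofReal (deriv ω t ^ 2 * t) ≤
      2916 * ∫⁻ u in Ioo 0 L, radialEnergy (outer fun θ => log (ω (δ θ))) (2 * π * a + u) := by
  have hpi := Real.pi_gt_three
  set g := outer fun θ => log (ω (δ θ)) with hgdef
  have hg : DifferentiableOn ℂ g (Metric.ball 0 1) := fun z hz =>
    (hasDerivAt_outer hφ (mem_ball_zero_iff.1 hz)).differentiableAt.differentiableWithinAt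
  set H : ℝ → ENNReal := fun u => radialEnergy g (2 * π * a + u) with hH
  have hHm : Measurable H := (measurable_radialEnergy g).comp (by fun_prop)
  obtain ⟨χ, hχ⟩ : ∃ χ : ℝ → ℝ → ENNReal, χ = fun t u => if t / 2 < u ∧ u < t then 1 else 0 :=
    ⟨_, rfl⟩
  have hχm : Measurable fun p : ℝ × ℝ => χ p.1 p.2 := by
    rw [hχ]
    have s1 : MeasurableSet {p : ℝ × ℝ | p.1 / 2 < p.2} :=
      measurableSet_lt (by fun_prop) (by fun_prop)
    have s2 : MeasurableSet {p : ℝ × ℝ | p.2 < p.1} :=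
      measurableSet_lt (by fun_prop) (by fun_prop)
    exact Measurable.ite (s1.inter s2) measurable_const measurable_const
  have pt : ∀ t ∈ Ioc 0 L, ENNReal.ofReal (deriv ω t ^ 2 * t) ≤
      ∫⁻ u in Ioo 0 L, χ t u * (2916 * (ENNReal.ofReal u⁻¹ * H u)) := by
    intro t ht
    have ht0 := ht.1
    have htL := ht.2
    have htπ : t ∈ Ioo 0 π := ⟨ht0, by linarith⟩
    have hdt := hω.nonneg t htπ
    have hgapd : ∀ u, 0 ≤ u → u ≤ t → δ (2 * π * a + u) = 2 * sin (u / 2) := fun u h0 h1 =>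
      hδ u h0 (by nlinarith)
    have hb := box_lower hg (θ₀ := 2 * π * a) (c := deriv ω t * (t / 6)) ht0 (htL.trans hL1)
      (by positivity) (β := fun u => ω (δ (2 * π * a + u))) (fun u hu => by
        refine tendsto_norm_outer h hω hφ ?_
        have := hu.1
        rw [hgapd u (by linarith) hu.2.le]
        have := Real.sin_pos_of_pos_of_lt_pi (x := u / 2) (by linarith) (by linarith [hu.2])
        positivity) (fun σ hσ => by
        have h1 := hσ.1
        have h2 := hσ.2
        have hs := le_two_sin_sub (htL.trans hL1) hσ
        rw [hgapd (5 * t / 6 + σ) (by linarith) (by linarith),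
          hgapd (t / 2 + σ) (by linarith) (by linarith)]
        have hs0 : 0 < sin ((t / 2 + σ) / 2) :=
          Real.sin_pos_of_pos_of_lt_pi (by linarith) (by linarith)
        have hs1 : 2 * sin ((5 * t / 6 + σ) / 2) ≤ t := by
          have := Real.sin_le (x := (5 * t / 6 + σ) / 2) (by linarith)
          linarith
        refine le_trans ?_ (hω.le_sub (s := 2 * sin ((t / 2 + σ) / 2)) (by linarith)
          (by linarith) (by linarith))
        have hx : 2 * sin ((5 * t / 6 + σ) / 2) ∈ Ioo 0 π := ⟨by linarith, by linarith⟩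
        have := hω.anti hx htπ hs1
        gcongr
        exact hω.nonneg _ hx)
    have hb' : ENNReal.ofReal ((deriv ω t * (t / 6)) ^ 2) ≤ 81 * ∫⁻ u in Ioo (t / 2) t, H u := by
      refine hb.trans ?_
      gcongr with u
      exact lintegral_mono_set (Ioo_subset_Ioo_right (by linarith))
    calc _ = ENNReal.ofReal (36 * t⁻¹) * ENNReal.ofReal ((deriv ω t * (t / 6)) ^ 2) := by
          rw [← ENNReal.ofReal_mul (by positivity)]
          congr 1
          field_simp
          ring
      _ ≤ ENNReal.ofReal (36 * t⁻¹) * (81 * ∫⁻ u in Ioo (t / 2) t, H u) := by gcongr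
      _ = ∫⁻ u in Ioo (t / 2) t, 2916 * (ENNReal.ofReal t⁻¹ * H u) := by
          rw [lintegral_const_mul' _ _ (by simp), lintegral_const_mul' _ _ ENNReal.ofReal_ne_top,
            ENNReal.ofReal_mul (by norm_num), ENNReal.ofReal_ofNat]
          ring
      _ ≤ ∫⁻ u in Ioo (t / 2) t, χ t u * (2916 * (ENNReal.ofReal u⁻¹ * H u)) := by
          refine setLIntegral_mono' measurableSet_Ioo fun u hu => ?_
          have hu0 : 0 < u := by linarith [hu.1]
          have hut := hu.2.le
          have e : χ t u = 1 := by rw [hχ]; exact if_pos hu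
          rw [e, one_mul]
          gcongr
      _ ≤ _ := lintegral_mono_set (Ioo_subset_Ioo (by linarith) htL)
  calc _ ≤ ∫⁻ t in Ioc 0 L, ∫⁻ u in Ioo 0 L, χ t u * (2916 * (ENNReal.ofReal u⁻¹ * H u)) :=
        setLIntegral_mono' measurableSet_Ioc pt
    _ = ∫⁻ u in Ioo 0 L, ∫⁻ t in Ioc 0 L, χ t u * (2916 * (ENNReal.ofReal u⁻¹ * H u)) :=
        lintegral_swap (F := fun p : ℝ × ℝ => χ p.1 p.2 * (2916 * (ENNReal.ofReal p.2⁻¹ * H p.2)))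
          (hχm.mul (by fun_prop))
    _ ≤ ∫⁻ u in Ioo 0 L, 2916 * H u := by
        refine setLIntegral_mono' measurableSet_Ioo fun u hu => ?_
        have hu0 := hu.1
        have e : ∫⁻ t in Ioc 0 L, χ t u ≤ ENNReal.ofReal u := by
          calc _ ≤ ∫⁻ t, (Ioo u (2 * u)).indicator (fun _ => 1) t := by
                refine (setLIntegral_le_lintegral _ _).trans (lintegral_mono fun t => ?_)
                rw [hχ]
                dsimp only
                split_ifs with hc
                · rw [indicator_of_mem (show t ∈ Ioo u (2 * u) from ⟨hc.2, by linarith [hc.1]⟩)]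
                · exact zero_le
            _ = _ := by
                rw [lintegral_indicator measurableSet_Ioo, setLIntegral_const, Real.volume_Ioo,
                  one_mul]
                congr 1; ring
        rw [lintegral_mul_const _ (show Measurable fun t => χ t u from
          hχm.comp measurable_prodMk_right)]
        calc _ ≤ ENNReal.ofReal u * (2916 * (ENNReal.ofReal u⁻¹ * H u)) := by gcongr
          _ = (ENNReal.ofReal u * ENNReal.ofReal u⁻¹) * (2916 * H u) := by ring
          _ = _ := by
              rw [← ENNReal.ofReal_mul hu0.le, mul_inv_cancel₀ hu0.ne', ENNReal.ofReal_one, one_mul]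
    _ = _ := lintegral_const_mul' _ _ (by simp)

lemma lintegral_le_of_sum_le {ξ d c : ℝ} (hξ : ξ ∈ Ioo (0 : ℝ) 1) (hd : ξ ^ d = 1 / 2) (hd0 : 0 ≤ d)
    (hc : 0 < c) {W : ℝ → ENNReal} (hW : Measurable W) {M : ENNReal}
    (hM : ∀ N, ∑ n ∈ Finset.range N, 2 ^ n * ∫⁻ t in Ioc 0 (ξ ^ n * c), W t ≤ M) :
    ∫⁻ t in Ioc 0 c, ENNReal.ofReal (t ^ (-d)) * W t ≤ ENNReal.ofReal ((ξ * c) ^ (-d)) * M := by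
  have hξ0 := hξ.1
  have hsum : ∑' n : ℕ, 2 ^ n * ∫⁻ t in Ioc 0 (ξ ^ n * c), W t ≤ M :=
    ENNReal.summable.tsum_le_of_sum_range_le hM
  have e : ∀ n : ℕ, 2 ^ n * ∫⁻ t in Ioc 0 (ξ ^ n * c), W t =
      ∫⁻ t, (Ioc 0 (ξ ^ n * c)).indicator (fun t => 2 ^ n * W t) t := fun n => by
    rw [lintegral_indicator measurableSet_Ioc, lintegral_const_mul' _ _ (by finiteness)]
  simp_rw [e] at hsum
  rw [← lintegral_tsum fun n => ((hW.const_mul _).indicator measurableSet_Ioc).aemeasurable] at hsum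
  refine le_trans ?_ (mul_le_mul_right hsum _)
  rw [← lintegral_const_mul' _ _ ENNReal.ofReal_ne_top]
  refine (setLIntegral_mono' measurableSet_Ioc fun t ht => ?_).trans (setLIntegral_le_lintegral _ _)
  have ht0 := ht.1
  obtain ⟨n, h1, h2⟩ := exists_nat_pow_near_of_lt_one (div_pos ht.1 hc)
    ((div_le_one hc).2 ht.2) hξ.1 hξ.2
  rw [lt_div_iff₀ hc] at h1
  rw [div_le_iff₀ hc] at h2
  refine le_trans ?_ (mul_le_mul_right (ENNReal.le_tsum n) _)
  rw [indicator_of_mem (show t ∈ Ioc 0 (ξ ^ n * c) from ⟨ht.1, h2⟩), ← mul_assoc]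
  gcongr
  have h3 : t ^ (-d) ≤ (ξ * c) ^ (-d) * 2 ^ n := by
    calc t ^ (-d) ≤ (ξ ^ (n + 1) * c) ^ (-d) :=
          Real.rpow_le_rpow_of_nonpos (by positivity) h1.le (by linarith)
      _ = (ξ * c * ξ ^ n) ^ (-d) := by congr 1; ring
      _ = (ξ * c) ^ (-d) * (ξ ^ n) ^ (-d) := Real.mul_rpow (by positivity) (by positivity)
      _ = _ := by
          congr 1
          rw [← Real.rpow_natCast ξ n, ← Real.rpow_mul hξ0.le, mul_comm, neg_mul, ← mul_neg,
            Real.rpow_mul hξ0.le, hd, Real.rpow_neg (by norm_num), Real.rpow_natCast]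
          simp
  calc _ ≤ ENNReal.ofReal ((ξ * c) ^ (-d) * 2 ^ n) := ENNReal.ofReal_le_ofReal h3
    _ = _ := by
        rw [ENNReal.ofReal_mul (by positivity), ENNReal.ofReal_pow zero_le_two, ENNReal.ofReal_ofNat]

theorem lintegral_deriv_sq_lt_top (hξ : ξ ∈ Ioo (0 : ℝ) (1 / 2)) (hd : ξ ^ d = 1 / 2)
    (hδ : ∀ a L u, IsGap (cantorR ξ) a L → 0 ≤ u → u ≤ π * L →
      δ (2 * π * a + u) = 2 * sin (u / 2))
    (h : DistReg δ d K) (hω : RegW ω)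
    (hφ : IntegrableOn (fun θ => log (ω (δ θ))) (Ioc 0 (2 * π)))
    (hf : ∫⁻ z in unitDisc, ‖deriv (outer fun θ => log (ω (δ θ))) z‖ₑ ^ 2 < ⊤) :
    ∫⁻ u in Ioc (0 : ℝ) 1, ENNReal.ofReal (deriv ω u ^ 2 * u ^ (1 - d)) < ⊤ := by
  have hpi := Real.pi_gt_three
  have hξ0 := hξ.1
  have hξ2 := hξ.2
  have hd0 := h.d_pos
  have hd1 := h.d_lt
  have hωm := measurable_deriv ω
  set g := outer fun θ => log (ω (δ θ)) with hgdef
  set c := 1 - 2 * ξ with hc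
  have hc0 : 0 < c := by linarith
  set W : ℝ → ENNReal := fun t => ENNReal.ofReal (deriv ω t ^ 2 * t) with hWdef
  have hWm : Measurable W := by fun_prop
  set M := 2916 * ∫⁻ θ in Ioc 0 (2 * π), radialEnergy g θ with hM
  have hMtop : M < ⊤ := ENNReal.mul_lt_top (by simp) (lintegral_radialEnergy_lt_top hf)
  have hsum : ∀ N, ∑ n ∈ Finset.range N, 2 ^ n * ∫⁻ t in Ioc 0 (ξ ^ n * c), W t ≤ M := by
    intro N
    refine (sum_gaps_le hξ (cantorR_selfSimilar hξ) N
      (fun x => ENNReal.ofReal (2 * π) * (2916 * radialEnergy g (2 * π * x + 0))) _ ?_).trans ?_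
    · intro n _ a ha
      have hn : ξ ^ n * c ≤ 1 :=
        mul_le_one₀ (pow_le_one₀ hξ0.le (by linarith)) hc0.le (by linarith)
      have hn0 : 0 < ξ ^ n * c := by positivity
      refine (gap_lower (fun u => hδ a _ u ha) h hω hφ hn).trans ?_
      rw [setLIntegral_affine (by positivity : 0 < 2 * π) 0 a (a + ξ ^ n * c)
        (fun θ => 2916 * radialEnergy g θ), lintegral_const_mul' _ _ (by simp),
        setLIntegral_add_left (2 * π * a) 0 (ξ ^ n * c) (radialEnergy g)]
      refine mul_le_mul_right (lintegral_mono_set (Ioo_subset_Ioo (by linarith) ?_)) _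
      nlinarith
    · rw [setLIntegral_affine (by positivity : 0 < 2 * π) 0 0 1
        (fun θ => 2916 * radialEnergy g θ), lintegral_const_mul' _ _ (by simp), hM]
      gcongr
      intro x hx
      simp only [mul_zero, add_zero, mul_one] at hx
      exact ⟨hx.1, hx.2.le⟩
  have hnear := lintegral_le_of_sum_le ⟨hξ0, by linarith⟩ hd hd0.le hc0 hWm hsum
  refine lt_of_le_of_lt (lintegral_mono_set (t := Ioc 0 c ∪ Ioc c 1) fun u hu => ?_)
    ((lintegral_union_le _ _ _).trans_lt (ENNReal.add_lt_top.2 ⟨?_, ?_⟩))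
  · rcases le_or_gt u c with h1 | h1
    · exact Or.inl ⟨hu.1, h1⟩
    · exact Or.inr ⟨h1, hu.2⟩
  · refine lt_of_eq_of_lt (setLIntegral_congr_fun measurableSet_Ioc fun u hu => ?_)
      (hnear.trans_lt (ENNReal.mul_lt_top ENNReal.ofReal_lt_top hMtop))
    have hu0 := hu.1
    simp only [hWdef]
    rw [← ENNReal.ofReal_mul (by positivity)]
    congr 1
    rw [sub_eq_add_neg, Real.rpow_add hu0, Real.rpow_one]
    ring
  · calc _ ≤ ∫⁻ u in Ioc c 1, ENNReal.ofReal (deriv ω c ^ 2 * 1) := by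
          refine setLIntegral_mono' measurableSet_Ioc fun u hu => ENNReal.ofReal_le_ofReal ?_
          have hu1 : u ∈ Ioo 0 π := ⟨by linarith [hu.1], by linarith [hu.2]⟩
          have hu0 := hu1.1
          have := hω.anti ⟨hc0, by linarith⟩ hu1 hu.1.le
          have := hω.nonneg u hu1
          gcongr
          exact Real.rpow_le_one hu0.le hu.2 (by linarith)
      _ < ⊤ := by
          rw [setLIntegral_const, Real.volume_Ioc]
          finiteness

end necessity

lemma memDirichlet_one : MemDirichlet fun _ => 1 := by
  refine ⟨differentiableOn_const _, ⟨2 * π, fun r _ => ?_⟩, ?_⟩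
  · simp [Real.pi_pos.le]
  · simp

lemma memDirichlet_of_isMultiplierD {f : ℂ → ℂ} (hf : IsMultiplierD f) : MemDirichlet f := by
  simpa using hf _ memDirichlet_one

lemma integrableOn_weight_iff {ω ω' : ℝ → ℝ}
    (h : ∀ t ∈ Ioc (0 : ℝ) 1, deriv ω t = ω' t) (p : ℝ) :
    IntegrableOn (fun t => ω' t ^ 2 * t ^ p) (Ioc 0 1) ↔
      ∫⁻ u in Ioc (0 : ℝ) 1, ENNReal.ofReal (deriv ω u ^ 2 * u ^ p) < ⊤ := by
  have hm := measurable_deriv ω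
  have e : IntegrableOn (fun t => ω' t ^ 2 * t ^ p) (Ioc 0 1) ↔
      IntegrableOn (fun t => deriv ω t ^ 2 * t ^ p) (Ioc 0 1) :=
    integrableOn_congr_fun (fun t ht => by simp only [h t ht]) measurableSet_Ioc
  have hnn : 0 ≤ᵐ[volume.restrict (Ioc 0 1)] fun t => deriv ω t ^ 2 * t ^ p := by
    filter_upwards [ae_restrict_mem measurableSet_Ioc] with t ht
    exact mul_nonneg (sq_nonneg _) (Real.rpow_nonneg ht.1.le _)
  rw [e, IntegrableOn, Integrable, hasFiniteIntegral_iff_ofReal hnn]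
  exact and_iff_right (by fun_prop)

/-- The dichotomy for a regular weight on the perfect symmetric set of constant ratio. -/
theorem memDirichlet_isMultiplierD_outerFun_iff {ξ : ℝ} (hξ : ξ ∈ Ioo (0 : ℝ) (1 / 2)) {ω ω' : ℝ → ℝ} (hω : RegW ω)
    (hω' : ∀ t ∈ Ioc (0 : ℝ) 1, deriv ω t = ω' t)
    (hφ : LogOmegaInt ω (gCantorSet fun _ => ξ)) :
    (MemDirichlet (outerFun ω (gCantorSet fun _ => ξ)) ↔
        IntegrableOn (fun t => (ω' t) ^ 2 * t ^ (1 - Real.log 2 / Real.log ξ⁻¹))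
          (Ioc (0 : ℝ) 1) volume) ∧
      (IsMultiplierD (outerFun ω (gCantorSet fun _ => ξ)) ↔
        IntegrableOn (fun t => (ω' t) ^ 2 * t ^ (1 - Real.log 2 / Real.log ξ⁻¹))
          (Ioc (0 : ℝ) 1) volume) := by
  obtain ⟨hd, hd1⟩ := dim_facts hξ
  have hreg := distReg_cantor hξ hd hd1
  rw [integrableOn_weight_iff hω']
  have h13 : MemDirichlet (outerFun ω (gCantorSet fun _ => ξ)) →
      ∫⁻ u in Ioc (0 : ℝ) 1, ENNReal.ofReal
        (deriv ω u ^ 2 * u ^ (1 - Real.log 2 / Real.log ξ⁻¹)) < ⊤ := fun hf =>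
    lintegral_deriv_sq_lt_top hξ hd (fun a L u h h0 h1 => dE_gap hξ h h0 h1) hreg hω hφ
      ((integrableOn_norm_sq_iff (measurable_deriv _)).1 hf.2.2)
  exact ⟨⟨h13, fun h => memDirichlet_of_isMultiplierD (isMultiplierD_outer hreg hω hφ h)⟩,
    fun h => h13 (memDirichlet_of_isMultiplierD h), isMultiplierD_outer hreg hω hφ⟩

lemma integrableOn_rpow_weight_iff {α d : ℝ} (hα : 0 < α) :
    IntegrableOn (fun t : ℝ => (α * t ^ (α - 1)) ^ 2 * t ^ (1 - d)) (Ioc 0 1) ↔ d / 2 < α := by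
  have e : IntegrableOn (fun t : ℝ => (α * t ^ (α - 1)) ^ 2 * t ^ (1 - d)) (Ioc 0 1) ↔
      IntegrableOn (fun t : ℝ => α ^ 2 * t ^ (2 * α - 1 - d)) (Ioc 0 1) := by
    refine integrableOn_congr_fun (fun t ht => ?_) measurableSet_Ioc
    rw [mul_pow, mul_assoc, ← Real.rpow_natCast (t ^ (α - 1)), ← Real.rpow_mul ht.1.le,
      ← Real.rpow_add ht.1]
    congr 2
    push_cast; ring
  rw [e, IntegrableOn, integrable_const_mul_iff (by simp [hα.ne']), ← IntegrableOn,
    integrableOn_Ioc_iff_integrableOn_Ioo, intervalIntegral.integrableOn_Ioo_rpow_iff one_pos]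
  constructor <;> intro h <;> linarith

end CantorDirichlet

/-- For the perfect symmetric set `E_ξ` of constant ratio `ξ` (Hausdorff
dimension `log 2 / log(1/ξ)`): `f_{ω,E} ∈ 𝒟 ↔ f_{ω,E} ∈ 𝓜(𝒟) ↔
∫_0^1 ω'(t)² t^{1−dim} dt < ∞`; and in particular for `ω(t) = t^α`,
`f_{α,E_ξ} ∈ 𝒟 ↔ f_{α,E_ξ} ∈ 𝓜(𝒟) ↔ α > dim(E_ξ)/2`. -/
theorem statement19 (ξ : ℝ) (hξ : ξ ∈ Set.Ioo (0:ℝ) (1/2))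
    (ω ω' : ℝ → ℝ) (γ : ℝ) (hγ : 2 < γ) (hω : OmegaHyp ω ω' γ)
    (hlog : LogOmegaInt ω (gCantorSet fun _ => ξ)) :
    ((MemDirichlet (outerFun ω (gCantorSet fun _ => ξ)) ↔
        IntegrableOn (fun t => (ω' t) ^ 2 * t ^ (1 - Real.log 2 / Real.log ξ⁻¹))
          (Set.Ioc (0:ℝ) 1) volume) ∧
      (IsMultiplierD (outerFun ω (gCantorSet fun _ => ξ)) ↔
        IntegrableOn (fun t => (ω' t) ^ 2 * t ^ (1 - Real.log 2 / Real.log ξ⁻¹))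
          (Set.Ioc (0:ℝ) 1) volume)) ∧
    (∀ α : ℝ, α ∈ Set.Ioo (0:ℝ) 1 →
      ((MemDirichlet (outerFun (fun t => t ^ α) (gCantorSet fun _ => ξ)) ↔
          IsMultiplierD (outerFun (fun t => t ^ α) (gCantorSet fun _ => ξ))) ∧
        (IsMultiplierD (outerFun (fun t => t ^ α) (gCantorSet fun _ => ξ)) ↔
          Real.log 2 / Real.log ξ⁻¹ / 2 < α))) := by
  have hpi := Real.pi_gt_three
  refine ⟨CantorDirichlet.memDirichlet_isMultiplierD_outerFun_iff hξ (CantorDirichlet.regW_of_omegaHyp hγ hω)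
    (fun t ht => CantorDirichlet.deriv_eq_of_omegaHyp hω ⟨ht.1, by linarith [ht.2]⟩) hlog,
    fun α hα => ?_⟩
  obtain ⟨hd, hd1⟩ := CantorDirichlet.dim_facts hξ
  have h := CantorDirichlet.memDirichlet_isMultiplierD_outerFun_iff hξ (CantorDirichlet.regW_rpow hα)
    (ω' := fun t => α * t ^ (α - 1))
    (fun t ht => (Real.hasDerivAt_rpow_const (Or.inl ht.1.ne')).deriv)
    ((CantorDirichlet.distReg_cantor hξ hd hd1).integrable_log_rpow α)
  rw [CantorDirichlet.integrableOn_rpow_weight_iff hα.1] at h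
  exact ⟨h.1.trans h.2.symm, h.2⟩
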